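/- Let G(Q,Λ) be torsion free. Then prim R_n^{Q,Λ} is homeomorphic to the space of symplectic cores in the affine space ℂ^{2n} (the maximal spectrum of A_1), where the Poisson structure on ℂ^{2n} is that of the multi-parameter Poisson Weyl algebra A_1. -/

import Mathlib

/-!
The quantized Weyl algebra `R = R_n^{Q,Λ}` and the polynomial ring `A₁` have a common shape. Put
`z_0 = 1` and `z_k = z_{k-1} + y_k x_k` (suitably rescaled in `R`). Both algebras have a basis of
normalized monomials in the `z_k` and, for each `i`, a power of either `y_i` or `x_i`; the exponents
form `Mon n` and the vector space on this basis is `VV n` (`WAlg.Psi`). After normalization with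
square roots of the parameters, a letter times a monomial has at most two terms, with coefficients
`φ (β)`, where `β` is half of the commutation exponent, an element of the exponent group `E = ℤ^r`.
This gives operators `WPar.opL φ` on `VV n` which, for different functions `φ` on `E`, are

* left multiplication in `R`, for a character `χ` (`WAlg.psi_opL`);
* right multiplication in `R`, for `χ⁻¹` (`WAlg.psi_opL_right`);
* multiplication in `A₁`, for `1`;
* the Poisson bracket of `A₁`, for the additive function `ψ` given by the `μ_k`
  (`IsWBr.br_psi`).

Since `E` is torsion free and the `μ_k` are independent, both `(χ, χ⁻¹)` and `(1, ψ)` separate the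
elements of `E` (`SepPair`). Hence two-sided ideals of `R` and Poisson ideals of `A₁`, as subspaces
of `VV n`, are stable under operators of the same kind and can be treated simultaneously.

A point `p` has a vanishing pattern `T` (which of the `z_k` and of the letters vanish). Modulo the
monomials vanishing on the stratum of `T`, the monomials carry a weight, consisting of all their
commutation exponents, and summing the values at `p` within each weight defines a map `WPar.Ev`
from `VV n` to finitely supported functions on weights. Its kernel `PP p` is stable under all the
operators. A subspace stable under the operators of a separating pair and not contained in `PP p`
contains modulo `PP p` a single monomial in letters which are units on the stratum; this is proved
with elements of minimal support (`WPar.exists_single`). There are three consequences.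

* The Poisson core of `m_p` is the image `PA p` of `PP p` in `A₁` (`PA_core`).
* The image of `PP p` in `R` is primitive (`WAlg.exists_simple`): with `c` the product of the normal
  letters which are units on the stratum, the left ideal generated by it and `c - θ`, for a nonzero
  scalar `θ`, is proper, and in the simple quotient modules of `R` by this left ideal the unit
  letters act bijectively.
* Every primitive ideal of `R` arises in this way (`WAlg.exists_ann_eq`). On a simple module the
  normal letters act by zero or bijectively, which gives a pattern; the largest weight-graded
  subspace of the annihilator is an ideal of `A₁`, and the Nullstellensatz gives a point `p` of the
  stratum at which it vanishes; by Schur's lemma in countable dimension, monomials of the same weight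
  in the unit letters are proportional on the module, so that the annihilator contains `PP p`, and
  then equals it.

So primitive ideals of `R` and Poisson primitive ideals of `A₁` are given by the same subspaces
`PP p` of `VV n`. Closed sets on both sides consist of the `PP p` containing a given subspace: in `R`
a two-sided ideal, in `A₁` an ideal. A family of the `PP p` defined by containing some subspace is
also defined by containing the intersection of the family, which is an ideal on both sides; hence the
bijection is a homeomorphism (`WAlg.exists_homeo`).
-/

/-- A Poisson bracket on a commutative ring: a biadditive Lie bracket satisfying
the Leibniz rule. -/
structure PoissonBr (R : Type) [CommRing R] where
  br : R → R → R
  add_left : ∀ a b c, br (a + b) c = br a c + br b c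
  skew : ∀ a b, br a b = - br b a
  jacobi : ∀ a b c, br a (br b c) = br (br a b) c + br b (br a c)
  leibniz : ∀ a b c, br (a * b) c = a * br b c + br a c * b

/-- `I` is a Poisson ideal for the bracket `br`: an ideal with `{I, R} ⊆ I`. -/
def IsPoissonIdeal {R : Type} [CommRing R] (br : R → R → R) (I : Ideal R) : Prop :=
  ∀ a ∈ I, ∀ b, br a b ∈ I

/-- `P` is a Poisson prime ideal: a proper Poisson ideal such that `IJ ⊆ P` implies
`I ⊆ P` or `J ⊆ P` for all Poisson ideals `I`, `J`. -/
def IsPoissonPrime {R : Type} [CommRing R] (br : R → R → R) (P : Ideal R) : Prop :=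
  IsPoissonIdeal br P ∧ P ≠ ⊤ ∧
    ∀ I J : Ideal R, IsPoissonIdeal br I → IsPoissonIdeal br J →
      (∀ a ∈ I, ∀ b ∈ J, a * b ∈ P) → I ≤ P ∨ J ≤ P

/-- A prime two-sided ideal of a (not necessarily commutative) ring: a proper
two-sided ideal `P` such that `IJ ⊆ P` implies `I ⊆ P` or `J ⊆ P`. -/
def IsPrimeTS {R : Type} [Ring R] (P : TwoSidedIdeal R) : Prop :=
  P ≠ ⊤ ∧ ∀ I J : TwoSidedIdeal R, (∀ a ∈ I, ∀ b ∈ J, a * b ∈ P) → I ≤ P ∨ J ≤ P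

/-- A two-sided ideal is (left) primitive if it is the annihilator of a simple
left module. -/
def IsPrimitiveTS {R : Type} [Ring R] (P : TwoSidedIdeal R) : Prop :=
  ∃ (M : Type) (_ : AddCommGroup M) (_ : Module R M),
    IsSimpleModule R M ∧ ∀ x : R, (x ∈ P ↔ ∀ m : M, x • m = 0)

/-- `P` is the Poisson core of `M`: the largest Poisson ideal contained in `M`. -/
def IsPoissonCore {R : Type} [CommRing R] (br : R → R → R) (P M : Ideal R) : Prop :=
  IsPoissonIdeal br P ∧ P ≤ M ∧ ∀ J : Ideal R, IsPoissonIdeal br J → J ≤ M → J ≤ P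

/-- `P` is Poisson primitive: the Poisson core of some maximal ideal. -/
def PoissonPrimitive {R : Type} [CommRing R] (br : R → R → R) (P : Ideal R) : Prop :=
  ∃ M : Ideal R, M.IsMaximal ∧ IsPoissonCore br P M

/-- `P` is rational: the Poisson center of the field of fractions of `R/P`
(with the induced Poisson bracket) is `ℂ`. -/
def PoissonRational (R : Type) [CommRing R] [Algebra ℂ R] (br : R → R → R)
    (P : Ideal R) : Prop :=
  ∃ (L : Type) (_ : Field L) (_ : Algebra (R ⧸ P) L) (_ : IsFractionRing (R ⧸ P) L)
    (B' : PoissonBr L),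
    (∀ a b : R,
      B'.br (algebraMap (R ⧸ P) L (Ideal.Quotient.mk P a))
          (algebraMap (R ⧸ P) L (Ideal.Quotient.mk P b))
        = algebraMap (R ⧸ P) L (Ideal.Quotient.mk P (br a b))) ∧
    {f : L | ∀ g : L, B'.br f g = 0} =
      Set.range ((algebraMap (R ⧸ P) L).comp
        ((Ideal.Quotient.mk P).comp (algebraMap ℂ R)))

/-- `P` is locally closed: the intersection of all Poisson prime ideals properly
containing `P` is strictly larger than `P`. -/
def PoissonLocallyClosed {R : Type} [CommRing R] (br : R → R → R) (P : Ideal R) : Prop :=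
  P < sInf {Q : Ideal R | IsPoissonPrime br Q ∧ P < Q}

/-- The primitive spectrum of a ring: primitive (prime) two-sided ideals, with the
Zariski topology. -/
abbrev PrimTS (R : Type) [Ring R] := {P : TwoSidedIdeal R // IsPrimeTS P ∧ IsPrimitiveTS P}

/-- The Zariski topology on the primitive spectrum. -/
def primTop (R : Type) [Ring R] : TopologicalSpace (PrimTS R) :=
  TopologicalSpace.generateFrom
    {U | ∃ I : TwoSidedIdeal R, U = {P : PrimTS R | ¬ I ≤ P.1}}

/-- The maximal ideal `m_p` of functions vanishing at the point `p ∈ ℂ^{2n}`. -/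
noncomputable def ptIdeal (n : ℕ) (p : (Fin n ⊕ Fin n) → ℂ) :
    Ideal (MvPolynomial (Fin n ⊕ Fin n) ℂ) :=
  RingHom.ker (MvPolynomial.aeval p : MvPolynomial (Fin n ⊕ Fin n) ℂ →ₐ[ℂ] ℂ)

/-- A Poisson primitive ideal of `ℂ[ℂ^{2n}]`: one of the form `P(m_p)`. -/
def PoissonPrimitivePt (n : ℕ)
    (br : MvPolynomial (Fin n ⊕ Fin n) ℂ → MvPolynomial (Fin n ⊕ Fin n) ℂ →
      MvPolynomial (Fin n ⊕ Fin n) ℂ) (P : Ideal (MvPolynomial (Fin n ⊕ Fin n) ℂ)) : Prop :=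
  ∃ p : (Fin n ⊕ Fin n) → ℂ, IsPoissonCore br P (ptIdeal n p)

/-- The symplectic core `C(P) = {p ∈ ℂ^{2n} | P(m_p) = P}` of a Poisson primitive
ideal `P`. -/
def corePt (n : ℕ)
    (br : MvPolynomial (Fin n ⊕ Fin n) ℂ → MvPolynomial (Fin n ⊕ Fin n) ℂ →
      MvPolynomial (Fin n ⊕ Fin n) ℂ) (P : Ideal (MvPolynomial (Fin n ⊕ Fin n) ℂ)) :
    Set ((Fin n ⊕ Fin n) → ℂ) :=
  {p | IsPoissonCore br P (ptIdeal n p)}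

/-- The space of symplectic cores in `ℂ^{2n}`. -/
abbrev CoreSpace (n : ℕ)
    (br : MvPolynomial (Fin n ⊕ Fin n) ℂ → MvPolynomial (Fin n ⊕ Fin n) ℂ →
      MvPolynomial (Fin n ⊕ Fin n) ℂ) :=
  {S : Set ((Fin n ⊕ Fin n) → ℂ) //
    ∃ P : Ideal (MvPolynomial (Fin n ⊕ Fin n) ℂ), PoissonPrimitivePt n br P ∧ S = corePt n br P}

/-- The topology on the space of symplectic cores: the closure of a family
`{C(P) : P ∈ S}` consists of the cores `C(Q)` with `Q ⊇ ⋂_{P ∈ S} P`; equivalently,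
closed sets are parametrized by ideals `I` as `{C(Q) | I ≤ Q}`. -/
def coreTop (n : ℕ)
    (br : MvPolynomial (Fin n ⊕ Fin n) ℂ → MvPolynomial (Fin n ⊕ Fin n) ℂ →
      MvPolynomial (Fin n ⊕ Fin n) ℂ) : TopologicalSpace (CoreSpace n br) :=
  TopologicalSpace.generateFrom
    {U | ∃ I : Ideal (MvPolynomial (Fin n ⊕ Fin n) ℂ),
      U = {s : CoreSpace n br |
        ¬ ∃ Q : Ideal (MvPolynomial (Fin n ⊕ Fin n) ℂ),
          I ≤ Q ∧ PoissonPrimitivePt n br Q ∧ s.1 = corePt n br Q}}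

/-- The defining relations of the multi-parameter quantized Weyl algebra `R_n^{Q,Λ}`,
on generators `Sum.inl i = y_i`, `Sum.inr i = x_i`. -/
inductive RRel (n : ℕ) (q : Fin n → ℂ) (lam : Fin n → Fin n → ℂ) :
    FreeAlgebra ℂ (Fin n ⊕ Fin n) → FreeAlgebra ℂ (Fin n ⊕ Fin n) → Prop
  | yy (i j : Fin n) (h : i < j) : RRel n q lam
      (FreeAlgebra.ι ℂ (Sum.inl j) * FreeAlgebra.ι ℂ (Sum.inl i))
      (lam j i • (FreeAlgebra.ι ℂ (Sum.inl i) * FreeAlgebra.ι ℂ (Sum.inl j)))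
  | yx (i j : Fin n) (h : i < j) : RRel n q lam
      (FreeAlgebra.ι ℂ (Sum.inl j) * FreeAlgebra.ι ℂ (Sum.inr i))
      (lam i j • (FreeAlgebra.ι ℂ (Sum.inr i) * FreeAlgebra.ι ℂ (Sum.inl j)))
  | xy (i j : Fin n) (h : i < j) : RRel n q lam
      (FreeAlgebra.ι ℂ (Sum.inr j) * FreeAlgebra.ι ℂ (Sum.inl i))
      ((q i * lam i j) • (FreeAlgebra.ι ℂ (Sum.inl i) * FreeAlgebra.ι ℂ (Sum.inr j)))
  | xx (i j : Fin n) (h : i < j) : RRel n q lam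
      (FreeAlgebra.ι ℂ (Sum.inr j) * FreeAlgebra.ι ℂ (Sum.inr i))
      (((q i)⁻¹ * (lam i j)⁻¹) • (FreeAlgebra.ι ℂ (Sum.inr i) * FreeAlgebra.ι ℂ (Sum.inr j)))
  | weyl (i : Fin n) : RRel n q lam
      (FreeAlgebra.ι ℂ (Sum.inr i) * FreeAlgebra.ι ℂ (Sum.inl i)
        - q i • (FreeAlgebra.ι ℂ (Sum.inl i) * FreeAlgebra.ι ℂ (Sum.inr i)))
      (1 + ∑ k ∈ Finset.Iio i,
        (q k - 1) • (FreeAlgebra.ι ℂ (Sum.inl k) * FreeAlgebra.ι ℂ (Sum.inr k)))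

/-- The generator `y_i` of the multi-parameter Poisson Weyl algebra
`A₁ = ℂ[y_1, x_1, …, y_n, x_n]`. -/
noncomputable def yP (n : ℕ) (i : Fin n) : MvPolynomial (Fin n ⊕ Fin n) ℂ :=
  MvPolynomial.X (Sum.inl i)

/-- The generator `x_i` of the multi-parameter Poisson Weyl algebra. -/
noncomputable def xP (n : ℕ) (i : Fin n) : MvPolynomial (Fin n ⊕ Fin n) ℂ :=
  MvPolynomial.X (Sum.inr i)

/-- The element `z_m = 1 + ∑_{k=1}^m y_k x_k` of the Poisson Weyl algebra
(1-indexed: the sum is over generators with (0-indexed) index `< m`). -/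
noncomputable def zP (n : ℕ) (m : ℕ) : MvPolynomial (Fin n ⊕ Fin n) ℂ :=
  1 + ∑ k ∈ Finset.univ.filter (fun k : Fin n => (k : ℕ) < m), yP n k * xP n k

/-! ### Exponents of normalized monomials -/

/-- Exponents `(a, s)` of a normalized monomial: `a j` is the power of `z_{j+1}`, while `s i`
records the power `y_i ^ s_i` if `s_i ≥ 0` and `x_i ^ (-s_i)` if `s_i < 0`. -/
abbrev Mon (n : ℕ) := (Fin n → ℕ) × (Fin n → ℤ)

/-- The exponent of the letter `z_k`; the letter `z_0` is the unit. -/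
def zM (n k : ℕ) : Mon n := (fun j => if j.val + 1 = k then 1 else 0, 0)

/-- The exponent of the letter `(i, ε)`, which stands for `y_i` if `ε = 1` and for `x_i`
if `ε = -1`. -/
def lM {n : ℕ} (i : Fin n) (ε : ℤˣ) : Mon n := (0, Pi.single i (ε : ℤ))

/-- The exponents of the parameters `q_i` and `λ_ij` in an additively written group `E`. -/
structure WPar (n : ℕ) (E : Type) [AddCommGroup E] where
  sq : Fin n → E
  slam : Fin n → Fin n → E
  anti : ∀ i j, slam j i = - slam i j
  diag : ∀ i, slam i i = 0

namespace WPar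

variable {n : ℕ} {E : Type} [AddCommGroup E] (P : WPar n E)

/-- The contribution of the `j`-th exponents to `WPar.bet`. -/
def bt (i : Fin n) (ε : ℤˣ) (j : Fin n) (s : ℤ) : E :=
  ((ε : ℤ) * s) • P.slam i j + (if ε = -1 ∧ j < i then s • P.sq j else 0)
    - (if i < j then ((ε : ℤ) * max (-s) 0) • P.sq i else 0)

/-- The part of `WPar.bet` depending on the exponents of the `z_j`. -/
def bza (i : Fin n) (ε : ℤˣ) (a : Fin n → ℕ) : E :=
  -(((ε : ℤ) * ∑ j, if i ≤ j then (a j : ℤ) else 0) • P.sq i)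

/-- Half of the commutation exponent between the letter `(i, ε)` and the normalized monomial
`m`. -/
def bet (i : Fin n) (ε : ℤˣ) (m : Mon n) : E := ∑ j, P.bt i ε j (m.2 j) + P.bza i ε m.1

/-- Half of the commutation exponent between `z_k` and the normalized monomial `m`. -/
def zet (k : ℕ) (m : Mon n) : E := ∑ j : Fin n, if j.val < k then m.2 j • P.sq j else 0

/-- Half of the commutation exponent between the letters `(i, ε)` and `(j, δ)`, for `i ≠ j`. -/
def kap (i : Fin n) (ε : ℤˣ) (j : Fin n) (δ : ℤˣ) : E :=
  ((ε : ℤ) * δ) • P.slam i j + (if ε = -1 ∧ j < i then (δ : ℤ) • P.sq j else 0)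
    - (if δ = -1 ∧ i < j then (ε : ℤ) • P.sq i else 0)

/-- Half of the commutation exponent between `z_k` and the letter `(i, ε)`. -/
def kz (k : ℕ) (i : Fin n) (ε : ℤˣ) : E := if i.val < k then (ε : ℤ) • P.sq i else 0

lemma kap_anti {i j : Fin n} (ε δ : ℤˣ) : P.kap j δ i ε = - P.kap i ε j δ := by
  unfold kap
  rw [P.anti i j]
  rcases Int.units_eq_one_or ε with rfl | rfl <;> rcases Int.units_eq_one_or δ with rfl | rfl <;>
    simp <;> split_ifs <;> abel

lemma sum_single_add (F : Fin n → ℤ → E) (s : Fin n → ℤ) (j : Fin n) (d : ℤ) :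
    ∑ k, F k ((s + (Pi.single j d : Fin n → ℤ)) k) = ∑ k, F k (s k) + (F j (s j + d) - F j (s j)) := by
  rw [← sub_eq_iff_eq_add', ← Finset.sum_sub_distrib]
  rw [Finset.sum_eq_single j]
  · simp
  · intro b _ hb; simp [Pi.single_eq_of_ne hb]
  · simp

lemma bet_zM (i : Fin n) (ε : ℤˣ) (m : Mon n) {k : ℕ} (hk : k ≤ n) :
    P.bet i ε (m + zM n k) = P.bet i ε m - P.kz k i ε := by
  have h : (∑ j : Fin n, if i ≤ j then (((m.1 j + if j.val + 1 = k then 1 else 0 : ℕ)) : ℤ) else 0)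
      = (∑ j : Fin n, if i ≤ j then (m.1 j : ℤ) else 0) + if i.val < k then 1 else 0 := by
    have : ∀ j : Fin n, (if i ≤ j then (((m.1 j + if j.val + 1 = k then 1 else 0 : ℕ)) : ℤ) else 0)
        = (if i ≤ j then (m.1 j : ℤ) else 0) + if i ≤ j ∧ j.val + 1 = k then 1 else 0 := by
      intro j; split_ifs <;> simp_all
    rw [Finset.sum_congr rfl (fun j _ => this j), Finset.sum_add_distrib]
    congr 1
    by_cases hik : i.val < k
    · rw [if_pos hik, Finset.sum_eq_single ⟨k - 1, by omega⟩]
      · rw [if_pos]; constructor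
        · rw [Fin.le_def]; simp; omega
        · simp; omega
      · intro b _ hb; rw [if_neg]; rintro ⟨_, h⟩; apply hb; ext; simp; omega
      · simp
    · rw [if_neg hik]; apply Finset.sum_eq_zero; intro j _; rw [if_neg]
      rintro ⟨h1, h2⟩; rw [Fin.le_def] at h1; omega
  unfold bet bza kz
  simp only [zM, Prod.fst_add, Prod.snd_add, add_zero, Pi.add_apply]
  rw [h]
  split_ifs <;> simp [mul_add, add_smul] <;> abel

/-- Raising `s_j` by a letter of the same sign. -/
lemma bet_up {i j : Fin n} (hij : i ≠ j) (ε δ : ℤˣ) (m : Mon n) (h : 0 ≤ (δ : ℤ) * m.2 j) :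
    P.bet i ε (m + lM j δ) = P.bet i ε m + P.kap i ε j δ := by
  unfold bet
  simp only [lM, Prod.fst_add, Prod.snd_add, add_zero]
  rw [sum_single_add (fun k => P.bt i ε k)]
  have : P.bt i ε j (m.2 j + δ) - P.bt i ε j (m.2 j) = P.kap i ε j δ := by
    unfold bt kap
    rcases Int.units_eq_one_or δ with rfl | rfl
    · simp at h
      rw [max_eq_right (by push_cast; omega), max_eq_right (by omega)]
      by_cases h1 : ε = -1 ∧ j < i <;> by_cases h2 : i < j <;> simp [h1, h2] <;> module
    · simp at h
      rw [max_eq_left (by push_cast; omega), max_eq_left (by omega)]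
      by_cases h1 : ε = -1 ∧ j < i <;> by_cases h2 : i < j <;> simp [h1, h2] <;> module
  rw [this]; abel

/-- Lowering `|s_j|` by a letter of the opposite sign, without the factor `z`. -/
lemma bet_down {i j : Fin n} (hij : i ≠ j) (ε δ : ℤˣ) (m : Mon n) (h : (δ : ℤ) * m.2 j < 0) :
    P.bet i ε (m + lM j δ) = P.bet i ε m + P.kap i ε j δ + if i < j then (ε : ℤ) • P.sq i else 0 := by
  unfold bet
  simp only [lM, Prod.fst_add, Prod.snd_add, add_zero]
  rw [sum_single_add (fun k => P.bt i ε k)]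
  have : P.bt i ε j (m.2 j + δ) - P.bt i ε j (m.2 j) = P.kap i ε j δ
      + if i < j then (ε : ℤ) • P.sq i else 0 := by
    unfold bt kap
    rcases Int.units_eq_one_or δ with rfl | rfl
    · simp at h
      rw [max_eq_left (by push_cast; omega), max_eq_left (by omega)]
      by_cases h1 : ε = -1 ∧ j < i <;> by_cases h2 : i < j <;> simp [h1, h2] <;> module
    · simp at h
      rw [max_eq_right (by push_cast; omega), max_eq_right (by omega)]
      by_cases h1 : ε = -1 ∧ j < i <;> by_cases h2 : i < j <;> simp [h1, h2] <;> module
  rw [this]; abel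

lemma bet_self (i : Fin n) (ε δ : ℤˣ) (m : Mon n) :
    P.bet i ε (m + lM i δ) = P.bet i ε m := by
  unfold bet
  simp only [lM, Prod.fst_add, Prod.snd_add, add_zero]
  rw [sum_single_add (fun k => P.bt i ε k)]
  simp [bt, P.diag]

lemma zet_zM (k l : ℕ) (m : Mon n) : P.zet k (m + zM n l) = P.zet k m := by
  simp [zet, zM]

lemma zet_lM (k : ℕ) (i : Fin n) (ε : ℤˣ) (m : Mon n) :
    P.zet k (m + lM i ε) = P.zet k m + P.kz k i ε := by
  unfold zet
  simp only [lM, Prod.fst_add, Prod.snd_add]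
  rw [sum_single_add (fun j s => if j.val < k then s • P.sq j else 0)]
  unfold kz
  split_ifs <;> simp [add_smul]

lemma zet_succ (i : Fin n) (m : Mon n) : P.zet (i + 1) m = P.zet i m + m.2 i • P.sq i := by
  unfold zet
  have : ∀ j : Fin n, (if j.val < i.val + 1 then m.2 j • P.sq j else 0)
      = (if j.val < i.val then m.2 j • P.sq j else 0) + if j = i then m.2 i • P.sq i else 0 := by
    intro j
    by_cases hj : j = i
    · subst hj; simp
    · have : j.val ≠ i.val := fun h => hj (Fin.ext h)
      rw [if_neg hj, add_zero]; congr 1; apply propext; omega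
  rw [Finset.sum_congr rfl (fun j _ => this j), Finset.sum_add_distrib]
  simp

lemma zet_zero (m : Mon n) : P.zet 0 m = 0 := by simp [zet]

/-- The commutation exponents of `y_i` and `x_i` add up to that of `z_{i}`. -/
lemma bet_add_bet (i : Fin n) (ε : ℤˣ) (m : Mon n) :
    P.bet i ε m + P.bet i (-ε) m = P.zet i m := by
  wlog h : ε = 1 generalizing ε
  · have h2 : ε = -1 := by rcases Int.units_eq_one_or ε with h1 | h1 <;> simp_all
    have := this 1 rfl
    subst h2
    simpa [add_comm] using this
  subst h
  unfold bet bza zet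
  have : ∑ j, P.bt i 1 j (m.2 j) + ∑ j, P.bt i (-1) j (m.2 j)
      = ∑ j : Fin n, if j.val < i.val then m.2 j • P.sq j else 0 := by
    rw [← Finset.sum_add_distrib]
    apply Finset.sum_congr rfl
    intro j _
    unfold bt
    simp only [← Fin.lt_def]
    by_cases h1 : j < i <;> by_cases h2 : i < j <;> simp [h1, h2] 
  rw [← this]
  simp
  abel

lemma kap_add_kap {k i : Fin n} (hik : k ≠ i) (ε δ : ℤˣ) :
    P.kap k δ i ε + P.kap k (-δ) i ε = P.kz k i ε := by
  wlog h : δ = 1 generalizing δ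
  · have h2 : δ = -1 := by rcases Int.units_eq_one_or δ with h1 | h1 <;> simp_all
    have := this 1 rfl
    subst h2
    simpa [add_comm] using this
  subst h
  unfold kap kz
  simp only [← Fin.lt_def]
  by_cases h1 : i < k <;> by_cases h2 : k < i <;> by_cases h3 : ε = -1 <;> simp [h1, h2, h3]

lemma bet_zero (i : Fin n) (ε : ℤˣ) : P.bet i ε 0 = 0 := by
  simp [bet, bt, bza]

end WPar

/-! ### Letter operators on the space of normalized monomials -/

/-- The space with basis the normalized monomials. -/
abbrev VV (n : ℕ) := Mon n →₀ ℂ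

namespace WPar

variable {n : ℕ} {E : Type} [AddCommGroup E] (P : WPar n E)

/-- Coefficients of the (at most two) terms of a letter times a monomial, indexed by `Bool`. -/
def coef (i : Fin n) (ε : ℤˣ) (m : Mon n) (t : Bool) : ℂ :=
  if 0 ≤ (ε : ℤ) * m.2 i then (if t then 1 else 0) else (if t then 1 else -1)

/-- Twisting exponents of the terms of a letter times a monomial. -/
def arg (i : Fin n) (ε : ℤˣ) (m : Mon n) (t : Bool) : E :=
  P.bet i ε m + if 0 ≤ (ε : ℤ) * m.2 i then 0 else (if t then m.2 i • P.sq i else 0)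

/-- Displacements of the terms of a letter times a monomial. -/
def dsp (i : Fin n) (ε : ℤˣ) (m : Mon n) (t : Bool) : Mon n :=
  lM i ε + if 0 ≤ (ε : ℤ) * m.2 i then 0 else zM n (if t then i + 1 else i)

/-- The operator of the letter `(i, ε)` with twisting function `φ`. It is multiplication by the
letter if `φ` is a character, and the Poisson bracket with the letter if `φ` is additive. -/
noncomputable def opL (φ : E → ℂ) (i : Fin n) (ε : ℤˣ) : VV n →ₗ[ℂ] VV n :=
  Finsupp.linearCombination ℂ fun m =>
    ∑ t, Finsupp.single (m + dsp i ε m t) (coef i ε m t * φ (P.arg i ε m t))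

/-- The operator of the letter `z_k` with twisting function `φ`. -/
noncomputable def opZ (φ : E → ℂ) (k : ℕ) : VV n →ₗ[ℂ] VV n :=
  Finsupp.linearCombination ℂ fun m => Finsupp.single (m + zM n k) (φ (P.zet k m))

lemma opL_single (φ : E → ℂ) (i : Fin n) (ε : ℤˣ) (m : Mon n) (c : ℂ) :
    P.opL φ i ε (Finsupp.single m c) =
      ∑ t, Finsupp.single (m + dsp i ε m t) (c * (coef i ε m t * φ (P.arg i ε m t))) := by
  simp only [opL, Finsupp.linearCombination_single, Finset.smul_sum, Finsupp.smul_single,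
    smul_eq_mul]

lemma opZ_single (φ : E → ℂ) (k : ℕ) (m : Mon n) (c : ℂ) :
    P.opZ φ k (Finsupp.single m c) = Finsupp.single (m + zM n k) (c * φ (P.zet k m)) := by
  simp [opZ, Finsupp.linearCombination_single]

lemma opL_up (φ : E → ℂ) {i : Fin n} {ε : ℤˣ} {m : Mon n} (h : 0 ≤ (ε : ℤ) * m.2 i) (c : ℂ) :
    P.opL φ i ε (Finsupp.single m c) =
      Finsupp.single (m + lM i ε) (c * φ (P.bet i ε m)) := by
  simp [opL_single, coef, arg, dsp, h]

lemma opL_down (φ : E → ℂ) {i : Fin n} {ε : ℤˣ} {m : Mon n} (h : (ε : ℤ) * m.2 i < 0) (c : ℂ) :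
    P.opL φ i ε (Finsupp.single m c) =
      Finsupp.single (m + lM i ε + zM n (i + 1)) (c * φ (P.bet i ε m + m.2 i • P.sq i))
      - Finsupp.single (m + lM i ε + zM n i) (c * φ (P.bet i ε m)) := by
  simp [opL_single, coef, arg, dsp, not_le.2 h, sub_eq_add_neg, add_assoc]

lemma lM_snd_ne {i j : Fin n} (h : i ≠ j) (ε : ℤˣ) : (lM j ε : Mon n).2 i = 0 := by
  simp [lM, Pi.single_eq_of_ne h]

lemma lM_snd_self (i : Fin n) (ε : ℤˣ) : (lM i ε : Mon n).2 i = ε := by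
  simp [lM]

lemma zM_snd (k : ℕ) (i : Fin n) : (zM n k).2 i = 0 := rfl

lemma dsp_snd {i j : Fin n} (h : i ≠ j) (δ : ℤˣ) (m : Mon n) (t : Bool) :
    (dsp j δ m t).2 i = 0 := by
  unfold dsp
  split_ifs <;> simp [lM_snd_ne h, zM]

lemma add_dsp_snd {i j : Fin n} (h : i ≠ j) (δ : ℤˣ) (m m' : Mon n) (t : Bool) :
    (m' + dsp j δ m t).2 i = m'.2 i := by
  simp [dsp_snd h]

lemma coef_dsp {i j : Fin n} (h : i ≠ j) (ε δ : ℤˣ) (m : Mon n) (t t' : Bool) :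
    coef i ε (m + dsp j δ m t) t' = coef i ε m t' := by
  simp only [coef, add_dsp_snd h]

lemma dsp_dsp {i j : Fin n} (h : i ≠ j) (ε δ : ℤˣ) (m : Mon n) (t t' : Bool) :
    dsp i ε (m + dsp j δ m t) t' = dsp i ε m t' := by
  rw [dsp, add_dsp_snd h, dsp]

lemma bet_dsp {i j : Fin n} (h : i ≠ j) (ε δ : ℤˣ) (m : Mon n) (t : Bool) :
    P.bet i ε (m + dsp j δ m t) = P.bet i ε m + P.kap i ε j δ := by
  unfold dsp
  split_ifs with hs ht
  · rw [add_zero, P.bet_up h _ _ _ hs]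
  · rw [← add_assoc, P.bet_zM _ _ _ j.2, P.bet_down h _ _ _ (not_le.1 hs), kz]
    have : i.val < j.val + 1 ↔ i < j := by
      rw [Fin.lt_def]; have := fun h' => h (Fin.ext h'); omega
    simp only [this]
    split_ifs <;> abel
  · rw [← add_assoc, P.bet_zM _ _ _ j.2.le, P.bet_down h _ _ _ (not_le.1 hs), kz]
    simp only [← Fin.lt_def]
    split_ifs <;> abel

lemma arg_dsp {i j : Fin n} (h : i ≠ j) (ε δ : ℤˣ) (m : Mon n) (t t' : Bool) :
    P.arg i ε (m + dsp j δ m t) t' = P.arg i ε m t' + P.kap i ε j δ := by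
  simp only [arg, add_dsp_snd h, P.bet_dsp h]
  abel

/-- The common shape of the products of two letter operators with different indices. -/
noncomputable def opLL (F : E → E → ℂ) (i : Fin n) (ε : ℤˣ) (j : Fin n) (δ : ℤˣ) (m : Mon n) :
    VV n :=
  ∑ t, ∑ t', Finsupp.single (m + dsp i ε m t + dsp j δ m t')
    (coef i ε m t * coef j δ m t' * F (P.arg i ε m t) (P.arg j δ m t'))

lemma opL_opL {i j : Fin n} (h : i ≠ j) (ε δ : ℤˣ) (φ ψ : E → ℂ) (m : Mon n) :
    P.opL φ i ε (P.opL ψ j δ (Finsupp.single m 1)) =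
      P.opLL (fun x y => φ (x + P.kap i ε j δ) * ψ y) i ε j δ m := by
  rw [opL_single, map_sum, opLL, Finset.sum_comm]
  refine Finset.sum_congr rfl fun t' _ => ?_
  rw [opL_single]
  refine Finset.sum_congr rfl fun t _ => ?_
  rw [dsp_dsp h, coef_dsp h, P.arg_dsp h]
  congr 1
  · abel
  · ring

lemma opL_opL' {i j : Fin n} (h : i ≠ j) (ε δ : ℤˣ) (φ ψ : E → ℂ) (m : Mon n) :
    P.opL ψ j δ (P.opL φ i ε (Finsupp.single m 1)) =
      P.opLL (fun x y => φ x * ψ (y - P.kap i ε j δ)) i ε j δ m := by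
  rw [opL_single, map_sum, opLL]
  refine Finset.sum_congr rfl fun t' _ => ?_
  rw [opL_single]
  refine Finset.sum_congr rfl fun t _ => ?_
  rw [dsp_dsp h.symm, coef_dsp h.symm, P.arg_dsp h.symm, P.kap_anti, sub_eq_add_neg]
  congr 1
  ring

lemma opLL_smul (c : ℂ) (F : E → E → ℂ) (i : Fin n) (ε : ℤˣ) (j : Fin n) (δ : ℤˣ) (m : Mon n) :
    P.opLL (fun x y => c * F x y) i ε j δ m = c • P.opLL F i ε j δ m := by
  simp only [opLL, Finset.smul_sum, Finsupp.smul_single, smul_eq_mul]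
  refine Finset.sum_congr rfl fun t' _ => Finset.sum_congr rfl fun t _ => ?_
  congr 1; ring

lemma opLL_sub (F G : E → E → ℂ) (i : Fin n) (ε : ℤˣ) (j : Fin n) (δ : ℤˣ) (m : Mon n) :
    P.opLL F i ε j δ m - P.opLL G i ε j δ m = P.opLL (fun x y => F x y - G x y) i ε j δ m := by
  simp only [opLL, ← Finset.sum_sub_distrib, ← Finsupp.single_sub]
  refine Finset.sum_congr rfl fun t' _ => Finset.sum_congr rfl fun t _ => ?_
  congr 1; ring

/-- `φ` is a character of `E`. -/
structure IsChar (φ : E → ℂ) : Prop where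
  zero : φ 0 = 1
  add : ∀ x y, φ (x + y) = φ x * φ y

variable {φ : E → ℂ}

lemma IsChar.neg_mul (hφ : IsChar φ) (x : E) : φ (-x) * φ x = 1 := by
  rw [← hφ.add]; simp [hφ.zero]

lemma IsChar.ne_zero (hφ : IsChar φ) (x : E) : φ x ≠ 0 := right_ne_zero_of_mul_eq_one (hφ.neg_mul x)

lemma IsChar.neg (hφ : IsChar φ) (x : E) : φ (-x) = (φ x)⁻¹ :=
  eq_inv_of_mul_eq_one_left (hφ.neg_mul x)

lemma IsChar.comp_neg (hφ : IsChar φ) : IsChar (fun x => φ (-x)) where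
  zero := by simp [hφ.zero]
  add x y := by rw [neg_add, hφ.add]

lemma isChar_one : IsChar (fun _ : E => 1) := ⟨rfl, by simp⟩

lemma vext {A : Type*} [AddCommMonoid A] [Module ℂ A] {f g : VV n →ₗ[ℂ] A}
    (h : ∀ m, f (Finsupp.single m 1) = g (Finsupp.single m 1)) : f = g := by
  apply Finsupp.lhom_ext'
  intro m
  ext
  simp [h]

lemma opL_comm (hφ : IsChar φ) {i j : Fin n} (h : i ≠ j) (ε δ : ℤˣ) :
    P.opL φ i ε ∘ₗ P.opL φ j δ = φ (2 • P.kap i ε j δ) • (P.opL φ j δ ∘ₗ P.opL φ i ε) := by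
  apply vext
  intro m
  simp only [LinearMap.comp_apply, LinearMap.smul_apply]
  rw [P.opL_opL h, P.opL_opL' h, ← opLL_smul]
  congr 1
  ext x y
  rw [hφ.add, sub_eq_add_neg, hφ.add, hφ.neg, two_smul, hφ.add]
  have := hφ.ne_zero (P.kap i ε j δ)
  field_simp

/-- The exchange condition for twisting functions which makes the operators of one letter
commute. -/
def Exch (φ ψ : E → ℂ) : Prop :=
  ∀ x s e : E, ψ (x + s) * φ (x - e) + ψ x * φ (x + s + e)
    = φ (x + s) * ψ (x - e) + φ x * ψ (x + s + e)

lemma coe_mul_self (ε : ℤˣ) : (ε : ℤ) * ε = 1 := by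
  rcases Int.units_eq_one_or ε with rfl | rfl <;> simp

lemma kz_succ (i : Fin n) (ε : ℤˣ) : P.kz (i + 1) i ε = (ε : ℤ) • P.sq i := by simp [kz]
lemma kz_self (i : Fin n) (ε : ℤˣ) : P.kz i i ε = 0 := by simp [kz]

lemma lM_add_neg (i : Fin n) (ε : ℤˣ) (m : Mon n) : m + lM i ε + lM i (-ε) = m := by
  rw [add_assoc]
  simp [lM, ← Pi.single_add]

lemma opL_same {ψ : E → ℂ} (h : Exch φ ψ) (i : Fin n) (ε : ℤˣ) :
    P.opL φ i ε ∘ₗ P.opL ψ i ε = P.opL ψ i ε ∘ₗ P.opL φ i ε := by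
  apply vext
  intro m
  simp only [LinearMap.comp_apply]
  rcases le_or_gt 0 ((ε : ℤ) * m.2 i) with hs | hs
  · have hs' : 0 ≤ (ε : ℤ) * (m + lM i ε).2 i := by
      simp only [Prod.snd_add, Pi.add_apply, lM_snd_self, mul_add, coe_mul_self]; omega
    rw [P.opL_up _ hs, P.opL_up _ hs, P.opL_up _ hs', P.opL_up _ hs', P.bet_self]
    congr 1; ring
  · rw [P.opL_down _ hs, P.opL_down _ hs, map_sub, map_sub]
    have e1 : ∀ k, ((m + lM i ε + zM n k).2 i) = m.2 i + ε := by
      intro k; simp [lM_snd_self, zM_snd]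
    rcases le_or_gt 0 ((ε : ℤ) * (m.2 i + ε)) with ht | ht
    · have ht' : ∀ k, 0 ≤ (ε : ℤ) * (m + lM i ε + zM n k).2 i := by intro k; rw [e1]; exact ht
      rw [P.opL_up _ (ht' _), P.opL_up _ (ht' _), P.opL_up _ (ht' _), P.opL_up _ (ht' _),
        P.bet_zM _ _ _ i.2, P.bet_zM _ _ _ i.2.le, P.bet_self, P.kz_succ, P.kz_self]
      have : m.2 i = - ε := by
        rw [mul_add, coe_mul_self] at ht
        rcases Int.units_eq_one_or ε with rfl | rfl <;> simp at * <;> omega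
      rw [this]
      congr 2
      · rw [neg_smul, sub_eq_add_neg]; ring
      · rw [sub_zero]; ring
    · have ht' : ∀ k, (ε : ℤ) * (m + lM i ε + zM n k).2 i < 0 := by intro k; rw [e1]; exact ht
      rw [P.opL_down _ (ht' _), P.opL_down _ (ht' _), P.opL_down _ (ht' _), P.opL_down _ (ht' _),
        P.bet_zM _ _ _ i.2, P.bet_zM _ _ _ i.2.le, P.bet_self, P.kz_succ, P.kz_self, e1, e1]
      have key := h (P.bet i ε m) (m.2 i • P.sq i) ((ε : ℤ) • P.sq i)
      have a1 : P.bet i ε m - (ε : ℤ) • P.sq i + (m.2 i + ε) • P.sq i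
        = P.bet i ε m + m.2 i • P.sq i := by rw [add_smul]; abel
      have a2 : P.bet i ε m - 0 + (m.2 i + ε) • P.sq i
        = P.bet i ε m + m.2 i • P.sq i + (ε : ℤ) • P.sq i := by rw [add_smul]; abel
      rw [a1, a2, sub_zero]
      have a3 : m + lM i ε + zM n (i + 1) + lM i ε + zM n i
        = m + lM i ε + zM n i + lM i ε + zM n (i + 1) := by abel
      rw [a3]
      generalize P.bet i ε m + m.2 i • P.sq i + (ε : ℤ) • P.sq i = A at *
      generalize P.bet i ε m + m.2 i • P.sq i = B at *
      generalize P.bet i ε m - (ε : ℤ) • P.sq i = C at *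
      generalize P.bet i ε m = D at *
      generalize m + lM i ε + zM n (i + 1) + lM i ε + zM n (i + 1) = m1
      generalize m + lM i ε + zM n i + lM i ε + zM n (i + 1) = m2
      generalize m + lM i ε + zM n i + lM i ε + zM n i = m3
      have l : ∀ a b c d : ℂ, Finsupp.single m1 a - Finsupp.single m2 b
          - (Finsupp.single m2 c - Finsupp.single m3 d)
          = Finsupp.single m1 a - Finsupp.single m2 (b + c) + Finsupp.single m3 d := by
        intros; rw [Finsupp.single_add]; abel
      rw [l, l]
      simp only [one_mul]
      rw [key, mul_comm (ψ B) (φ B), mul_comm (ψ D) (φ D)]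

lemma opL_opp (φ ψ : E → ℂ) (i : Fin n) (ε : ℤˣ) (m : Mon n) :
    P.opL φ i ε (P.opL ψ i (-ε) (Finsupp.single m 1)) =
      Finsupp.single (m + zM n (i + 1)) (if 0 < (ε : ℤ) * m.2 i then
        φ (P.bet i ε m - (ε : ℤ) • P.sq i) * ψ (P.bet i (-ε) m + m.2 i • P.sq i) else
        φ (P.bet i ε m + (m.2 i - (ε : ℤ)) • P.sq i) * ψ (P.bet i (-ε) m))
      - Finsupp.single (m + zM n i) (φ (P.bet i ε m) * ψ (P.bet i (-ε) m)) := by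
  rcases lt_or_ge 0 ((ε : ℤ) * m.2 i) with hs | hs
  · rw [if_pos hs]
    have e1 : ∀ k, ((m + lM i (-ε) + zM n k).2 i) = m.2 i - ε := by
      intro k; simp [lM_snd_self, zM_snd, sub_eq_add_neg]
    have ht' : ∀ k, 0 ≤ (ε : ℤ) * (m + lM i (-ε) + zM n k).2 i := by
      intro k; rw [e1, mul_sub, coe_mul_self]; omega
    have hs2 : ((-ε : ℤˣ) : ℤ) * m.2 i < 0 := by simp; exact hs
    rw [P.opL_down _ hs2, map_sub, P.opL_up _ (ht' _), P.opL_up _ (ht' _),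
        P.bet_zM _ _ _ i.2, P.bet_zM _ _ _ i.2.le, P.bet_self, P.kz_succ, P.kz_self]
    have a : ∀ k, m + lM i (-ε) + zM n k + lM i ε = m + zM n k := by
      intro k
      have := lM_add_neg i (-ε) m
      rw [neg_neg] at this
      rw [add_right_comm, this]
    rw [a, a, sub_zero]
    congr 2 <;> ring
  · rw [if_neg (not_lt.2 hs)]
    have hs2 : 0 ≤ ((-ε : ℤˣ) : ℤ) * m.2 i := by simp; exact hs
    have e1 : ((m + lM i (-ε)).2 i) = m.2 i - ε := by
      simp [lM_snd_self, sub_eq_add_neg]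
    have ht' : (ε : ℤ) * (m + lM i (-ε)).2 i < 0 := by
      rw [e1, mul_sub, coe_mul_self]; omega
    have := lM_add_neg i (-ε) m
    rw [neg_neg] at this
    rw [P.opL_up _ hs2, P.opL_down _ ht', P.bet_self, this, e1]
    congr 2 <;> ring

lemma opL_opp_char (hφ : IsChar φ) (i : Fin n) (ε : ℤˣ) :
    P.opL φ i ε ∘ₗ P.opL φ i (-ε) =
      φ (-((ε : ℤ) • P.sq i)) • P.opZ φ (i + 1) - P.opZ φ i := by
  apply vext
  intro m
  simp only [LinearMap.comp_apply, LinearMap.smul_apply, LinearMap.sub_apply]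
  rw [opL_opp, opZ_single, opZ_single, P.zet_succ, ← P.bet_add_bet i ε]
  simp only [Finsupp.smul_single, smul_eq_mul, one_mul, ← hφ.add, ite_eq_iff]
  congr 2
  split_ifs <;> congr 1 <;> module

lemma opL_opp_right (hφ : IsChar φ) (i : Fin n) (ε : ℤˣ) :
    P.opL φ i ε ∘ₗ P.opL (fun x => φ (-x)) i (-ε)
      = P.opL (fun x => φ (-x)) i (-ε) ∘ₗ P.opL φ i ε := by
  apply vext
  intro m
  simp only [LinearMap.comp_apply]
  have := P.opL_opp (fun x => φ (-x)) φ i (-ε) m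
  rw [neg_neg] at this
  rw [this, opL_opp]
  simp only [← hφ.add]
  congr 2
  swap
  · rw [add_comm]
  simp only [Units.val_neg, neg_mul, Left.neg_pos_iff]
  rcases lt_trichotomy ((ε : ℤ) * m.2 i) 0 with h | h | h
  · rw [if_neg (by omega), if_pos h]; congr 1; module
  · have h0 : m.2 i = 0 := by
      rcases Int.units_eq_one_or ε with rfl | rfl <;> simpa using h
    rw [if_neg (by omega), if_neg (by omega), h0]; congr 1; module
  · rw [if_pos h, if_neg (by omega)]; congr 1; module

lemma opL_opp_add {ψ : E → ℂ} (hψ : ∀ x y, ψ (x + y) = ψ x + ψ y) (i : Fin n) (ε : ℤˣ) :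
    P.opL ψ i ε ∘ₗ P.opL (fun _ => 1) i (-ε) - P.opL (fun _ => 1) i (-ε) ∘ₗ P.opL ψ i ε
      = ψ (-((ε : ℤ) • P.sq i)) • P.opZ (fun _ => 1) (i + 1) := by
  apply vext
  intro m
  simp only [LinearMap.comp_apply, LinearMap.smul_apply, LinearMap.sub_apply]
  have := P.opL_opp (fun _ => 1) ψ i (-ε) m
  rw [neg_neg] at this
  rw [this, opL_opp, opZ_single]
  simp only [one_mul, mul_one]
  rw [sub_sub_sub_cancel_right, ← Finsupp.single_sub, Finsupp.smul_single, smul_eq_mul, mul_one]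
  congr 1
  rw [sub_eq_iff_eq_add]
  simp only [Units.val_neg, neg_mul, Left.neg_pos_iff, mul_one, one_mul]
  rcases lt_trichotomy ((ε : ℤ) * m.2 i) 0 with h | h | h
  · rw [if_neg (by omega), if_pos h, ← hψ]; congr 1; module
  · have h0 : m.2 i = 0 := by
      rcases Int.units_eq_one_or ε with rfl | rfl <;> simpa using h
    rw [if_neg (by omega), if_neg (by omega), h0, ← hψ]; congr 1; module
  · rw [if_pos h, if_neg (by omega), ← hψ]; congr 1; module

lemma opZ_add {ψ : E → ℂ} (hψ : ∀ x y, ψ (x + y) = ψ x + ψ y) (i : Fin n) (ε : ℤˣ) :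
    P.opL (fun _ => 1) i ε ∘ₗ P.opL ψ i (-ε) + P.opL (fun _ => 1) i (-ε) ∘ₗ P.opL ψ i ε
      = P.opZ ψ (i + 1) - P.opZ ψ i := by
  apply vext
  intro m
  simp only [LinearMap.comp_apply, LinearMap.add_apply, LinearMap.sub_apply]
  have := P.opL_opp (fun _ => 1) ψ i (-ε) m
  rw [neg_neg] at this
  rw [this, opL_opp, opZ_single, opZ_single, sub_add_sub_comm, ← Finsupp.single_add,
    ← Finsupp.single_add, P.zet_succ, ← P.bet_add_bet i ε]
  simp only [Units.val_neg, neg_mul, Left.neg_pos_iff, one_mul]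
  congr 2
  · rcases lt_trichotomy ((ε : ℤ) * m.2 i) 0 with h | h | h
    · rw [if_neg (by omega), if_pos h, ← hψ]; congr 1; module
    · have h0 : m.2 i = 0 := by
        rcases Int.units_eq_one_or ε with rfl | rfl <;> simpa using h
      rw [if_neg (by omega), if_neg (by omega), h0, ← hψ]; congr 1; module
    · rw [if_pos h, if_neg (by omega), ← hψ]; congr 1; module
  · rw [← hψ, add_comm]

/-- Left and right multiplication by letters commute. -/
lemma opL_left_right (hφ : IsChar φ) (i j : Fin n) (ε δ : ℤˣ) :
    P.opL φ i ε ∘ₗ P.opL (fun x => φ (-x)) j δ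
      = P.opL (fun x => φ (-x)) j δ ∘ₗ P.opL φ i ε := by
  by_cases hij : i = j
  · subst hij
    by_cases h : δ = ε
    · subst h
      apply P.opL_same
      intro x s e
      simp only [← hφ.add]
      rw [add_comm]
      congr 2 <;> abel
    · have : δ = -ε := by
        rcases Int.units_eq_one_or ε with rfl | rfl <;>
          rcases Int.units_eq_one_or δ with rfl | rfl <;> simp_all
      subst this
      exact P.opL_opp_right hφ i ε
  · apply vext
    intro m
    simp only [LinearMap.comp_apply]
    rw [P.opL_opL hij, P.opL_opL' hij]
    congr 1
    ext x y
    simp only [← hφ.add]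
    congr 1; abel

lemma opL_one_comm (i j : Fin n) (ε δ : ℤˣ) :
    P.opL (fun _ => 1) i ε ∘ₗ P.opL (fun _ => 1) j δ
      = P.opL (fun _ => 1) j δ ∘ₗ P.opL (fun _ => 1) i ε :=
  P.opL_left_right (φ := fun _ => 1) isChar_one i j ε δ

/-- The Poisson bracket with a letter as a derivation, for different indices. -/
lemma opL_add {ψ : E → ℂ} (hψ : ∀ x y, ψ (x + y) = ψ x + ψ y) {i j : Fin n} (h : i ≠ j)
    (ε δ : ℤˣ) :
    P.opL ψ i ε ∘ₗ P.opL (fun _ => 1) j δ - P.opL (fun _ => 1) j δ ∘ₗ P.opL ψ i ε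
      = ψ (P.kap i ε j δ) • P.opL (fun _ => 1) i ε ∘ₗ P.opL (fun _ => 1) j δ := by
  apply vext
  intro m
  simp only [LinearMap.comp_apply, LinearMap.smul_apply, LinearMap.sub_apply]
  rw [P.opL_opL h, P.opL_opL' h, P.opL_opL h, opLL_sub, ← opLL_smul]
  congr 1
  ext x y
  rw [hψ]; ring

/-- The Poisson bracket with a letter commutes with multiplication by this letter. -/
lemma opL_add_same {ψ : E → ℂ} (hψ : ∀ x y, ψ (x + y) = ψ x + ψ y) (i : Fin n) (ε : ℤˣ) :
    P.opL ψ i ε ∘ₗ P.opL (fun _ => 1) i ε = P.opL (fun _ => 1) i ε ∘ₗ P.opL ψ i ε := by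
  apply P.opL_same
  intro x s e
  have hneg : ∀ y, ψ (-y) = -ψ y := fun y => by
    have h0 : ψ 0 = 0 := by have := hψ 0 0; simpa using this
    have := hψ y (-y); rw [add_neg_cancel, h0] at this; linear_combination -this
  simp only [sub_eq_add_neg, hψ, hneg]
  ring

end WPar

/-! ### Algebras with the relations of the letters -/

namespace WPar

variable {n : ℕ} {E : Type} [AddCommGroup E] (P : WPar n E)

lemma opZ_zero_apply (φ : E → ℂ) (v : VV n) : P.opZ φ 0 v = φ 0 • v := by
  have : P.opZ φ 0 = φ 0 • LinearMap.id := by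
    apply vext
    intro m
    have h0 : zM n 0 = 0 := by ext <;> simp [zM]
    simp [opZ_single, h0, P.zet_zero]
  rw [this]; rfl

lemma stable_opZ {φ : E → ℂ} (hφ : IsChar φ) (I : Submodule ℂ (VV n))
    (hI : ∀ i ε, ∀ v ∈ I, P.opL φ i ε v ∈ I) (k : ℕ) (hk : k ≤ n) :
    ∀ v ∈ I, P.opZ φ k v ∈ I := by
  induction k with
  | zero => intro v hv; rw [opZ_zero_apply]; exact I.smul_mem _ hv
  | succ k ih =>
    intro v hv
    have h := LinearMap.congr_fun (P.opL_opp_char hφ ⟨k, hk⟩ 1) v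
    simp only [LinearMap.comp_apply, LinearMap.smul_apply, LinearMap.sub_apply] at h
    have h2 : φ (-(((1 : ℤˣ) : ℤ) • P.sq ⟨k, hk⟩)) • P.opZ φ (k + 1) v ∈ I := by
      have h3 := sub_eq_iff_eq_add.1 h.symm
      rw [h3]
      exact I.add_mem (hI _ _ _ (hI _ _ _ hv)) (ih (by omega) v hv)
    exact (I.smul_mem_iff (hφ.ne_zero _)).1 h2

lemma stable_opZ_add {ψ : E → ℂ} (hψ : ∀ x y, ψ (x + y) = ψ x + ψ y) (I : Submodule ℂ (VV n))
    (hI : ∀ i ε, ∀ v ∈ I, P.opL (fun _ => 1) i ε v ∈ I)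
    (hI2 : ∀ i ε, ∀ v ∈ I, P.opL ψ i ε v ∈ I) (k : ℕ) (hk : k ≤ n) :
    ∀ v ∈ I, P.opZ ψ k v ∈ I := by
  induction k with
  | zero => intro v hv; rw [opZ_zero_apply]; exact I.smul_mem _ hv
  | succ k ih =>
    intro v hv
    have h := LinearMap.congr_fun (P.opZ_add hψ ⟨k, hk⟩ 1) v
    simp only [LinearMap.comp_apply, LinearMap.add_apply, LinearMap.sub_apply] at h
    have h3 := sub_eq_iff_eq_add.1 h.symm
    rw [h3]
    exact I.add_mem (I.add_mem (hI _ _ _ (hI2 _ _ _ hv)) (hI _ _ _ (hI2 _ _ _ hv)))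
      (ih (by omega) v hv)

end WPar

/-- An algebra generated by letters satisfying the normalized commutation relations with
character `φ`, and acting on the space of normalized monomials. -/
structure WAlg {n : ℕ} {E : Type} [AddCommGroup E] (P : WPar n E) (φ : E → ℂ)
    (A : Type) [Ring A] [Algebra ℂ A] where
  hφ : WPar.IsChar φ
  l : Fin n → ℤˣ → A
  z : ℕ → A
  z_zero : z 0 = 1
  comm : ∀ {i j} (_ : i ≠ j) (ε δ), l i ε * l j δ = φ (2 • P.kap i ε j δ) • (l j δ * l i ε)
  opp : ∀ i ε, l i ε * l i (-ε) = φ (-((ε : ℤ) • P.sq i)) • z (i + 1) - z i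
  gen : Algebra.adjoin ℂ (Set.range fun x : Fin n × ℤˣ => l x.1 x.2) = ⊤
  rep : A →ₐ[ℂ] Module.End ℂ (VV n)
  rep_l : ∀ i ε, rep (l i ε) = P.opL φ i ε

/-- Letters: `inl (i, ε)` is `y_i` or `x_i`, and `inr j` is `z_{j+1}`. -/
abbrev Lett (n : ℕ) := (Fin n × ℤˣ) ⊕ Fin n

/-- The exponent of a letter. -/
def lv {n : ℕ} : Lett n → Mon n
  | Sum.inl x => lM x.1 x.2
  | Sum.inr j => zM n (j + 1)

/-- Multiplying `m` by the letter gives a single normalized monomial. -/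
def okUp {n : ℕ} : Lett n → Mon n → Prop
  | Sum.inl x, m => 0 ≤ (x.2 : ℤ) * m.2 x.1
  | Sum.inr _, _ => True

namespace WPar

variable {n : ℕ} {E : Type} [AddCommGroup E] (P : WPar n E)

/-- Half of the commutation exponent between a letter and a monomial. -/
def B : Lett n → Mon n → E
  | Sum.inl x, m => P.bet x.1 x.2 m
  | Sum.inr j, m => P.zet (j + 1) m

/-- Half of the commutation exponent between two letters which are not opposite. -/
def K : Lett n → Lett n → E
  | Sum.inl x, Sum.inl y => if x.1 = y.1 then 0 else P.kap x.1 x.2 y.1 y.2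
  | Sum.inl x, Sum.inr j => -P.kz (j + 1) x.1 x.2
  | Sum.inr j, Sum.inl x => P.kz (j + 1) x.1 x.2
  | Sum.inr _, Sum.inr _ => 0

lemma K_anti (a b : Lett n) : P.K b a = - P.K a b := by
  rcases a with x | j <;> rcases b with y | k <;> simp [K]
  by_cases h : x.1 = y.1
  · simp [h]
  · rw [if_neg h, if_neg (Ne.symm h), P.kap_anti]

lemma B_add {a b : Lett n} {m : Mon n} (h : okUp b m) : P.B a (m + lv b) = P.B a m + P.K a b := by
  rcases a with x | j <;> rcases b with y | k <;> simp only [B, K, lv]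
  · by_cases hxy : x.1 = y.1
    · rw [if_pos hxy, ← hxy, P.bet_self, add_zero]
    · rw [if_neg hxy]; exact P.bet_up hxy _ _ _ h
  · rw [P.bet_zM _ _ _ k.2, sub_eq_add_neg]
  · exact P.zet_lM _ _ _ _
  · rw [P.zet_zM, add_zero]

end WPar

/-- Letters `(i, ε)` and `(i, -ε)` for the same `i`. -/
def oppo {n : ℕ} : Lett n → Lett n → Prop
  | Sum.inl x, Sum.inl y => x.1 = y.1 ∧ x.2 ≠ y.2
  | _, _ => False

lemma diamond {n : ℕ} {a b : Lett n} {m m' : Mon n} (ha : okUp a m) (hb : okUp b m')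
    (h : m + lv a = m' + lv b) (hab : a ≠ b) :
    ¬ oppo a b ∧ ∃ m'', m = m'' + lv b ∧ m' = m'' + lv a ∧ okUp a m'' ∧ okUp b m'' := by
  have h1 : ∀ j, m.1 j + (lv a).1 j = m'.1 j + (lv b).1 j := fun j => congrFun (congrArg Prod.fst h) j
  have h2 : ∀ j, m.2 j + (lv a).2 j = m'.2 j + (lv b).2 j := fun j => congrFun (congrArg Prod.snd h) j
  have hle : ∀ j, (lv b).1 j ≤ m.1 j := by
    intro j
    have := h1 j
    rcases b with y | k
    · simp [lv, lM]
    · rcases a with x | k'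
      · simp [lv, lM] at this ⊢; omega
      · simp only [lv, zM] at this ⊢
        have hne : k'.val ≠ k.val := fun h => hab (by rw [Fin.ext h])
        split_ifs at this ⊢ <;> omega
  have hno : ¬ oppo a b := by
    rcases a with x | j <;> rcases b with y | k <;> simp only [oppo, not_false_eq_true]
    rintro ⟨hxy, hne⟩
    have hh := h2 x.1
    obtain ⟨i, ε⟩ := x
    obtain ⟨j, δ⟩ := y
    simp only at hxy hne
    subst hxy
    simp only [lv, lM, Pi.single_eq_same, okUp] at *
    rcases Int.units_eq_one_or ε with rfl | rfl <;>
      rcases Int.units_eq_one_or δ with rfl | rfl <;> simp_all <;> omega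
  refine ⟨hno, (fun j => m.1 j - (lv b).1 j, m.2 - (lv b).2), ?_, ?_, ?_, ?_⟩
  · ext j
    · have := hle j; simp; omega
    · simp
  · ext j
    · have := hle j; have := h1 j; simp; omega
    · have := h2 j; simp; omega
  · rcases a with x | j
    · rcases b with y | k
      · simp only [okUp, lv, Pi.sub_apply] at *
        by_cases hxy : x.1 = y.1
        · exfalso
          apply hno
          refine ⟨hxy, fun h' => hab (by rw [Prod.ext hxy h'])⟩
        · rw [WPar.lM_snd_ne hxy, sub_zero]; exact ha
      · simpa [okUp, lv, zM] using ha
    · trivial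
  · rcases b with y | k
    · have := h2 y.1
      rcases a with x | j
      · by_cases hxy : y.1 = x.1
        · exfalso
          apply hno
          refine ⟨hxy.symm, fun h' => hab (by rw [Prod.ext hxy.symm h'])⟩
        · simp only [okUp, lv, Pi.sub_apply] at *
          rw [WPar.lM_snd_ne hxy, add_zero] at this
          rw [this, add_sub_cancel_right]; exact hb
      · simp only [okUp, lv, Pi.sub_apply] at *
        rw [WPar.zM_snd, add_zero] at this
        rw [this, add_sub_cancel_right]; exact hb
    · trivial

/-- The total degree of a normalized monomial. -/
def msize {n : ℕ} (m : Mon n) : ℕ := ∑ j, m.1 j + ∑ j, (m.2 j).natAbs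

lemma exists_letter {n : ℕ} (m : Mon n) (h : m ≠ 0) :
    ∃ a m', okUp a m' ∧ m = m' + lv a ∧ msize m' < msize m := by
  by_cases h1 : m.1 = 0
  · have h2 : m.2 ≠ 0 := fun h2 => h (Prod.ext h1 h2)
    obtain ⟨i, hi⟩ := Function.ne_iff.1 h2
    simp only [Pi.zero_apply] at hi
    obtain ⟨ε, hε⟩ : ∃ ε : ℤˣ, 0 < (ε : ℤ) * m.2 i := by
      rcases lt_or_gt_of_ne hi with h | h
      · exact ⟨-1, by simpa using h⟩
      · exact ⟨1, by simpa using h⟩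
    refine ⟨Sum.inl (i, ε), m + lM i (-ε), ?_, ?_, ?_⟩
    · simp only [okUp, Prod.snd_add, Pi.add_apply, WPar.lM_snd_self, mul_add, Units.val_neg,
        mul_neg, WPar.coe_mul_self]; omega
    · have := WPar.lM_add_neg i (-ε) m
      rw [neg_neg] at this
      exact this.symm
    · unfold msize
      apply add_lt_add_of_le_of_lt
      · simp [lM]
      · apply Finset.sum_lt_sum
        · intro j _
          by_cases hj : j = i
          · subst hj
            simp only [Prod.snd_add, Pi.add_apply, WPar.lM_snd_self, Units.val_neg]
            rcases Int.units_eq_one_or ε with rfl | rfl <;> simp at * <;> omega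
          · simp [WPar.lM_snd_ne hj]
        · refine ⟨i, Finset.mem_univ _, ?_⟩
          simp only [Prod.snd_add, Pi.add_apply, WPar.lM_snd_self, Units.val_neg]
          rcases Int.units_eq_one_or ε with rfl | rfl <;> simp at * <;> omega
  · obtain ⟨i, hi⟩ := Function.ne_iff.1 h1
    simp only [Pi.zero_apply] at hi
    refine ⟨Sum.inr i, (fun j => if j = i then m.1 j - 1 else m.1 j, m.2), trivial, ?_, ?_⟩
    · ext j
      · simp only [lv, zM, Prod.fst_add, Pi.add_apply]
        by_cases hj : j = i
        · subst hj; simp; omega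
        · have : j.val ≠ i.val := fun h => hj (Fin.ext h)
          simp [hj, this]
      · simp [lv, zM]
    · unfold msize
      apply add_lt_add_of_lt_of_le
      · apply Finset.sum_lt_sum
        · intro j _
          simp only
          split_ifs <;> omega
        · exact ⟨i, Finset.mem_univ _, by simp; omega⟩
      · exact le_rfl

namespace WAlg

variable {n : ℕ} {E : Type} [AddCommGroup E] {P : WPar n E} {φ : E → ℂ}
  {A : Type} [Ring A] [Algebra ℂ A] (W : WAlg P φ A)

lemma z_succ (i : Fin n) : W.z (i + 1) = φ (P.sq i) • (W.l i 1 * W.l i (-1) + W.z i) := by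
  rw [W.opp, sub_add_cancel, smul_smul, ← W.hφ.add]
  simp [W.hφ.zero]

lemma z_l (k : ℕ) (hk : k ≤ n) (i : Fin n) (ε : ℤˣ) :
    W.z k * W.l i ε = φ (2 • P.kz k i ε) • (W.l i ε * W.z k) := by
  induction k with
  | zero => simp [W.z_zero, WPar.kz, W.hφ.zero]
  | succ k ih =>
    have ih := ih (by omega)
    by_cases h : i.val = k
    · subst h
      have e0 : W.z i * W.l i ε = W.l i ε * W.z i := by
        rw [ih, P.kz_self]; simp [W.hφ.zero]
      have h1 := W.opp i ε
      have h2 := W.opp i (-ε)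
      rw [neg_neg] at h2
      have h3 : (W.l i ε * W.l i (-ε)) * W.l i ε = W.l i ε * (W.l i (-ε) * W.l i ε) := mul_assoc _ _ _
      rw [h1, h2, sub_mul, mul_sub, e0, sub_left_inj, smul_mul_assoc, mul_smul_comm] at h3
      have h4 := congrArg (fun x => φ ((ε : ℤ) • P.sq i) • x) h3
      simp only [smul_smul, ← W.hφ.add] at h4
      rw [P.kz_succ]
      simp only [add_neg_cancel, W.hφ.zero, one_smul] at h4
      rw [h4]
      congr 2
      simp [two_smul]
    · have hne : (⟨k, hk⟩ : Fin n) ≠ i := fun h' => h (by rw [← h'])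
      have hz := W.z_succ ⟨k, hk⟩
      simp only at hz
      have e1 : P.kz (k + 1) i ε = P.kz k i ε := by
        unfold WPar.kz
        have : i.val < k + 1 ↔ i.val < k := by omega
        simp only [this]
      have e2 := P.kap_add_kap hne ε 1
      simp only at e2
      have e3 : W.l ⟨k, hk⟩ 1 * W.l ⟨k, hk⟩ (-1) * W.l i ε =
          φ (2 • P.kz k i ε) • (W.l i ε * (W.l ⟨k, hk⟩ 1 * W.l ⟨k, hk⟩ (-1))) := by
        rw [mul_assoc, W.comm hne, mul_smul_comm, ← mul_assoc, W.comm hne, smul_mul_assoc,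
          smul_smul, ← W.hφ.add, mul_assoc, ← smul_add, add_comm (P.kap _ _ _ _), e2]
      rw [hz, e1, smul_mul_assoc, mul_smul_comm, smul_comm, add_mul, mul_add, ih, e3, ← smul_add, smul_comm]

lemma z_z (k k' : ℕ) (hk : k ≤ n) (hk' : k' ≤ n) : W.z k * W.z k' = W.z k' * W.z k := by
  induction k' with
  | zero => simp [W.z_zero]
  | succ k' ih =>
    have hz := W.z_succ ⟨k', hk'⟩
    simp only at hz
    rw [hz, mul_smul_comm, smul_mul_assoc, mul_add, add_mul, ih (by omega)]
    congr 2
    rw [← mul_assoc, W.z_l k hk, smul_mul_assoc, mul_assoc, W.z_l k hk, mul_smul_comm, smul_smul,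
      ← W.hφ.add]
    have : 2 • P.kz k ⟨k', hk'⟩ 1 + 2 • P.kz k ⟨k', hk'⟩ (-1) = 0 := by
      unfold WPar.kz; split_ifs <;> simp
    rw [this, W.hφ.zero, one_smul, mul_assoc]

lemma rep_z (k : ℕ) (hk : k ≤ n) : W.rep (W.z k) = P.opZ φ k := by
  induction k with
  | zero =>
    rw [W.z_zero, map_one]; ext1 m; ext1
    simp [P.opZ_zero_apply, W.hφ.zero]
  | succ k ih =>
    have hz := W.z_succ ⟨k, hk⟩
    simp only at hz
    have h := P.opL_opp_char W.hφ ⟨k, hk⟩ 1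
    rw [hz, map_smul, map_add, map_mul, W.rep_l, W.rep_l, ih (by omega)]
    change φ _ • (P.opL φ _ _ ∘ₗ P.opL φ _ _ + _) = _
    rw [h]
    refine LinearMap.ext fun v => ?_
    simp only [LinearMap.smul_apply, LinearMap.add_apply, LinearMap.sub_apply, sub_add_cancel,
      smul_smul, ← W.hφ.add]
    simp [W.hφ.zero]

/-- The element of the algebra given by a letter. -/
def el : Lett n → A
  | Sum.inl x => W.l x.1 x.2
  | Sum.inr j => W.z (j + 1)

lemma el_comm {a b : Lett n} (h : ¬ oppo a b) :
    W.el a * W.el b = φ (2 • P.K a b) • (W.el b * W.el a) := by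
  rcases a with x | j <;> rcases b with y | k <;> simp only [el, WPar.K]
  · by_cases hxy : x.1 = y.1
    · have h2 : x.2 = y.2 := by
        by_contra h'; exact h ⟨hxy, h'⟩
      simp [hxy, h2, W.hφ.zero]
    · rw [if_neg hxy, W.comm hxy]
  · rw [W.z_l _ k.2, smul_smul, ← W.hφ.add]
    simp [W.hφ.zero]
  · rw [W.z_l _ j.2]
  · rw [W.z_z _ _ j.2 k.2]; simp [W.hφ.zero]

/-- `W.Rep m r`: the element `r` is the normalized monomial with exponent `m`. -/
inductive Rep : Mon n → A → Prop
  | one : Rep 0 1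
  | step (a : Lett n) (m : Mon n) (r : A) (ha : okUp a m) (hr : Rep m r) :
      Rep (m + lv a) ((φ (P.B a m))⁻¹ • (W.el a * r))

variable {W}

lemma okUp_ne_zero {a : Lett n} {m : Mon n} (h : okUp a m) : m + lv a ≠ 0 := by
  intro h0
  rcases a with x | j
  · have := congrFun (congrArg Prod.snd h0) x.1
    simp only [lv, Prod.snd_add, Pi.add_apply, WPar.lM_snd_self] at this
    simp only [okUp] at h
    obtain ⟨i, ε⟩ := x
    rcases Int.units_eq_one_or ε with rfl | rfl <;> simp at * <;> omega
  · have := congrFun (congrArg Prod.fst h0) j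
    simp [lv, zM] at this

/-- Any letter dividing a normalized monomial can be split off on the left. -/
lemma Rep.extract {M : Mon n} {r : A} (h : W.Rep M r) : ∀ (b : Lett n) (m' : Mon n), okUp b m' →
    M = m' + lv b → ∃ r', W.Rep m' r' ∧ r = (φ (P.B b m'))⁻¹ • (W.el b * r') := by
  induction h with
  | one => intro b m' hb h; exact absurd h.symm (okUp_ne_zero hb)
  | step a m r ha hr ih =>
    intro b m' hb hm
    by_cases hab : a = b
    · subst hab
      have : m = m' := by
        ext j
        · have := congrFun (congrArg Prod.fst hm) j; simpa using this
        · have := congrFun (congrArg Prod.snd hm) j; simpa using this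
      subst this
      exact ⟨r, hr, rfl⟩
    · obtain ⟨hno, m'', h1, h2, h3, h4⟩ := diamond ha hb hm hab
      obtain ⟨r'', hr'', hrr⟩ := ih b m'' h4 h1
      refine ⟨_, h2 ▸ Rep.step a m'' r'' h3 hr'', ?_⟩
      rw [hrr, h1, h2, P.B_add h4, P.B_add h3, P.K_anti a b, mul_smul_comm, mul_smul_comm,
        smul_smul, smul_smul, ← mul_assoc, W.el_comm hno, smul_mul_assoc, smul_smul, mul_assoc (W.el b)]
      congr 1
      rw [W.hφ.add, W.hφ.add, W.hφ.neg, two_smul, W.hφ.add]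
      have := W.hφ.ne_zero (P.K a b)
      have := W.hφ.ne_zero (P.B a m'')
      have := W.hφ.ne_zero (P.B b m'')
      field_simp

lemma Rep.eq_one {M : Mon n} {r : A} (h : W.Rep M r) (hM : M = 0) : r = 1 := by
  cases h with
  | one => rfl
  | step a m r ha hr => exact absurd hM (okUp_ne_zero ha)

lemma Rep.unique {M : Mon n} {r r' : A} (h : W.Rep M r) : W.Rep M r' → r = r' := by
  induction h generalizing r' with
  | one => intro h; exact (h.eq_one rfl).symm
  | step a m r ha hr ih =>
    intro h
    obtain ⟨r'', h1, h2⟩ := h.extract a m ha rfl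
    rw [h2, ih h1]

variable (W)

lemma exists_rep (m : Mon n) : ∃ r, W.Rep m r := by
  induction h : msize m using Nat.strong_induction_on generalizing m with
  | _ N ih =>
    by_cases h0 : m = 0
    · exact ⟨1, h0 ▸ Rep.one⟩
    · obtain ⟨a, m', ha, hm, hlt⟩ := exists_letter m h0
      obtain ⟨r, hr⟩ := ih _ (h ▸ hlt) m' rfl
      exact ⟨_, hm ▸ Rep.step a m' r ha hr⟩

/-- The linear map sending a basis vector to the corresponding normalized monomial. -/
noncomputable def psi : VV n →ₗ[ℂ] A :=
  Finsupp.linearCombination ℂ fun m => Classical.choose (W.exists_rep m)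

lemma psi_rep {m : Mon n} {r : A} (h : W.Rep m r) : W.psi (Finsupp.single m 1) = r := by
  rw [psi, Finsupp.linearCombination_single, one_smul]
  exact (Classical.choose_spec (W.exists_rep m)).unique h

lemma rep_psi (m : Mon n) : W.Rep m (W.psi (Finsupp.single m 1)) := by
  obtain ⟨r, hr⟩ := W.exists_rep m
  rwa [W.psi_rep hr]

lemma psi_zero : W.psi (Finsupp.single 0 1) = 1 := W.psi_rep Rep.one

lemma psi_step {a : Lett n} {m : Mon n} (h : okUp a m) :
    W.psi (Finsupp.single (m + lv a) 1) =
      (φ (P.B a m))⁻¹ • (W.el a * W.psi (Finsupp.single m 1)) :=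
  W.psi_rep (Rep.step a m _ h (W.rep_psi m))

lemma psi_opZ (k : ℕ) (hk : k ≤ n) (v : VV n) : W.psi (P.opZ φ k v) = W.z k * W.psi v := by
  suffices W.psi ∘ₗ P.opZ φ k = LinearMap.mulLeft ℂ (W.z k) ∘ₗ W.psi from LinearMap.congr_fun this v
  apply WPar.vext
  intro m
  simp only [LinearMap.comp_apply, LinearMap.mulLeft_apply]
  cases k with
  | zero => simp [P.opZ_zero_apply, W.hφ.zero, W.z_zero]
  | succ k =>
    have h := W.psi_step (a := Sum.inr ⟨k, hk⟩) (m := m) trivial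
    simp only [lv, el, WPar.B] at h
    rw [P.opZ_single, one_mul, ← mul_one (φ _), ← smul_eq_mul, ← Finsupp.smul_single, map_smul, h,
      smul_smul, mul_inv_cancel₀ (W.hφ.ne_zero _), one_smul]

lemma psi_opL (i : Fin n) (ε : ℤˣ) (v : VV n) : W.psi (P.opL φ i ε v) = W.l i ε * W.psi v := by
  suffices W.psi ∘ₗ P.opL φ i ε = LinearMap.mulLeft ℂ (W.l i ε) ∘ₗ W.psi from
    LinearMap.congr_fun this v
  apply WPar.vext
  intro m
  simp only [LinearMap.comp_apply, LinearMap.mulLeft_apply]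
  have up : ∀ (m : Mon n) (δ : ℤˣ) (_ : 0 ≤ (δ : ℤ) * m.2 i),
      W.psi (P.opL φ i δ (Finsupp.single m 1)) = W.l i δ * W.psi (Finsupp.single m 1) := by
    intro m δ hs
    have h := W.psi_step (a := Sum.inl (i, δ)) (m := m) hs
    simp only [lv, el, WPar.B] at h
    rw [P.opL_up _ hs, one_mul, ← mul_one (φ _), ← smul_eq_mul, ← Finsupp.smul_single, map_smul, h,
      smul_smul, mul_inv_cancel₀ (W.hφ.ne_zero _), one_smul]
  rcases le_or_gt 0 ((ε : ℤ) * m.2 i) with hs | hs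
  · exact up m ε hs
  · have hs' : 0 ≤ ((-ε : ℤˣ) : ℤ) * (m + lM i ε).2 i := by
      simp only [Prod.snd_add, Pi.add_apply, WPar.lM_snd_self, mul_add, Units.val_neg,
        neg_mul, WPar.coe_mul_self]; omega
    have e := P.opL_up φ hs' 1
    rw [WPar.lM_add_neg, one_mul, ← mul_one (φ _), ← smul_eq_mul, ← Finsupp.smul_single] at e
    have key : W.psi (P.opL φ i ε (P.opL φ i (-ε) (Finsupp.single (m + lM i ε) 1)))
        = W.l i ε * W.psi (P.opL φ i (-ε) (Finsupp.single (m + lM i ε) 1)) := by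
      have h1 := LinearMap.congr_fun (P.opL_opp_char W.hφ i ε) (Finsupp.single (m + lM i ε) 1)
      simp only [LinearMap.comp_apply, LinearMap.smul_apply, LinearMap.sub_apply] at h1
      rw [h1, up _ _ hs', ← mul_assoc, W.opp, map_sub, map_smul, W.psi_opZ _ i.2,
        W.psi_opZ _ i.2.le, sub_mul, smul_mul_assoc]
    rw [e, map_smul, map_smul, map_smul, mul_smul_comm] at key
    exact smul_right_injective _ (W.hφ.ne_zero _) key

lemma psi_rep_apply (x : A) : ∀ v : VV n, W.psi (W.rep x v) = x * W.psi v := by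
  have hx : x ∈ Algebra.adjoin ℂ (Set.range fun x : Fin n × ℤˣ => W.l x.1 x.2) := by
    rw [W.gen]; trivial
  induction hx using Algebra.adjoin_induction with
  | mem x hx => obtain ⟨⟨i, ε⟩, rfl⟩ := hx; intro v; simp only [W.rep_l, W.psi_opL]
  | algebraMap c => intro v; simp [Algebra.algebraMap_eq_smul_one]
  | add x y _ _ hx hy => intro v; simp [hx, hy, add_mul]
  | mul x y _ _ hx hy => intro v; simp [hx, hy, mul_assoc]

lemma rep_of_rep {m : Mon n} {r : A} (h : W.Rep m r) :
    W.rep r (Finsupp.single 0 1) = Finsupp.single m 1 := by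
  induction h with
  | one => simp
  | step a m r ha hr ih =>
    rw [map_smul, map_mul, LinearMap.smul_apply, Module.End.mul_apply, ih]
    have := W.hφ.ne_zero (P.B a m)
    rcases a with x | j
    · simp only [el, lv, WPar.B] at *
      rw [W.rep_l, P.opL_up φ ha]
      simp [inv_mul_cancel₀ this]
    · simp only [el, lv, WPar.B] at *
      rw [W.rep_z _ j.2, P.opZ_single]
      simp [inv_mul_cancel₀ this]

/-- The normalized monomials form a basis of the algebra. -/
noncomputable def Psi : VV n ≃ₗ[ℂ] A :=
  LinearEquiv.ofLinear W.psi ((LinearMap.applyₗ (Finsupp.single 0 1)) ∘ₗ W.rep.toLinearMap)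
    (by ext x; simp [W.psi_rep_apply, W.psi_zero])
    (by
      apply WPar.vext; intro m
      simpa using W.rep_of_rep (W.rep_psi m))

@[simp] lemma Psi_apply (v : VV n) : W.Psi v = W.psi v := rfl

end WAlg

/-! ### The quantized Weyl algebra -/

section QWeyl

variable {n : ℕ} {E : Type} [AddCommGroup E]

lemma sum_lt_succ {M : Type*} [AddCommMonoid M] (f : Fin n → M) (i : Fin n) :
    ∑ j ∈ Finset.univ.filter (fun j : Fin n => (j : ℕ) < i + 1), f j =
      ∑ j ∈ Finset.univ.filter (fun j : Fin n => (j : ℕ) < i), f j + f i := by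
  have : Finset.univ.filter (fun j : Fin n => (j : ℕ) < i + 1) =
      insert i (Finset.univ.filter (fun j : Fin n => (j : ℕ) < i)) := by
    ext j; simp [Fin.ext_iff]; omega
  rw [this, Finset.sum_insert (by simp), add_comm]

lemma Iio_eq_filter (i : Fin n) :
    Finset.Iio i = Finset.univ.filter (fun j : Fin n => (j : ℕ) < i) := by
  ext j; rw [Finset.mem_Iio, Finset.mem_filter, Fin.lt_def]; simp

/-- The generator `y_i` (for `ε = 1`) or `x_i` (for `ε = -1`) as a variable. -/
def sgnVar (i : Fin n) (ε : ℤˣ) : Fin n ⊕ Fin n := if ε = 1 then Sum.inl i else Sum.inr i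

/-- The product of the `φ (sq_j)` over `j < k`. -/
noncomputable def alp (P : WPar n E) (φ : E → ℂ) (k : ℕ) : ℂ :=
  φ (∑ j ∈ Finset.univ.filter (fun j : Fin n => (j : ℕ) < k), P.sq j)

/-- Normalizing factors of the generators of the quantized Weyl algebra. -/
noncomputable def nrm (P : WPar n E) (φ : E → ℂ) (q : Fin n → ℂ) (i : Fin n) (ε : ℤˣ) : ℂ :=
  if ε = 1 then q i - 1 else alp P φ i

variable (P : WPar n E) {φ : E → ℂ} (hφ : WPar.IsChar φ) (q : Fin n → ℂ) (lam : Fin n → Fin n → ℂ)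

include hφ in
lemma alp_succ (i : Fin n) : alp P φ (i + 1) = alp P φ i * φ (P.sq i) := by
  rw [alp, sum_lt_succ, hφ.add]; rfl

include hφ in
lemma alp_ne (k : ℕ) : alp P φ k ≠ 0 := hφ.ne_zero _

include hφ in
lemma nrm_ne (hq1 : ∀ i, q i ≠ 1) (i : Fin n) (ε : ℤˣ) : nrm P φ q i ε ≠ 0 := by
  unfold nrm; split_ifs
  · exact sub_ne_zero.2 (hq1 i)
  · exact alp_ne P hφ i

/-- The generators of the quantized Weyl algebra. -/
noncomputable def rgen (i : Fin n) (ε : ℤˣ) : RingQuot (RRel n q lam) :=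
  RingQuot.mkAlgHom ℂ (RRel n q lam) (FreeAlgebra.ι ℂ (sgnVar i ε))

/-- The elements `z_k` of the quantized Weyl algebra. -/
noncomputable def rz (k : ℕ) : RingQuot (RRel n q lam) :=
  1 + ∑ j ∈ Finset.univ.filter (fun j : Fin n => (j : ℕ) < k),
    (q j - 1) • (rgen q lam j 1 * rgen q lam j (-1))

variable (hq : ∀ i, q i = φ (2 • P.sq i)) (hlam : ∀ i j, lam i j = φ (2 • P.slam i j))

include hφ hq hlam in
lemma rgen_comm {i j : Fin n} (h : i < j) (ε δ : ℤˣ) :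
    rgen q lam j ε * rgen q lam i δ =
      φ (2 • P.kap j ε i δ) • (rgen q lam i δ * rgen q lam j ε) := by
  have hij : ¬ j < i := not_lt.2 h.le
  have hneg : ∀ x, φ (2 • -x) = (φ (2 • x))⁻¹ := fun x => by rw [smul_neg, hφ.neg]
  have e1 := RingQuot.mkAlgHom_rel ℂ (RRel.yy (q := q) (lam := lam) i j h)
  have e2 := RingQuot.mkAlgHom_rel ℂ (RRel.yx (q := q) (lam := lam) i j h)
  have e3 := RingQuot.mkAlgHom_rel ℂ (RRel.xy (q := q) (lam := lam) i j h)
  have e4 := RingQuot.mkAlgHom_rel ℂ (RRel.xx (q := q) (lam := lam) i j h)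
  simp only [map_mul, map_smul] at e1 e2 e3 e4
  have hne : (-1 : ℤˣ) ≠ 1 := by decide
  rcases Int.units_eq_one_or ε with rfl | rfl <;> rcases Int.units_eq_one_or δ with rfl | rfl <;>
    simp only [rgen, sgnVar, if_true, if_neg hne, WPar.kap, hij, and_false, if_false, if_pos h, h,
      and_true, hne.symm]
  · rw [e1, hlam]; simp
  · rw [e2, hlam, P.anti j i, hneg]; simp [hφ.neg]
  · rw [e3, hlam, hq, P.anti i j]; simp [hφ.neg, hφ.add, mul_comm]
  · rw [e4, hlam, hq, P.anti i j]; simp [hφ.neg, hφ.add, mul_comm]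

lemma rgen_weyl (i : Fin n) :
    rgen q lam i (-1) * rgen q lam i 1 = q i • (rgen q lam i 1 * rgen q lam i (-1)) + rz q lam i := by
  have e := RingQuot.mkAlgHom_rel ℂ (RRel.weyl (q := q) (lam := lam) i)
  have hne : (-1 : ℤˣ) ≠ 1 := by decide
  simp only [map_mul, map_smul, map_sub, map_add, map_one, map_sum] at e
  rw [sub_eq_iff_eq_add'] at e
  simp only [rgen, sgnVar, if_true, if_neg hne, rz]
  rw [e, Iio_eq_filter]

lemma rz_succ (i : Fin n) :
    rz q lam (i + 1) = rz q lam i + (q i - 1) • (rgen q lam i 1 * rgen q lam i (-1)) := by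
  rw [rz, sum_lt_succ, ← add_assoc]; rfl

include hφ in
lemma opZ_telescope (k : ℕ) (hk : k ≤ n) :
    (1 : Module.End ℂ (VV n)) + ∑ j ∈ Finset.univ.filter (fun j : Fin n => (j : ℕ) < k),
      (alp P φ j)⁻¹ • (P.opL φ j 1 * P.opL φ j (-1)) = (alp P φ k)⁻¹ • P.opZ φ k := by
  induction k with
  | zero =>
    refine LinearMap.ext fun v => ?_
    simp [alp, P.opZ_zero_apply, hφ.zero]
  | succ k ih =>
    have h1 := sum_lt_succ (fun j => (alp P φ j)⁻¹ • ((P.opL φ j 1 : Module.End ℂ (VV n)) *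
      P.opL φ j (-1))) ⟨k, hk⟩
    simp only at h1
    rw [h1, ← add_assoc, ih (by omega)]
    have h2 := alp_succ P hφ ⟨k, hk⟩
    simp only at h2
    rw [Module.End.mul_eq_comp, P.opL_opp_char hφ, h2]
    refine LinearMap.ext fun v => ?_
    simp only [LinearMap.add_apply, LinearMap.smul_apply, LinearMap.sub_apply, smul_sub]
    rw [add_sub_cancel, smul_smul]
    congr 1
    simp [hφ.neg, mul_comm]

include hφ hq hlam in
lemma rep_rel (hq1 : ∀ i, q i ≠ 1) ⦃x y : FreeAlgebra ℂ (Fin n ⊕ Fin n)⦄ (h : RRel n q lam x y) :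
    FreeAlgebra.lift ℂ (Sum.elim (fun i => (nrm P φ q i 1)⁻¹ • (P.opL φ i 1 : Module.End ℂ (VV n)))
      (fun i => (nrm P φ q i (-1))⁻¹ • (P.opL φ i (-1) : Module.End ℂ (VV n)))) x =
    FreeAlgebra.lift ℂ (Sum.elim (fun i => (nrm P φ q i 1)⁻¹ • (P.opL φ i 1 : Module.End ℂ (VV n)))
      (fun i => (nrm P φ q i (-1))⁻¹ • (P.opL φ i (-1) : Module.End ℂ (VV n)))) y := by
  have hne : (-1 : ℤˣ) ≠ 1 := by decide
  have hneg : ∀ x, φ (2 • -x) = (φ (2 • x))⁻¹ := fun x => by rw [smul_neg, hφ.neg]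
  have key : ∀ {i j : Fin n} (_ : i < j) (ε δ : ℤˣ) (a b : ℂ),
      (a • (P.opL φ j ε : Module.End ℂ (VV n))) * (b • (P.opL φ i δ : Module.End ℂ (VV n))) =
      φ (2 • P.kap j ε i δ) • ((b • (P.opL φ i δ : Module.End ℂ (VV n))) *
        (a • (P.opL φ j ε : Module.End ℂ (VV n)))) := by
    intro i j h ε δ a b
    have := P.opL_comm hφ h.ne' ε δ
    simp only [← Module.End.mul_eq_comp] at this
    rw [smul_mul_smul_comm, this, smul_mul_smul_comm, smul_comm, mul_comm a b]
  cases h with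
  | yy i j h =>
    have hij : ¬ j < i := not_lt.2 h.le
    simp only [map_mul, map_smul, FreeAlgebra.lift_ι_apply, Sum.elim_inl, Sum.elim_inr]
    rw [key h, hlam]; simp [WPar.kap, hij, hne.symm]
  | yx i j h =>
    have hij : ¬ j < i := not_lt.2 h.le
    simp only [map_mul, map_smul, FreeAlgebra.lift_ι_apply, Sum.elim_inl, Sum.elim_inr]
    rw [key h, hlam, P.anti j i]; simp [WPar.kap, hij, hne.symm]
  | xy i j h =>
    have hij : ¬ j < i := not_lt.2 h.le
    simp only [map_mul, map_smul, FreeAlgebra.lift_ι_apply, Sum.elim_inl, Sum.elim_inr]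
    rw [key h, hlam, hq, P.anti j i]; simp [WPar.kap, hij, h, hne.symm, hφ.neg, hφ.add, mul_comm]
  | xx i j h =>
    have hij : ¬ j < i := not_lt.2 h.le
    simp only [map_mul, map_smul, FreeAlgebra.lift_ι_apply, Sum.elim_inl, Sum.elim_inr]
    rw [key h, hlam, hq, P.anti j i]; simp [WPar.kap, hij, h, hne.symm, hφ.neg, hφ.add, mul_comm]
  | weyl i =>
    simp only [map_mul, map_smul, map_sub, map_add, map_one, map_sum, FreeAlgebra.lift_ι_apply,
      Sum.elim_inl, Sum.elim_inr]
    have hs : ∀ k : Fin n, (q k - 1) • (((nrm P φ q k 1)⁻¹ • (P.opL φ k 1 : Module.End ℂ (VV n))) *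
        ((nrm P φ q k (-1))⁻¹ • (P.opL φ k (-1) : Module.End ℂ (VV n)))) =
        (alp P φ k)⁻¹ • (P.opL φ k 1 * P.opL φ k (-1)) := by
      intro k
      rw [smul_mul_smul_comm, smul_smul]
      have := sub_ne_zero.2 (hq1 k)
      simp [nrm, hne, mul_inv_cancel_left₀ this]
    rw [Finset.sum_congr rfl (fun k _ => hs k), Iio_eq_filter, opZ_telescope P hφ i i.2.le,
      smul_mul_smul_comm, smul_mul_smul_comm]
    have e1 := P.opL_opp_char hφ i 1
    have e2 := P.opL_opp_char hφ i (-1)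
    rw [neg_neg] at e2
    rw [Module.End.mul_eq_comp, Module.End.mul_eq_comp, e1, e2]
    refine LinearMap.ext fun v => ?_
    simp only [LinearMap.smul_apply, LinearMap.sub_apply, smul_sub, smul_smul]
    have h1 := sub_ne_zero.2 (hq1 i)
    have h2 := alp_ne P hφ i
    have h3 : q i = φ (P.sq i) * φ (P.sq i) := by rw [hq, two_smul, hφ.add]
    have h4 := hφ.ne_zero (P.sq i)
    simp only [nrm, if_true, if_neg hne]
    have h5 : (alp P φ i)⁻¹ * (q i - 1)⁻¹ * φ (-(((-1 : ℤˣ) : ℤ) • P.sq i)) =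
      q i * ((q i - 1)⁻¹ * (alp P φ i)⁻¹ * φ (-(((1 : ℤˣ) : ℤ) • P.sq i))) := by
      simp only [Units.val_neg, Units.val_one, neg_smul, one_smul, neg_neg, hφ.neg]
      rw [h3]; field_simp
    rw [h5]
    rw [← mul_assoc (q i) _ (φ _), sub_sub_sub_cancel_left, ← sub_smul]
    congr 1
    clear h5
    field_simp

/-- The quantized Weyl algebra with normalized letters. -/
noncomputable def RAlg (hq1 : ∀ i, q i ≠ 1) : WAlg P φ (RingQuot (RRel n q lam)) where
  hφ := hφ
  l i ε := nrm P φ q i ε • rgen q lam i ε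
  z k := alp P φ k • rz q lam k
  z_zero := by simp [alp, rz, hφ.zero]
  comm {i j} h ε δ := by
    have : rgen q lam i ε * rgen q lam j δ =
      φ (2 • P.kap i ε j δ) • (rgen q lam j δ * rgen q lam i ε) := by
      rcases lt_or_gt_of_ne h with h | h
      · rw [rgen_comm P hφ q lam hq hlam h, smul_smul, ← hφ.add, P.kap_anti]
        simp [hφ.zero]
      · rw [rgen_comm P hφ q lam hq hlam h]
    rw [smul_mul_smul_comm, smul_mul_smul_comm, this, smul_comm, mul_comm (nrm P φ q i ε)]
  opp i ε := by
    have hne : (-1 : ℤˣ) ≠ 1 := by decide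
    have h3 : q i = φ (P.sq i) * φ (P.sq i) := by rw [hq, two_smul, hφ.add]
    have h4 := hφ.ne_zero (P.sq i)
    have h6 := rz_succ q lam i
    rw [h6, smul_mul_smul_comm, alp_succ P hφ]
    rcases Int.units_eq_one_or ε with rfl | rfl
    · simp only [nrm, if_true, if_neg hne, Units.val_one, one_smul, hφ.neg]
      rw [smul_smul, mul_comm (alp P φ i), inv_mul_cancel_left₀ h4, smul_add, add_sub_cancel_left,
        smul_smul, mul_comm]
    · simp only [neg_neg, nrm, if_true, if_neg hne, Units.val_neg, Units.val_one, one_smul, hφ.neg,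
        rgen_weyl, neg_smul]
      rw [smul_smul, smul_add, smul_add, smul_smul, smul_smul, add_sub_right_comm, add_comm]
      rw [← sub_smul]
      congr 2
      · rw [h3]; ring
      · rw [h3]; ring
  gen := by
    have h1 : Algebra.adjoin ℂ (Set.range fun x : Fin n ⊕ Fin n =>
        RingQuot.mkAlgHom ℂ (RRel n q lam) (FreeAlgebra.ι ℂ x)) = ⊤ := by
      have := congrArg (Subalgebra.map (RingQuot.mkAlgHom ℂ (RRel n q lam)))
        (FreeAlgebra.adjoin_range_ι ℂ (Fin n ⊕ Fin n))
      rw [AlgHom.map_adjoin, Algebra.map_top, (AlgHom.range_eq_top _).2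
        (RingQuot.mkAlgHom_surjective ℂ _), ← Set.range_comp] at this
      exact this
    rw [eq_top_iff, ← h1, Algebra.adjoin_le_iff]
    have key : ∀ i ε, rgen q lam i ε ∈ Algebra.adjoin ℂ (Set.range fun x : Fin n × ℤˣ =>
        nrm P φ q x.1 x.2 • rgen q lam x.1 x.2) := by
      intro i ε
      have h2 : nrm P φ q i ε • rgen q lam i ε ∈ Algebra.adjoin ℂ (Set.range fun x : Fin n × ℤˣ =>
        nrm P φ q x.1 x.2 • rgen q lam x.1 x.2) := Algebra.subset_adjoin ⟨(i, ε), rfl⟩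
      have := Subalgebra.smul_mem _ h2 (nrm P φ q i ε)⁻¹
      rwa [smul_smul, inv_mul_cancel₀ (nrm_ne P hφ q hq1 i ε), one_smul] at this
    rintro _ ⟨x | x, rfl⟩
    · exact key x 1
    · exact key x (-1)
  rep := RingQuot.liftAlgHom ℂ ⟨FreeAlgebra.lift ℂ
    (Sum.elim (fun i => (nrm P φ q i 1)⁻¹ • (P.opL φ i 1 : Module.End ℂ (VV n)))
      (fun i => (nrm P φ q i (-1))⁻¹ • (P.opL φ i (-1) : Module.End ℂ (VV n)))),
    rep_rel P hφ q lam hq hlam hq1⟩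
  rep_l i ε := by
    have h := nrm_ne P hφ q hq1 i ε
    rw [map_smul, rgen, RingQuot.liftAlgHom_mkAlgHom_apply, FreeAlgebra.lift_ι_apply]
    rcases Int.units_eq_one_or ε with rfl | rfl
    · simp [sgnVar, smul_smul, mul_inv_cancel₀ h]
    · have hne : (-1 : ℤˣ) ≠ 1 := by decide
      simp [sgnVar, hne, smul_smul, mul_inv_cancel₀ h]

end QWeyl

namespace WAlg

variable {n : ℕ} {E : Type} [AddCommGroup E] {P : WPar n E} {φ : E → ℂ}
  {A : Type} [Ring A] [Algebra ℂ A] (W : WAlg P φ A)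

/-- Right multiplication by a letter is the letter operator for the inverse character. -/
lemma psi_opL_right (i : Fin n) (ε : ℤˣ) (v : VV n) :
    W.psi (P.opL (fun x => φ (-x)) i ε v) = W.psi v * W.l i ε := by
  have comm : ∀ x : A, W.rep x ∘ₗ P.opL (fun x => φ (-x)) i ε =
      P.opL (fun x => φ (-x)) i ε ∘ₗ W.rep x := by
    intro x
    have hx : x ∈ Algebra.adjoin ℂ (Set.range fun x : Fin n × ℤˣ => W.l x.1 x.2) := by
      rw [W.gen]; trivial
    induction hx using Algebra.adjoin_induction with
    | mem x hx =>
      obtain ⟨⟨j, δ⟩, rfl⟩ := hx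
      simp only [W.rep_l, P.opL_left_right W.hφ]
    | algebraMap c =>
      refine LinearMap.ext fun v => ?_
      simp [Algebra.algebraMap_eq_smul_one]
    | add x y _ _ hx hy => rw [map_add, LinearMap.add_comp, LinearMap.comp_add, hx, hy]
    | mul x y _ _ hx hy =>
      rw [map_mul, Module.End.mul_eq_comp, LinearMap.comp_assoc, hy, ← LinearMap.comp_assoc, hx,
        LinearMap.comp_assoc]
  have hv : v = W.rep (W.psi v) (Finsupp.single 0 1) := (W.Psi.symm_apply_apply v).symm
  have h := LinearMap.congr_fun (comm (W.psi v)) (Finsupp.single 0 1)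
  simp only [LinearMap.comp_apply] at h
  rw [← hv] at h
  rw [← h, W.psi_rep_apply]
  congr 1
  have h1 : P.opL (fun x => φ (-x)) i ε (Finsupp.single 0 1) =
      P.opL φ i ε (Finsupp.single 0 1) := by
    rw [P.opL_up _ (by simp), P.opL_up _ (by simp), P.bet_zero, neg_zero]
  rw [h1, W.psi_opL, W.psi_zero, mul_one]

lemma psi_opZ_right (k : ℕ) (hk : k ≤ n) (v : VV n) :
    W.psi (P.opZ (fun x => φ (-x)) k v) = W.psi v * W.z k := by
  induction k with
  | zero => rw [P.opZ_zero_apply, W.z_zero]; simp [W.hφ.zero]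
  | succ k ih =>
    have h := LinearMap.congr_fun (P.opL_opp_char W.hφ.comp_neg ⟨k, hk⟩ 1) v
    simp only [LinearMap.comp_apply, LinearMap.smul_apply, LinearMap.sub_apply] at h
    have h2 := W.opp ⟨k, hk⟩ (-1)
    rw [neg_neg] at h2
    have h3 := congrArg W.psi h
    rw [W.psi_opL_right, W.psi_opL_right, mul_assoc, h2, map_sub, map_smul, ih (by omega), mul_sub,
      sub_left_inj, mul_smul_comm] at h3
    simp only [Units.val_neg, Units.val_one, neg_smul, one_smul, neg_neg] at h3
    exact (smul_right_injective _ (W.hφ.ne_zero _) h3).symm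

lemma psi_mul_stable (I : Submodule ℂ (VV n)) (hI : ∀ i ε, ∀ v ∈ I, P.opL φ i ε v ∈ I)
    (x : A) : ∀ v ∈ I, W.rep x v ∈ I := by
  have hx : x ∈ Algebra.adjoin ℂ (Set.range fun x : Fin n × ℤˣ => W.l x.1 x.2) := by
    rw [W.gen]; trivial
  induction hx using Algebra.adjoin_induction with
  | mem x hx => obtain ⟨⟨j, δ⟩, rfl⟩ := hx; intro v hv; rw [W.rep_l]; exact hI _ _ v hv
  | algebraMap c =>
    intro v hv
    simpa [Algebra.algebraMap_eq_smul_one] using I.smul_mem c hv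
  | add x y _ _ hx hy => intro v hv; rw [map_add]; exact I.add_mem (hx v hv) (hy v hv)
  | mul x y _ _ hx hy => intro v hv; rw [map_mul]; exact hx _ (hy v hv)

lemma map_stable (I : Submodule ℂ (VV n)) (hI : ∀ i ε, ∀ v ∈ I, P.opL φ i ε v ∈ I)
    (x a : A) (ha : W.Psi.symm a ∈ I) : W.Psi.symm (x * a) ∈ I := by
  have h := W.psi_mul_stable I hI x _ ha
  have h2 := W.psi_rep_apply x (W.Psi.symm a)
  rw [← W.Psi_apply, ← W.Psi_apply, W.Psi.apply_symm_apply] at h2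
  rw [← h2, W.Psi.symm_apply_apply]
  exact h

lemma map_stable_right (I : Submodule ℂ (VV n))
    (hI : ∀ i ε, ∀ v ∈ I, P.opL (fun x => φ (-x)) i ε v ∈ I)
    (x : A) : ∀ a, W.Psi.symm a ∈ I → W.Psi.symm (a * x) ∈ I := by
  have hx : x ∈ Algebra.adjoin ℂ (Set.range fun x : Fin n × ℤˣ => W.l x.1 x.2) := by
    rw [W.gen]; trivial
  induction hx using Algebra.adjoin_induction with
  | mem x hx =>
    obtain ⟨⟨j, δ⟩, rfl⟩ := hx; intro a ha
    have := W.psi_opL_right j δ (W.Psi.symm a)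
    rw [← W.Psi_apply, ← W.Psi_apply, W.Psi.apply_symm_apply] at this
    rw [← this, W.Psi.symm_apply_apply]
    exact hI _ _ _ ha
  | algebraMap c =>
    intro v hv
    simpa [Algebra.algebraMap_eq_smul_one] using I.smul_mem c hv
  | add x y _ _ hx hy => intro v hv; rw [mul_add, map_add]; exact I.add_mem (hx v hv) (hy v hv)
  | mul x y _ _ hx hy => intro v hv; rw [← mul_assoc]; exact hy _ (hx v hv)

end WAlg

/-! ### The Poisson Weyl algebra -/

section PWeyl

variable {n : ℕ} {E : Type} [AddCommGroup E] (P : WPar n E)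

/-- The generator `y_i` (for `ε = 1`) or `x_i` (for `ε = -1`) of the polynomial ring. -/
noncomputable def agen (i : Fin n) (ε : ℤˣ) : MvPolynomial (Fin n ⊕ Fin n) ℂ :=
  MvPolynomial.X (sgnVar i ε)

lemma exists_aeval_of_comm {ι C : Type} [Ring C] [Algebra ℂ C] (g : ι → C)
    (hg : ∀ i j, g i * g j = g j * g i) :
    ∃ f : MvPolynomial ι ℂ →ₐ[ℂ] C, ∀ i, f (MvPolynomial.X i) = g i := by
  have hS : ∀ a ∈ Set.range g, ∀ b ∈ Set.range g, a * b = b * a := by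
    rintro _ ⟨x, rfl⟩ _ ⟨y, rfl⟩
    exact hg x y
  letI : CommRing (Algebra.adjoin ℂ (Set.range g)) := Algebra.adjoinCommRingOfComm ℂ hS
  refine ⟨(Algebra.adjoin ℂ (Set.range g)).val.comp
    (MvPolynomial.aeval fun i => ⟨g i, Algebra.subset_adjoin ⟨i, rfl⟩⟩), fun i => ?_⟩
  simp

lemma exists_rep_poly : ∃ f : MvPolynomial (Fin n ⊕ Fin n) ℂ →ₐ[ℂ] Module.End ℂ (VV n),
    ∀ i ε, f (agen i ε) = P.opL (fun _ => 1) i ε := by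
  have hne : (-1 : ℤˣ) ≠ 1 := by decide
  obtain ⟨f, hf⟩ := exists_aeval_of_comm (C := Module.End ℂ (VV n))
    (Sum.elim (fun i : Fin n => P.opL (fun _ => 1) i 1) (fun i : Fin n => P.opL (fun _ => 1) i (-1)))
    (by rintro (i | i) (j | j) <;> exact P.opL_one_comm _ _ _ _)
  refine ⟨f, fun i ε => ?_⟩
  rcases Int.units_eq_one_or ε with rfl | rfl
  · simp only [agen, sgnVar, if_true, hf, Sum.elim_inl]
  · simp only [agen, sgnVar, if_neg hne, hf, Sum.elim_inr]

lemma agen_one (i : Fin n) : agen i 1 = yP n i := by simp [agen, sgnVar, yP]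

lemma agen_neg (i : Fin n) : agen i (-1) = xP n i := by
  have hne : (-1 : ℤˣ) ≠ 1 := by decide
  simp [agen, sgnVar, xP, hne]

lemma zP_succ (i : Fin n) : zP n (i + 1) = zP n i + yP n i * xP n i := by
  rw [zP, sum_lt_succ, ← add_assoc]; rfl

/-- The polynomial ring as an algebra of letters with trivial character. -/
noncomputable def AAlg : WAlg P (fun _ => 1) (MvPolynomial (Fin n ⊕ Fin n) ℂ) where
  hφ := WPar.isChar_one
  l := agen
  z := zP n
  z_zero := by simp [zP]
  comm _ ε δ := by rw [mul_comm, one_smul]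
  opp i ε := by
    rw [zP_succ]
    rcases Int.units_eq_one_or ε with rfl | rfl
    · rw [agen_one, agen_neg]; simp
    · rw [neg_neg, agen_one, agen_neg]; simp [mul_comm]
  gen := by
    rw [eq_top_iff, ← MvPolynomial.adjoin_range_X, Algebra.adjoin_le_iff]
    rintro _ ⟨x | x, rfl⟩
    · exact Algebra.subset_adjoin ⟨(x, 1), agen_one x⟩
    · exact Algebra.subset_adjoin ⟨(x, -1), agen_neg x⟩
  rep := (exists_rep_poly P).choose
  rep_l := (exists_rep_poly P).choose_spec

variable (B : PoissonBr (MvPolynomial (Fin n ⊕ Fin n) ℂ))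

namespace PoissonBr

variable {R : Type} [CommRing R] (B : PoissonBr R)

lemma add_right (a b c : R) : B.br a (b + c) = B.br a b + B.br a c := by
  rw [B.skew, B.add_left, B.skew b, B.skew c]; ring

lemma leibniz_right (a b c : R) : B.br a (b * c) = B.br a b * c + b * B.br a c := by
  rw [B.skew, B.leibniz, B.skew b, B.skew c]; ring

lemma one_right (a : R) : B.br a 1 = 0 := by
  have := B.leibniz_right a 1 1
  simp only [mul_one, one_mul] at this
  linear_combination -this

lemma zero_right (a : R) : B.br a 0 = 0 := by
  have := B.add_right a 0 0
  rw [add_zero] at this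
  linear_combination -this

end PoissonBr

/-- The brackets of the letters are given by the additive function `ψ`. -/
structure IsWBr (ψ : E → ℂ) : Prop where
  hψ : ∀ x y, ψ (x + y) = ψ x + ψ y
  smul : ∀ (c : ℂ) (a b : MvPolynomial (Fin n ⊕ Fin n) ℂ), B.br (c • a) b = c • B.br a b
  ne : ∀ {i j : Fin n} (_ : i ≠ j) (ε δ : ℤˣ), B.br (agen i ε) (agen j δ) =
    ψ (P.kap i ε j δ) • (agen i ε * agen j δ)
  same : ∀ (i : Fin n) (ε : ℤˣ), B.br (agen i ε) (agen i ε) = 0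
  opp : ∀ (i : Fin n) (ε : ℤˣ), B.br (agen i ε) (agen i (-ε)) =
    ψ (-((ε : ℤ) • P.sq i)) • zP n (i + 1)

variable {P B} {ψ : E → ℂ} (hB : IsWBr P B ψ)

include hB

lemma IsWBr.smul_right (c : ℂ) (a b : MvPolynomial (Fin n ⊕ Fin n) ℂ) :
    B.br a (c • b) = c • B.br a b := by
  rw [B.skew, hB.smul, B.skew b, smul_neg, neg_neg]

/-- The bracket with a letter is the letter operator for `ψ`. -/
lemma IsWBr.br_psi (i : Fin n) (ε : ℤˣ) (v : VV n) :
    B.br (agen i ε) ((AAlg P).psi v) = (AAlg P).psi (P.opL ψ i ε v) := by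
  set W := AAlg P with hW
  have key : ∀ x, ∀ v, B.br (agen i ε) (W.psi v) = W.psi (P.opL ψ i ε v) →
      B.br (agen i ε) (W.psi (W.rep x v)) = W.psi (P.opL ψ i ε (W.rep x v)) := by
    intro x
    have hx : x ∈ Algebra.adjoin ℂ (Set.range fun x : Fin n × ℤˣ => W.l x.1 x.2) := by
      rw [W.gen]; trivial
    induction hx using Algebra.adjoin_induction with
    | mem x hx =>
      obtain ⟨⟨j, δ⟩, rfl⟩ := hx
      intro v hv
      rw [W.psi_rep_apply, B.leibniz_right, hv]
      simp only [W.rep_l]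
      have h3 : W.l j δ * W.psi (P.opL ψ i ε v) =
          W.psi (P.opL (fun _ => 1) j δ (P.opL ψ i ε v)) := (W.psi_opL _ _ _).symm
      rw [h3, ← eq_sub_iff_add_eq, ← map_sub]
      change B.br (agen i ε) (agen j δ) * _ = _
      by_cases hij : i = j
      · subst hij
        by_cases hd : δ = ε
        · subst hd
          have := LinearMap.congr_fun (P.opL_add_same hB.hψ i δ) v
          simp only [LinearMap.comp_apply] at this
          rw [this, hB.same, sub_self, map_zero, zero_mul]
        · have hd' : δ = -ε := by
            rcases Int.units_eq_one_or ε with rfl | rfl <;>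
              rcases Int.units_eq_one_or δ with rfl | rfl <;> simp at *
          subst hd'
          have := LinearMap.congr_fun (P.opL_opp_add hB.hψ i ε) v
          simp only [LinearMap.comp_apply, LinearMap.sub_apply, LinearMap.smul_apply] at this
          rw [this, hB.opp, map_smul, W.psi_opZ _ i.2, smul_mul_assoc]
          rfl
      · have := LinearMap.congr_fun (P.opL_add hB.hψ hij ε δ) v
        simp only [LinearMap.comp_apply, LinearMap.sub_apply, LinearMap.smul_apply] at this
        rw [this, hB.ne hij, map_smul, W.psi_opL, W.psi_opL, smul_mul_assoc, mul_assoc]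
        rfl
    | algebraMap c =>
      intro v hv
      have : W.rep (algebraMap ℂ _ c) v = c • v := by simp [Algebra.algebraMap_eq_smul_one]
      rw [this, map_smul, map_smul, map_smul, hB.smul_right, hv]
    | add x y _ _ hx hy =>
      intro v hv
      rw [map_add, LinearMap.add_apply, map_add, map_add, map_add, B.add_right, hx v hv, hy v hv]
    | mul x y _ _ hx hy =>
      intro v hv
      rw [map_mul, Module.End.mul_apply]
      exact hx _ (hy v hv)
  have hv : v = W.rep (W.psi v) (Finsupp.single 0 1) := (W.Psi.symm_apply_apply v).symm
  have h0 : ψ 0 = 0 := by have := hB.hψ 0 0; simpa using this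
  rw [hv]
  apply key
  rw [W.psi_zero, B.one_right, P.opL_up _ (by simp), P.bet_zero, h0, mul_zero,
    Finsupp.single_zero, map_zero]

lemma IsWBr.isPoissonIdeal_iff (J : Ideal (MvPolynomial (Fin n ⊕ Fin n) ℂ)) :
    IsPoissonIdeal B.br J ↔ ∀ i ε, ∀ a ∈ J, B.br (agen i ε) a ∈ J := by
  constructor
  · intro h i ε a ha
    rw [B.skew]
    exact J.neg_mem (h a ha _)
  · intro h a ha b
    have hx : b ∈ Algebra.adjoin ℂ (Set.range fun x : Fin n × ℤˣ => (AAlg P).l x.1 x.2) := by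
      rw [(AAlg P).gen]; trivial
    induction hx using Algebra.adjoin_induction with
    | mem x hx =>
      obtain ⟨⟨j, δ⟩, rfl⟩ := hx
      rw [B.skew]
      exact J.neg_mem (h j δ a ha)
    | algebraMap c =>
      rw [Algebra.algebraMap_eq_smul_one, hB.smul_right, B.one_right, smul_zero]
      exact J.zero_mem
    | add x y _ _ hx hy => rw [B.add_right]; exact J.add_mem hx hy
    | mul x y _ _ hx hy =>
      rw [B.leibniz_right]
      exact J.add_mem (J.mul_mem_right _ hx) (J.mul_mem_left _ hy)

end PWeyl

/-! ### Vanishing patterns and weights -/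

section

open scoped Classical

/-- A vanishing pattern: `zN k` says that `z_k` is a unit on the stratum, `act i ε` that the
letter `(i, ε)` does not vanish on it. -/
structure Pat (n : ℕ) where
  zN : ℕ → Prop
  act : Fin n → ℤˣ → Prop
  zN_zero : zN 0
  zN_le : ∀ k, zN k → k ≤ n
  act_left : ∀ i ε, zN i.val → act i ε
  act_right : ∀ i ε, zN (i.val + 1) → act i ε
  not_both : ∀ i ε, ¬ zN i.val → ¬ zN (i.val + 1) → act i ε → ¬ act i (-ε)

namespace Pat

variable {n : ℕ} (T : Pat n)

/-- The index `i` is generic when both `z_i` and `z_{i+1}` are units; then neither `y_i` nor `x_i`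
is normal on the stratum. -/
def gen (i : Fin n) : Prop := T.zN i.val ∧ T.zN (i.val + 1)

/-- The index `i` is upper when `z_i` vanishes while `z_{i+1}` is a unit. -/
def upr (i : Fin n) : Prop := ¬ T.zN i.val ∧ T.zN (i.val + 1)

/-- The exponents of the normalized monomials vanishing on the stratum. -/
def bad (m : Mon n) : Prop :=
  (∃ j : Fin n, m.1 j ≠ 0 ∧ ¬ T.zN (j.val + 1)) ∨ ∃ (i : Fin n) (ε : ℤˣ), 0 < (ε : ℤ) * m.2 i ∧ ¬ T.act i ε

/-- The span of the normalized monomials vanishing on the stratum. -/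
def NN : Submodule ℂ (VV n) := Finsupp.supported ℂ ℂ {m | T.bad m}

lemma single_mem_NN {m : Mon n} (h : T.bad m) (c : ℂ) : Finsupp.single m c ∈ T.NN :=
  Finsupp.single_mem_supported ℂ c h

lemma bad_add_zM {m : Mon n} (h : T.bad m) (k : ℕ) : T.bad (m + zM n k) := by
  rcases h with ⟨j, h, h'⟩ | ⟨i, ε, h, h'⟩
  · left; refine ⟨j, ?_, h'⟩; simp only [Prod.fst_add, Pi.add_apply]; omega
  · right; exact ⟨i, ε, by simpa [zM] using h, h'⟩

lemma bad_zM {k : ℕ} (hk : k ≤ n) (h : ¬ T.zN k) (m : Mon n) : T.bad (m + zM n k) := by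
  have hk0 : k ≠ 0 := by rintro rfl; exact h T.zN_zero
  left
  refine ⟨⟨k - 1, by omega⟩, ?_, ?_⟩
  · simp [zM]; omega
  · rwa [show k - 1 + 1 = k by omega]

end Pat

/-- The group of weights of a pattern: commutation exponents with the `z_k`, with the letters
`(i, ε)`, and the exponents `s_i` for generic `i`. -/
abbrev KK (n : ℕ) (E : Type) := (ℕ → E) × (Fin n → ℤˣ → E) × (Fin n → ℤ)

namespace WPar

variable {n : ℕ} {E : Type} [AddCommGroup E] (P : WPar n E) (T : Pat n)

/-- The correction to `WPar.bet` for upper indices, where lowering produces `z_{i+1}`. -/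
noncomputable def own (i : Fin n) (δ : ℤˣ) (s : ℤ) : E :=
  if T.upr i ∧ (δ : ℤ) * s < 0 then s • P.sq i else 0

/-- The weight of a normalized monomial. -/
noncomputable def wt (m : Mon n) : KK n E :=
  (fun k => if T.zN k then P.zet k m else 0,
   fun i ε => if T.act i ε then P.bet i ε m + P.own T i ε (m.2 i) else 0,
   fun i => if T.gen i then m.2 i else 0)

/-- The weight of the letter `(i, ε)`. -/
noncomputable def shL (i : Fin n) (ε : ℤˣ) : KK n E :=
  (fun k => if T.zN k then P.kz k i ε else 0,
   fun j δ => if T.act j δ then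
      (if j = i then (if T.upr i ∧ δ ≠ ε then (ε : ℤ) • P.sq i else 0) else P.kap j δ i ε) else 0,
   fun j => if T.gen j ∧ j = i then (ε : ℤ) else 0)

/-- The weight of `z_k`. -/
noncomputable def shZ (k : ℕ) : KK n E :=
  (0, fun j δ => if T.act j δ then - P.kz k j δ else 0, 0)

/-- The difference between the weights of `z_{i+1}` and `z_i`. -/
noncomputable def shX (i : Fin n) : KK n E :=
  (0, fun j δ => if T.act j δ ∧ j = i then -((δ : ℤ) • P.sq i) else 0, 0)

lemma wt_zero : P.wt T 0 = 0 := by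
  ext <;> simp [wt, own, zet, bet_zero]

variable {T}

lemma wt_zM {k : ℕ} (hk : k ≤ n) (m : Mon n) : P.wt T (m + zM n k) = P.wt T m + P.shZ T k := by
  refine Prod.ext ?_ (Prod.ext ?_ ?_)
  · funext l; simp [wt, shZ, zet_zM]
  · funext j δ
    simp only [wt, shZ, Prod.snd_add, Prod.fst_add, Pi.add_apply]
    split_ifs
    · rw [P.bet_zM j δ m hk]; simp only [zM_snd, add_zero]; abel
    · simp
  · funext l; simp [wt, shZ, zM_snd]

lemma own_of_nonneg {i : Fin n} {δ : ℤˣ} {s : ℤ} (h : 0 ≤ (δ : ℤ) * s) : P.own T i δ s = 0 := by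
  simp [own, not_lt.2 h]

lemma own_of_not {i : Fin n} (h : ¬ T.upr i) (δ : ℤˣ) (s : ℤ) : P.own T i δ s = 0 := by
  simp [own, h]

lemma own_of_upr {i : Fin n} (h : T.upr i) {δ : ℤˣ} {s : ℤ} (hs : (δ : ℤ) * s ≤ 0) :
    P.own T i δ s = s • P.sq i := by
  unfold own
  split_ifs with h'
  · rfl
  · have : (δ : ℤ) * s = 0 := by
      have := not_lt.1 (fun h2 => h' ⟨h, h2⟩)
      omega
    have : s = 0 := by rcases Int.units_eq_one_or δ with rfl | rfl <;> simpa using this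
    simp [this]

lemma units_ne {δ ε : ℤˣ} (h : δ ≠ ε) : δ = -ε := by
  rcases Int.units_eq_one_or δ with rfl | rfl <;> rcases Int.units_eq_one_or ε with rfl | rfl <;>
    simp_all

/-- The components of the weight other than those of the letters `(i, ±1)`, after multiplication by
the letter `(i, ε)`. -/
lemma wt_step (i : Fin n) (ε : ℤˣ) (m m' : Mon n) (x : KK n E)
    (hx1 : x.1 = 0) (hx2 : ∀ j δ, j ≠ i → x.2.1 j δ = 0) (hx3 : x.2.2 = 0)
    (hz : ∀ k, P.zet k m' = P.zet k m + P.kz k i ε)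
    (hs : m'.2 = m.2 + (lM i ε : Mon n).2)
    (hb : ∀ j δ, j ≠ i → P.bet j δ m' = P.bet j δ m + P.kap j δ i ε)
    (hi : ∀ δ, T.act i δ → P.bet i δ m' + P.own T i δ (m'.2 i) = P.bet i δ m + P.own T i δ (m.2 i)
      + (if T.upr i ∧ δ ≠ ε then (ε : ℤ) • P.sq i else 0) + x.2.1 i δ)
    (hx4 : ∀ δ, ¬ T.act i δ → x.2.1 i δ = 0) :
    P.wt T m' = P.wt T m + P.shL T i ε + x := by
  refine Prod.ext ?_ (Prod.ext ?_ ?_)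
  · funext k
    simp only [wt, shL, Prod.fst_add, Pi.add_apply, hx1, hz, Pi.zero_apply]
    split_ifs <;> simp
  · funext j δ
    simp only [wt, shL, Prod.fst_add, Prod.snd_add, Pi.add_apply]
    by_cases hj : j = i
    · subst hj
      by_cases ha : T.act j δ
      · rw [if_pos ha, if_pos ha, if_pos ha, if_pos rfl, hi δ ha]
      · rw [if_neg ha, if_neg ha, if_neg ha, hx4 δ ha]; simp
    · rw [hb j δ hj, hx2 j δ hj, hs, Pi.add_apply, lM_snd_ne hj, if_neg hj]
      split_ifs <;> simp; abel
  · funext j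
    simp only [wt, shL, Prod.snd_add, Pi.add_apply, hx3, hs, Pi.zero_apply]
    by_cases hj : j = i
    · subst hj; rw [lM_snd_self]; split_ifs <;> simp_all
    · rw [lM_snd_ne hj]; split_ifs <;> simp_all

lemma wt_up {i : Fin n} {ε : ℤˣ} {m : Mon n} (h : 0 ≤ (ε : ℤ) * m.2 i) :
    P.wt T (m + lM i ε) = P.wt T m + P.shL T i ε := by
  have := P.wt_step (T := T) i ε m (m + lM i ε) 0 rfl (fun _ _ _ => rfl) rfl
    (fun k => P.zet_lM k i ε m) rfl (fun j δ hj => P.bet_up hj δ ε m h) ?_ (fun _ _ => rfl)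
  · simpa using this
  intro δ _
  rw [P.bet_self]
  simp only [Prod.snd_add, Pi.add_apply, lM_snd_self, Prod.fst_zero, Prod.snd_zero, Pi.zero_apply,
    add_zero]
  have h2 : (ε : ℤ) * (m.2 i + ε) = ε * m.2 i + 1 := by rw [mul_add, coe_mul_self]
  by_cases hδ : δ = ε
  · subst hδ
    rw [P.own_of_nonneg h, P.own_of_nonneg (by omega)]; simp
  · obtain rfl := units_ne hδ
    by_cases hu : T.upr i
    · rw [P.own_of_upr hu (by push_cast; linarith), P.own_of_upr hu (by push_cast; linarith),
        if_pos ⟨hu, hδ⟩, add_smul]; abel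
    · rw [P.own_of_not hu, P.own_of_not hu, if_neg (by tauto)]; abel

/-- For lowering by `(i, ε)`, the exponents of both terms commute in the same way with the other
letters. -/
lemma bet_down_zM {i : Fin n} {ε : ℤˣ} {m : Mon n} (h : (ε : ℤ) * m.2 i < 0) {j : Fin n}
    (hj : j ≠ i) (δ : ℤˣ) (t : Bool) :
    P.bet j δ (m + lM i ε + zM n (if t then i + 1 else i)) = P.bet j δ m + P.kap j δ i ε := by
  have := P.bet_dsp hj δ ε m t
  unfold dsp at this
  rw [if_neg (not_le.2 h)] at this
  rw [← this, add_assoc]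

lemma wt_down {i : Fin n} {ε : ℤˣ} {m : Mon n} (h : (ε : ℤ) * m.2 i < 0) (t : Bool)
    (ht : t = true → ¬ T.zN i ∨ T.gen i) (ht' : t = false → T.zN i.val) (hzz : t = true → T.zN (i.val + 1)) :
    P.wt T (m + lM i ε + zM n (if t then i + 1 else i)) = P.wt T m + P.shL T i ε
      + if t ∧ T.gen i then P.shX T i else 0 := by
  have h2 : (ε : ℤ) * (m.2 i + ε) = ε * m.2 i + 1 := by rw [mul_add, coe_mul_self]
  refine P.wt_step i ε m _ _ ?_ ?_ ?_ ?_ ?_ ?_ ?_ ?_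
  · split_ifs <;> rfl
  · intro j δ hj; split_ifs <;> simp [shX, hj]
  · split_ifs <;> rfl
  · intro k; rw [P.zet_zM, P.zet_lM]
  · funext l; simp [zM_snd]
  · intro j δ hj; exact P.bet_down_zM h hj δ t
  · intro δ ha
    have hin : (if t then i.val + 1 else i.val) ≤ n := by split_ifs <;> omega
    rw [P.bet_zM _ _ _ hin, P.bet_self]
    simp only [Prod.snd_add, Pi.add_apply, lM_snd_self, zM_snd, add_zero]
    cases t
    · have hu : ¬ T.upr i := fun hu => hu.1 (ht' rfl)
      simp [P.own_of_not hu, hu, P.kz_self]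
    · simp only [if_true]
      rw [P.kz_succ]
      by_cases hg : T.gen i
      · have hu : ¬ T.upr i := fun hu => hu.1 hg.1
        simp [P.own_of_not hu, hu, shX, ha, hg]; abel
      · have hu : T.upr i := ⟨by have := ht rfl; tauto, hzz rfl⟩
        by_cases hδ : δ = ε
        · subst hδ
          rw [P.own_of_upr hu (by omega), P.own_of_upr hu (by omega)]
          simp [hg, add_smul]
        · obtain rfl := units_ne hδ
          rw [P.own_of_nonneg (by push_cast; linarith), P.own_of_nonneg (by push_cast; linarith)]
          simp [hg, hu]
  · intro δ ha
    split_ifs <;> simp [shX, ha]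

end WPar

end

/-! ### Evaluation of normalized monomials and the action of the letters on a stratum -/

/-- The value of the `s`-th power of a pair of letters, `w 1` for positive and `w (-1)` for negative
powers. -/
def pw (w : ℤˣ → ℂ) (s : ℤ) : ℂ := w 1 ^ s.toNat * w (-1) ^ (-s).toNat

lemma pw_zero (w : ℤˣ → ℂ) : pw w 0 = 1 := by simp [pw]

lemma pw_up (w : ℤˣ → ℂ) {ε : ℤˣ} {s : ℤ} (h : 0 ≤ (ε : ℤ) * s) : pw w (s + ε) = w ε * pw w s := by
  unfold pw
  rcases Int.units_eq_one_or ε with rfl | rfl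
  · simp at h ⊢
    rw [show (s + 1).toNat = s.toNat + 1 by omega, show (-1 + -s).toNat = 0 by omega,
      show (-s).toNat = 0 by omega, pow_succ]; ring
  · simp at h ⊢
    rw [show (s + -1).toNat = 0 by omega, show (1 + -s).toNat = (-s).toNat + 1 by omega,
      show s.toNat = 0 by omega, pow_succ]; ring

lemma pw_down (w : ℤˣ → ℂ) {ε : ℤˣ} {s : ℤ} (h : (ε : ℤ) * s < 0) :
    pw w s = w (-ε) * pw w (s + ε) := by
  have h2 : (ε : ℤ) * (s + ε) = ε * s + 1 := by rw [mul_add, WPar.coe_mul_self]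
  have := pw_up w (ε := -ε) (s := s + ε) (by push_cast; linarith)
  simpa using this

lemma pw_ne {w : ℤˣ → ℂ} {s : ℤ} (h : ∀ ε : ℤˣ, 0 < (ε : ℤ) * s → w ε ≠ 0) : pw w s ≠ 0 := by
  unfold pw
  rcases lt_trichotomy s 0 with hs | rfl | hs
  · rw [show s.toNat = 0 by omega]; simp [h (-1) (by simpa using hs)]
  · simp
  · rw [show (-s).toNat = 0 by omega]; simp [h 1 (by simpa using hs)]

lemma pw_eq_zero {w : ℤˣ → ℂ} {s : ℤ} {ε : ℤˣ} (h : 0 < (ε : ℤ) * s) (hw : w ε = 0) :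
    pw w s = 0 := by
  have h2 : ((-ε : ℤˣ) : ℤ) * s < 0 := by push_cast; linarith
  rw [pw_down w h2, neg_neg, hw, zero_mul]

/-- The value of the normalized monomial `m`, given values of the `z_k` and of the letters. -/
noncomputable def evx {n : ℕ} (zv : ℕ → ℂ) (w : Fin n → ℤˣ → ℂ) (m : Mon n) : ℂ :=
  (∏ j : Fin n, zv (j.val + 1) ^ m.1 j) * ∏ i, pw (w i) (m.2 i)

section evx

variable {n : ℕ} {zv : ℕ → ℂ} {w : Fin n → ℤˣ → ℂ}

lemma evx_zero : evx zv w 0 = 1 := by simp [evx, pw_zero]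

lemma evx_zM (h0 : zv 0 = 1) {k : ℕ} (hk : k ≤ n) (m : Mon n) :
    evx zv w (m + zM n k) = zv k * evx zv w m := by
  unfold evx
  simp only [Prod.fst_add, Prod.snd_add, Pi.add_apply, WPar.zM_snd, add_zero]
  rw [← mul_assoc]; congr 1
  simp only [pow_add, Finset.prod_mul_distrib]
  rw [mul_comm]; congr 1
  rcases Nat.eq_zero_or_pos k with rfl | hk0
  · simp [zM, h0]
  · rw [Finset.prod_eq_single ⟨k - 1, by omega⟩]
    · simp only [zM]; rw [if_pos (by omega), pow_one]; congr 1; omega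
    · intro b _ hb; simp only [zM]; rw [if_neg, pow_zero]
      intro h; apply hb; ext; simp; omega
    · simp

lemma evx_lM (i : Fin n) (d : ℂ) (m : Mon n) (ε : ℤˣ) (h : pw (w i) (m.2 i + ε) = d * pw (w i) (m.2 i)) :
    evx zv w (m + lM i ε) = d * evx zv w m := by
  unfold evx
  simp only [Prod.fst_add, Prod.snd_add, Pi.add_apply]
  rw [← Finset.mul_prod_erase _ (fun x => pw (w x) (m.2 x + (lM i ε : Mon n).2 x))
      (Finset.mem_univ i),
    ← Finset.mul_prod_erase _ (fun i => pw (w i) (m.2 i)) (Finset.mem_univ i),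
    WPar.lM_snd_self, h]
  rw [Finset.prod_congr (s₁ := Finset.univ.erase i) rfl (g := fun i => pw (w i) (m.2 i))
    (fun j hj => by rw [WPar.lM_snd_ne (Finset.ne_of_mem_erase hj), add_zero])]
  simp [lM]; ring

lemma evx_up {i : Fin n} {ε : ℤˣ} {m : Mon n} (h : 0 ≤ (ε : ℤ) * m.2 i) :
    evx zv w (m + lM i ε) = w i ε * evx zv w m := evx_lM i _ m ε (pw_up _ h)

lemma evx_down {i : Fin n} {ε : ℤˣ} {m : Mon n} (h : (ε : ℤ) * m.2 i < 0) :
    evx zv w m = w i (-ε) * evx zv w (m + lM i ε) := by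
  have h2 : (ε : ℤ) * (m.2 i + ε) = ε * m.2 i + 1 := by rw [mul_add, WPar.coe_mul_self]
  have := evx_up (zv := zv) (w := w) (i := i) (ε := -ε) (m := m + lM i ε)
    (by simp only [Prod.snd_add, Pi.add_apply, WPar.lM_snd_self]; push_cast; linarith)
  rwa [WPar.lM_add_neg] at this

lemma evx_ne {m : Mon n} (h1 : ∀ j : Fin n, m.1 j ≠ 0 → zv (j.val + 1) ≠ 0)
    (h2 : ∀ i (ε : ℤˣ), 0 < (ε : ℤ) * m.2 i → w i ε ≠ 0) : evx zv w m ≠ 0 := by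
  unfold evx
  refine mul_ne_zero (Finset.prod_ne_zero_iff.2 fun j _ => ?_)
    (Finset.prod_ne_zero_iff.2 fun i _ => pw_ne (h2 i))
  by_cases h : m.1 j = 0
  · simp [h]
  · exact pow_ne_zero _ (h1 j h)

lemma evx_eq_zero_z {m : Mon n} {j : Fin n} (h : m.1 j ≠ 0) (h1 : zv (j.val + 1) = 0) :
    evx zv w m = 0 := by
  unfold evx
  rw [Finset.prod_eq_zero (Finset.mem_univ j), zero_mul]
  rw [h1, zero_pow h]

lemma evx_eq_zero_l {m : Mon n} {i : Fin n} {ε : ℤˣ} (h : 0 < (ε : ℤ) * m.2 i) (h1 : w i ε = 0) :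
    evx zv w m = 0 := by
  unfold evx
  rw [Finset.prod_eq_zero (f := fun i => pw (w i) (m.2 i)) (Finset.mem_univ i) (pw_eq_zero h h1),
    mul_zero]

end evx

/-- Values of the `z_k` and of the letters which follow the pattern `T`. -/
structure Val {n : ℕ} (T : Pat n) (zv : ℕ → ℂ) (wv : Fin n → ℤˣ → ℂ) : Prop where
  zero : zv 0 = 1
  z_iff : ∀ k ≤ n, T.zN k ↔ zv k ≠ 0
  rel : ∀ (i : Fin n) (ε : ℤˣ), wv i ε * wv i (-ε) = zv (i.val + 1) - zv i.val
  act_iff : ∀ (i : Fin n) (ε : ℤˣ), ¬ T.zN i.val → ¬ T.zN (i.val + 1) → (T.act i ε ↔ wv i ε ≠ 0)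

open scoped Classical in
/-- The values of the letters, replaced by `1` for generic indices. -/
noncomputable def cvx {n : ℕ} (T : Pat n) (wv : Fin n → ℤˣ → ℂ) (i : Fin n) (ε : ℤˣ) : ℂ :=
  if T.gen i then 1 else wv i ε

namespace Val

variable {n : ℕ} {T : Pat n} {zv : ℕ → ℂ} {wv : Fin n → ℤˣ → ℂ} (H : Val T zv wv)

include H in
lemma z_zero {k : ℕ} (hk : k ≤ n) (h : ¬ T.zN k) : zv k = 0 := by
  by_contra h'; exact h ((H.z_iff k hk).2 h')

include H in
lemma cvx_ne {i : Fin n} {ε : ℤˣ} (h : T.act i ε) : cvx T wv i ε ≠ 0 := by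
  unfold cvx
  split_ifs with hg
  · simp
  · by_cases h1 : T.zN i.val
    · have h2 : ¬ T.zN (i.val + 1) := fun h2 => hg ⟨h1, h2⟩
      have := H.rel i ε
      rw [H.z_zero (by omega) h2] at this
      intro h3; rw [h3] at this
      have := (H.z_iff i (by omega)).1 h1; simp_all
    · by_cases h2 : T.zN (i.val + 1)
      · have := H.rel i ε
        rw [H.z_zero (by omega) h1] at this
        intro h3; rw [h3] at this
        have := (H.z_iff (i + 1) (by omega)).1 h2; simp_all
      · exact (H.act_iff i ε h1 h2).1 h

include H in
lemma cvx_zero {i : Fin n} {ε : ℤˣ} (h : ¬ T.act i ε) : cvx T wv i ε = 0 := by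
  have h1 : ¬ T.zN i.val := fun h1 => h (T.act_left i ε h1)
  have h2 : ¬ T.zN (i.val + 1) := fun h1 => h (T.act_right i ε h1)
  unfold cvx
  rw [if_neg (fun hg => h1 hg.1)]
  by_contra h'; exact h ((H.act_iff i ε h1 h2).2 h')

include H in
lemma ev_bad {m : Mon n} (h : T.bad m) : evx zv (cvx T wv) m = 0 := by
  rcases h with ⟨j, h, h'⟩ | ⟨i, ε, h, h'⟩
  · exact evx_eq_zero_z h (H.z_zero (by omega) h')
  · exact evx_eq_zero_l h (H.cvx_zero h')

include H in
lemma ev_good {m : Mon n} (h : ¬ T.bad m) : evx zv (cvx T wv) m ≠ 0 := by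
  simp only [Pat.bad, not_or, not_exists, not_and, not_not] at h
  exact evx_ne (fun j hj => (H.z_iff _ (by omega)).1 (h.1 j hj)) (fun i ε hi => H.cvx_ne (h.2 i ε hi))

end Val

namespace WPar

variable {n : ℕ} {E : Type} [AddCommGroup E] (P : WPar n E) {T : Pat n}

/-- On a stratum, multiplication by a letter is monomial, with coefficient determined by the weight,
except when a generic index is lowered. -/
lemma opL_mono (i : Fin n) (ε : ℤˣ) (m : Mon n) (h : ¬ T.gen i ∨ 0 ≤ (ε : ℤ) * m.2 i) :
    ∃ (t : ℂ) (m' : Mon n),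
      (∀ φ : E → ℂ, P.opL φ i ε (Finsupp.single m 1)
        - φ ((P.wt T m).2.1 i ε) • Finsupp.single m' t ∈ T.NN) ∧
      (t = 0 ∨ T.act i ε ∧ P.wt T m' = P.wt T m + P.shL T i ε) ∧
      ∀ zv wv, Val T zv wv →
        t * evx zv (cvx T wv) m' = cvx T wv i ε * evx zv (cvx T wv) m := by
  have hbz : ¬ T.zN i.val → ∀ m, T.bad (m + zM n i.val) := fun h m => T.bad_zM (by omega) h m
  have hbz' : ¬ T.zN (i.val + 1) → ∀ m, T.bad (m + zM n (i.val + 1)) :=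
    fun h m => T.bad_zM (by omega) h m
  by_cases hact : T.act i ε
  swap
  · have h1 : ¬ T.zN i.val := fun h1 => hact (T.act_left i ε h1)
    have h2 : ¬ T.zN (i.val + 1) := fun h1 => hact (T.act_right i ε h1)
    refine ⟨0, m, fun φ => ?_, Or.inl rfl, fun zv wv H => by simp [H.cvx_zero hact]⟩
    rw [Finsupp.single_zero, smul_zero, sub_zero]
    by_cases hs : 0 ≤ (ε : ℤ) * m.2 i
    · rw [P.opL_up φ hs]
      refine T.single_mem_NN (Or.inr ⟨i, ε, ?_, hact⟩) _
      simp only [Prod.snd_add, Pi.add_apply, lM_snd_self, mul_add, coe_mul_self]; positivity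
    · rw [P.opL_down φ (not_le.1 hs)]
      exact sub_mem (T.single_mem_NN (hbz' h2 _) _) (T.single_mem_NN (hbz h1 _) _)
  have hγ : (P.wt T m).2.1 i ε = P.bet i ε m + P.own T i ε (m.2 i) := by simp [wt, hact]
  by_cases hs : 0 ≤ (ε : ℤ) * m.2 i
  · refine ⟨1, m + lM i ε, fun φ => ?_, Or.inr ⟨hact, P.wt_up hs⟩, fun zv wv H => ?_⟩
    · rw [hγ, P.own_of_nonneg hs, P.opL_up φ hs]; simp
    · rw [evx_up hs]; simp
  rw [not_le] at hs
  have hg : ¬ T.gen i := by rcases h with h | h; exacts [h, absurd h (not_le.2 hs)]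
  by_cases h1 : T.zN i.val
  · have h2 : ¬ T.zN (i.val + 1) := fun h2 => hg ⟨h1, h2⟩
    refine ⟨-1, m + lM i ε + zM n i, fun φ => ?_, Or.inr ⟨hact, ?_⟩, fun zv wv H => ?_⟩
    · rw [hγ, P.own_of_not (fun hu => hu.1 h1), P.opL_down φ hs]
      have := T.single_mem_NN (hbz' h2 (m + lM i ε)) (1 * φ (P.bet i ε m + m.2 i • P.sq i))
      convert this using 1
      simp
    · simpa [hg] using P.wt_down hs false (by simp) (fun _ => h1) (by simp)
    · rw [evx_zM H.zero (by omega), evx_down (m := m) hs]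
      have := H.rel i ε
      rw [H.z_zero (by omega) h2] at this
      simp only [cvx, if_neg hg]
      linear_combination (-(evx zv (cvx T wv) (m + lM i ε))) * this
  · by_cases h2 : T.zN (i.val + 1)
    · refine ⟨1, m + lM i ε + zM n (i + 1), fun φ => ?_, Or.inr ⟨hact, ?_⟩, fun zv wv H => ?_⟩
      · rw [hγ, P.own_of_upr ⟨h1, h2⟩ hs.le, P.opL_down φ hs]
        have := neg_mem (T.single_mem_NN (hbz h1 (m + lM i ε)) (1 * φ (P.bet i ε m)))
        convert this using 1
        simp
      · simpa [hg] using P.wt_down hs true (fun _ => Or.inl h1) (by simp) (fun _ => h2)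
      · rw [evx_zM H.zero (by omega), evx_down (m := m) hs]
        have := H.rel i ε
        rw [H.z_zero (by omega) h1] at this
        simp only [cvx, if_neg hg]
        linear_combination (-(evx zv (cvx T wv) (m + lM i ε))) * this
    · refine ⟨0, m, fun φ => ?_, Or.inl rfl, fun zv wv H => ?_⟩
      · rw [P.opL_down φ hs, Finsupp.single_zero, smul_zero, sub_zero]
        exact sub_mem (T.single_mem_NN (hbz' h2 _) _) (T.single_mem_NN (hbz h1 _) _)
      · rw [H.ev_bad (m := m)]
        · simp
        · exact Or.inr ⟨i, -ε, by push_cast; linarith, T.not_both i ε h1 h2 hact⟩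

lemma wt_gen {i : Fin n} (hg : T.gen i) (ε : ℤˣ) (m : Mon n) :
    (P.wt T m).2.1 i ε = P.bet i ε m := by
  simp [wt, T.act_left i ε hg.1, P.own_of_not (fun hu : T.upr i => hu.1 hg.1)]

lemma wt_gen_s {i : Fin n} (hg : T.gen i) (m : Mon n) : (P.wt T m).2.2 i = m.2 i := by
  simp [wt, hg]

lemma wt_z {k : ℕ} (hk : T.zN k) (m : Mon n) : (P.wt T m).1 k = P.zet k m := by
  simp [wt, hk]

lemma wt_gen_down {i : Fin n} (hg : T.gen i) {ε : ℤˣ} {m : Mon n} (h : (ε : ℤ) * m.2 i < 0) :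
    P.wt T (m + lM i ε + zM n (i + 1)) = P.wt T m + P.shL T i ε + P.shX T i ∧
    P.wt T (m + lM i ε + zM n i) = P.wt T m + P.shL T i ε := by
  constructor
  · simpa [hg] using P.wt_down h true (fun _ => Or.inr hg) (by simp) (fun _ => hg.2)
  · simpa [hg] using P.wt_down (T := T) h false (by simp) (fun _ => hg.1) (by simp)

lemma ev_gen_down {zv : ℕ → ℂ} {wv : Fin n → ℤˣ → ℂ} (H : Val T zv wv) {i : Fin n} (hg : T.gen i)
    {ε : ℤˣ} {m : Mon n} (h : (ε : ℤ) * m.2 i < 0) :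
    evx zv (cvx T wv) (m + lM i ε + zM n (i + 1)) = zv (i + 1) * evx zv (cvx T wv) m ∧
    evx zv (cvx T wv) (m + lM i ε + zM n i) = zv i * evx zv (cvx T wv) m := by
  rw [evx_zM H.zero (by omega), evx_zM H.zero (by omega), evx_down (m := m) h]
  simp [cvx, hg]

end WPar

/-! ### The weight-graded quotient attached to a point -/

section

open scoped Classical

/-- A pair of functions separating points projectively. -/
def SepPair {E : Type} (φ₁ φ₂ : E → ℂ) : Prop := ∀ C C', C ≠ C' → φ₁ C * φ₂ C' ≠ φ₂ C * φ₁ C'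

/-- Along an element of minimal support of a subspace, operators which shift the weights and whose
coefficients are given by a separating pair have constant eigenvalue. -/
lemma min_sep {K E : Type} [AddCommGroup K] {φ₁ φ₂ : E → ℂ} (hsep : SepPair φ₁ φ₂)
    (J : Submodule ℂ (K →₀ ℂ)) {f : K →₀ ℂ} (hf : f ∈ J)
    (hmin : ∀ g ∈ J, g ≠ 0 → f.support.card ≤ g.support.card)
    (T₁ T₂ : (K →₀ ℂ) →ₗ[ℂ] (K →₀ ℂ)) (h₁ : ∀ g ∈ J, T₁ g ∈ J) (h₂ : ∀ g ∈ J, T₂ g ∈ J)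
    (σ : K) (γ : K → E) (d : ℂ) (hd : d ≠ 0)
    (e₁ : ∀ κ ∈ f.support, T₁ (Finsupp.single κ 1) = Finsupp.single (κ + σ) (d * φ₁ (γ κ)))
    (e₂ : ∀ κ ∈ f.support, T₂ (Finsupp.single κ 1) = Finsupp.single (κ + σ) (d * φ₂ (γ κ)))
    {κ₀ κ₁ : K} (hκ₀ : κ₀ ∈ f.support) (hκ₁ : κ₁ ∈ f.support) : γ κ₀ = γ κ₁ := by
  by_contra hne
  set g := φ₁ (γ κ₀) • T₂ f - φ₂ (γ κ₀) • T₁ f with hg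
  have hgJ : g ∈ J := sub_mem (J.smul_mem _ (h₂ f hf)) (J.smul_mem _ (h₁ f hf))
  have hfs : f = ∑ κ ∈ f.support, f κ • Finsupp.single κ 1 := by
    conv_lhs => rw [← Finsupp.sum_single f]
    simp [Finsupp.sum]
  have key : g = ∑ κ ∈ f.support, Finsupp.single (κ + σ)
      (f κ * d * (φ₁ (γ κ₀) * φ₂ (γ κ) - φ₂ (γ κ₀) * φ₁ (γ κ))) := by
    rw [hg]
    conv_lhs => rw [hfs]
    simp only [map_sum, map_smul, Finset.smul_sum, ← Finset.sum_sub_distrib]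
    refine Finset.sum_congr rfl fun κ hκ => ?_
    rw [e₁ κ hκ, e₂ κ hκ]
    simp only [Finsupp.smul_single, ← Finsupp.single_sub, smul_eq_mul]
    congr 1; ring
  have hsub : g.support ⊆ (f.support.erase κ₀).image (· + σ) := by
    intro x hx
    rw [key, Finsupp.mem_support_iff, Finsupp.finsetSum_apply] at hx
    obtain ⟨κ, hκ, hx⟩ := Finset.exists_ne_zero_of_sum_ne_zero hx
    rw [Finsupp.single_apply] at hx
    split_ifs at hx with hx'
    · refine Finset.mem_image.2 ⟨κ, Finset.mem_erase.2 ⟨?_, hκ⟩, hx'⟩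
      rintro rfl; apply hx; ring
    · exact absurd rfl hx
  have hg0 : g ≠ 0 := by
    intro h0
    have : g (κ₁ + σ) = 0 := by rw [h0]; rfl
    rw [key, Finsupp.finsetSum_apply, Finset.sum_eq_single κ₁] at this
    · rw [Finsupp.single_eq_same] at this
      have h3 := hsep _ _ hne
      rcases mul_eq_zero.1 this with h | h
      · exact mul_ne_zero (Finsupp.mem_support_iff.1 hκ₁) hd h
      · exact h3 (sub_eq_zero.1 h)
    · intro b _ hb; rw [Finsupp.single_apply, if_neg (fun h => hb (add_right_cancel h))]
    · exact fun h => absurd hκ₁ h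
  have h3 := hmin g hgJ hg0
  have h4 := (Finset.card_le_card hsub).trans Finset.card_image_le
  have h5 := Finset.card_erase_lt_of_mem hκ₀
  omega

namespace WPar

variable {n : ℕ} {E : Type} [AddCommGroup E] (P : WPar n E) (T : Pat n) (zv : ℕ → ℂ)
  (wv : Fin n → ℤˣ → ℂ)

/-- The projection of the space of normalized monomials to the weight-graded quotient attached to
a point with pattern `T` and values `zv`, `wv`. -/
noncomputable def Ev : VV n →ₗ[ℂ] (KK n E →₀ ℂ) :=
  Finsupp.linearCombination ℂ (fun m => Finsupp.single (P.wt T m) (evx zv (cvx T wv) m))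

/-- The operators induced by `WPar.opL` on the weight-graded quotient. -/
noncomputable def barL (φ : E → ℂ) (i : Fin n) (ε : ℤˣ) : (KK n E →₀ ℂ) →ₗ[ℂ] (KK n E →₀ ℂ) :=
  Finsupp.linearCombination ℂ (fun κ =>
    if ¬ T.gen i ∨ 0 ≤ (ε : ℤ) * κ.2.2 i then
      Finsupp.single (κ + P.shL T i ε) (cvx T wv i ε * φ (κ.2.1 i ε))
    else Finsupp.single (κ + P.shL T i ε + P.shX T i)
        (zv (i + 1) * φ (κ.2.1 i ε + κ.2.2 i • P.sq i))
      - Finsupp.single (κ + P.shL T i ε) (zv i * φ (κ.2.1 i ε)))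

/-- The operators induced by `WPar.opZ` on the weight-graded quotient. -/
noncomputable def barZ (φ : E → ℂ) (k : ℕ) : (KK n E →₀ ℂ) →ₗ[ℂ] (KK n E →₀ ℂ) :=
  Finsupp.linearCombination ℂ (fun κ => Finsupp.single (κ + P.shZ T k) (zv k * φ (κ.1 k)))

lemma Ev_single (m : Mon n) (c : ℂ) :
    P.Ev T zv wv (Finsupp.single m c) = Finsupp.single (P.wt T m) (c * evx zv (cvx T wv) m) := by
  simp [Ev]

variable {T zv wv} (H : Val T zv wv)

include H in
lemma Ev_NN {v : VV n} (hv : v ∈ T.NN) : P.Ev T zv wv v = 0 := by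
  unfold Ev
  rw [Finsupp.linearCombination_apply, Finsupp.sum]
  refine Finset.sum_eq_zero fun m hm => ?_
  have : T.bad m := hv hm
  rw [H.ev_bad this]; simp

include H in
lemma Ev_opL (φ : E → ℂ) (i : Fin n) (ε : ℤˣ) (v : VV n) :
    P.Ev T zv wv (P.opL φ i ε v) = P.barL T zv wv φ i ε (P.Ev T zv wv v) := by
  suffices h : P.Ev T zv wv ∘ₗ P.opL φ i ε = P.barL T zv wv φ i ε ∘ₗ P.Ev T zv wv from
    LinearMap.congr_fun h v
  refine vext fun m => ?_
  simp only [LinearMap.comp_apply, Ev_single, one_mul]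
  rw [barL, Finsupp.linearCombination_single]
  by_cases hg : ¬ T.gen i ∨ 0 ≤ (ε : ℤ) * m.2 i
  · have hg' : ¬ T.gen i ∨ 0 ≤ (ε : ℤ) * (P.wt T m).2.2 i := by
      by_cases h : T.gen i
      · rwa [P.wt_gen_s h]
      · exact Or.inl h
    rw [if_pos hg']
    obtain ⟨t, m', h1, h2, h3⟩ := P.opL_mono i ε m hg
    have := P.Ev_NN H (h1 φ)
    rw [map_sub, sub_eq_zero] at this
    rw [this, map_smul, Ev_single, h3 zv wv H, Finsupp.smul_single, Finsupp.smul_single]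
    rcases h2 with h2 | ⟨-, h2⟩
    · have : cvx T wv i ε * evx zv (cvx T wv) m = 0 := by rw [← h3 zv wv H, h2, zero_mul]
      rw [this, smul_zero, smul_eq_mul, show evx zv (cvx T wv) m * (cvx T wv i ε * φ ((P.wt T m).2.1 i ε))
        = (cvx T wv i ε * evx zv (cvx T wv) m) * φ ((P.wt T m).2.1 i ε) by ring, this]
      simp
    · rw [h2]; congr 1; simp only [smul_eq_mul]; ring
  · push Not at hg
    have hd := hg.2
    have hg' : ¬ (¬ T.gen i ∨ 0 ≤ (ε : ℤ) * (P.wt T m).2.2 i) := by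
      push Not; rwa [P.wt_gen_s hg.1]
    rw [if_neg hg', P.opL_down φ hd, map_sub, Ev_single, Ev_single]
    rw [(P.wt_gen_down hg.1 hd).1, (P.wt_gen_down hg.1 hd).2, (ev_gen_down H hg.1 hd).1,
      (ev_gen_down H hg.1 hd).2, P.wt_gen hg.1, P.wt_gen_s hg.1, smul_sub, Finsupp.smul_single,
      Finsupp.smul_single]
    congr 2 <;> simp only [smul_eq_mul] <;> ring

include H in
lemma Ev_opZ (φ : E → ℂ) {k : ℕ} (hk : k ≤ n) (v : VV n) :
    P.Ev T zv wv (P.opZ φ k v) = P.barZ T zv φ k (P.Ev T zv wv v) := by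
  suffices h : P.Ev T zv wv ∘ₗ P.opZ φ k = P.barZ T zv φ k ∘ₗ P.Ev T zv wv from
    LinearMap.congr_fun h v
  refine vext fun m => ?_
  simp only [LinearMap.comp_apply, Ev_single, one_mul]
  rw [barZ, Finsupp.linearCombination_single, opZ_single, Ev_single, evx_zM H.zero hk, P.wt_zM hk,
    Finsupp.smul_single, smul_eq_mul]
  by_cases hz : T.zN k
  · rw [P.wt_z hz]; congr 1; ring
  · rw [H.z_zero hk hz]; simp

lemma barL_single (φ : E → ℂ) {i : Fin n} {ε : ℤˣ} {κ : KK n E}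
    (h : ¬ T.gen i ∨ 0 ≤ (ε : ℤ) * κ.2.2 i) :
    P.barL T zv wv φ i ε (Finsupp.single κ 1)
      = Finsupp.single (κ + P.shL T i ε) (cvx T wv i ε * φ (κ.2.1 i ε)) := by
  simp only [barL, Finsupp.linearCombination_single, one_smul]
  rw [if_pos h]

lemma barL_single_down (φ : E → ℂ) {i : Fin n} {ε : ℤˣ} {κ : KK n E}
    (h : T.gen i) (h' : (ε : ℤ) * κ.2.2 i < 0) :
    P.barL T zv wv φ i ε (Finsupp.single κ 1)
      = Finsupp.single (κ + P.shL T i ε + P.shX T i)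
        (zv (i + 1) * φ (κ.2.1 i ε + κ.2.2 i • P.sq i))
      - Finsupp.single (κ + P.shL T i ε) (zv i * φ (κ.2.1 i ε)) := by
  simp only [barL, Finsupp.linearCombination_single, one_smul]
  rw [if_neg]
  push Not; exact ⟨h, h'⟩

lemma barZ_single (φ : E → ℂ) (k : ℕ) (κ : KK n E) :
    P.barZ T zv φ k (Finsupp.single κ 1) = Finsupp.single (κ + P.shZ T k) (zv k * φ (κ.1 k)) := by
  simp [barZ]

lemma Ev_support (v : VV n) {κ : KK n E} (h : κ ∈ (P.Ev T zv wv v).support) :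
    ∃ m, evx zv (cvx T wv) m ≠ 0 ∧ P.wt T m = κ := by
  unfold Ev at h
  rw [Finsupp.linearCombination_apply, Finsupp.sum, Finsupp.mem_support_iff,
    Finsupp.finsetSum_apply] at h
  obtain ⟨m, -, h⟩ := Finset.exists_ne_zero_of_sum_ne_zero h
  rw [Finsupp.smul_single, Finsupp.single_apply] at h
  split_ifs at h with h'
  · exact ⟨m, fun h0 => h (by rw [h0, smul_zero]), h'⟩
  · exact absurd rfl h

/-- The weight of a monomial is determined by the eigenvalues of the `z_k` and of those letters
which act on it in a monomial way. -/
lemma wt_ext (hsq : ∀ i (s : ℤ), s ≠ 0 → s • P.sq i ≠ 0) {m m' : Mon n}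
    (hz : ∀ k, T.zN k → (P.wt T m).1 k = (P.wt T m').1 k)
    (hl : ∀ i ε, T.act i ε → (¬ T.gen i ∨ 0 ≤ (ε : ℤ) * m.2 i) →
      (P.wt T m).2.1 i ε = (P.wt T m').2.1 i ε) : P.wt T m = P.wt T m' := by
  have hz' : ∀ k, T.zN k → P.zet k m = P.zet k m' := by
    intro k h1
    have := hz k h1
    rwa [P.wt_z h1, P.wt_z h1] at this
  have hs : ∀ i, T.gen i → m.2 i = m'.2 i := by
    intro i hg
    have h1 := hz' _ hg.1
    have h2 := hz' _ hg.2
    rw [P.zet_succ, P.zet_succ, h1, add_right_inj, ← sub_eq_zero, ← sub_smul] at h2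
    by_contra hne
    exact hsq i _ (sub_ne_zero.2 hne) h2
  refine Prod.ext ?_ (Prod.ext ?_ ?_)
  · funext k
    by_cases hk : T.zN k
    · exact hz k hk
    · simp [wt, hk]
  · funext i ε
    by_cases ha : T.act i ε
    · by_cases hg : ¬ T.gen i ∨ 0 ≤ (ε : ℤ) * m.2 i
      · exact hl i ε ha hg
      · push Not at hg
        have h2 := hl i (-ε) (T.act_left _ _ hg.1.1)
          (Or.inr (by push_cast; linarith [hg.2]))
        rw [P.wt_gen hg.1, P.wt_gen hg.1] at h2 ⊢
        have h3 := P.bet_add_bet i ε m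
        have h4 := P.bet_add_bet i ε m'
        rw [hz' _ hg.1.1, ← h4, h2] at h3
        exact add_right_cancel h3
    · simp [wt, ha]
  · funext i
    simp only [wt]
    split_ifs with hg
    · exact hs i hg
    · rfl

/-- A subspace stable under the operators of a separating pair and not killed by `WPar.Ev` contains,
modulo the kernel of `WPar.Ev`, a single monomial which is nonzero at the point and does not involve
the letters of generic indices. -/
theorem exists_single {φ₁ φ₂ : E → ℂ} (hsep : SepPair φ₁ φ₂)
    (hsq : ∀ i (s : ℤ), s ≠ 0 → s • P.sq i ≠ 0) (H : Val T zv wv) (I : Submodule ℂ (VV n))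
    (hL₁ : ∀ i ε, ∀ v ∈ I, P.opL φ₁ i ε v ∈ I) (hL₂ : ∀ i ε, ∀ v ∈ I, P.opL φ₂ i ε v ∈ I)
    (hZ₁ : ∀ k ≤ n, ∀ v ∈ I, P.opZ φ₁ k v ∈ I) (hZ₂ : ∀ k ≤ n, ∀ v ∈ I, P.opZ φ₂ k v ∈ I)
    (hI : ¬ I ≤ LinearMap.ker (P.Ev T zv wv)) :
    ∃ m, ¬ T.bad m ∧ (∀ i, T.gen i → m.2 i = 0) ∧
      Finsupp.single m 1 ∈ I ⊔ LinearMap.ker (P.Ev T zv wv) := by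
  set J := I.map (P.Ev T zv wv) with hJ
  have hgood : ∀ m, evx zv (cvx T wv) m ≠ 0 → ¬ T.bad m := fun m h hb => h (H.ev_bad hb)
  have jL : ∀ φ : E → ℂ, (∀ i ε, ∀ v ∈ I, P.opL φ i ε v ∈ I) → ∀ i ε, ∀ g ∈ J,
      P.barL T zv wv φ i ε g ∈ J := by
    rintro φ h i ε _ ⟨v, hv, rfl⟩
    exact ⟨_, h i ε v hv, P.Ev_opL H φ i ε v⟩
  have jZ : ∀ φ : E → ℂ, (∀ k ≤ n, ∀ v ∈ I, P.opZ φ k v ∈ I) → ∀ k ≤ n, ∀ g ∈ J,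
      P.barZ T zv φ k g ∈ J := by
    rintro φ h k hk _ ⟨v, hv, rfl⟩
    exact ⟨_, h k hk v hv, P.Ev_opZ H φ hk v⟩
  -- an element of `J` of minimal support
  have hex : ∃ c, ∃ f ∈ J, f ≠ 0 ∧ f.support.card = c := by
    rw [SetLike.not_le_iff_exists] at hI
    obtain ⟨v, hv, hv'⟩ := hI
    exact ⟨_, P.Ev T zv wv v, ⟨v, hv, rfl⟩, hv', rfl⟩
  obtain ⟨f, hf, hf0, hfc⟩ := Nat.find_spec hex
  have hmin : ∀ g ∈ J, g ≠ 0 → f.support.card ≤ g.support.card := by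
    intro g hg hg0
    rw [hfc]; exact Nat.find_min' hex ⟨g, hg, hg0, rfl⟩
  have hsupp : ∀ κ ∈ f.support, ∃ m, evx zv (cvx T wv) m ≠ 0 ∧ P.wt T m = κ := by
    obtain ⟨v, -, rfl⟩ := hf
    exact fun κ hκ => P.Ev_support v hκ
  have hone : ∀ κ₀ ∈ f.support, ∀ κ₁ ∈ f.support, κ₀ = κ₁ := by
    have hzc : ∀ κ₀ ∈ f.support, ∀ κ₁ ∈ f.support, ∀ k, T.zN k → κ₀.1 k = κ₁.1 k := by
      intro κ₀ h₀ κ₁ h₁ k hk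
      have hkn := T.zN_le k hk
      exact min_sep hsep J hf hmin (P.barZ T zv φ₁ k) (P.barZ T zv φ₂ k) (jZ φ₁ hZ₁ k hkn)
        (jZ φ₂ hZ₂ k hkn) (P.shZ T k) (fun κ => κ.1 k) (zv k) ((H.z_iff k hkn).1 hk)
        (fun κ _ => P.barZ_single φ₁ k κ) (fun κ _ => P.barZ_single φ₂ k κ) h₀ h₁
    have hsc : ∀ κ₀ ∈ f.support, ∀ κ₁ ∈ f.support, ∀ i, T.gen i → κ₀.2.2 i = κ₁.2.2 i := by
      intro κ₀ h₀ κ₁ h₁ i hg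
      have e1 := hzc κ₀ h₀ κ₁ h₁ _ hg.1
      have e2 := hzc κ₀ h₀ κ₁ h₁ _ hg.2
      obtain ⟨m₀, -, rfl⟩ := hsupp κ₀ h₀
      obtain ⟨m₁, -, rfl⟩ := hsupp κ₁ h₁
      rw [P.wt_gen_s hg, P.wt_gen_s hg]
      rw [P.wt_z hg.1, P.wt_z hg.1] at e1
      rw [P.wt_z hg.2, P.wt_z hg.2, P.zet_succ, P.zet_succ, e1, add_right_inj, ← sub_eq_zero,
        ← sub_smul] at e2
      by_contra hne
      exact hsq i _ (sub_ne_zero.2 hne) e2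
    intro κ₀ h₀ κ₁ h₁
    have hzz := hzc κ₀ h₀ κ₁ h₁
    obtain ⟨m₀, -, hm₀⟩ := hsupp κ₀ h₀
    obtain ⟨m₁, -, hm₁⟩ := hsupp κ₁ h₁
    rw [← hm₀, ← hm₁]
    refine P.wt_ext hsq (fun k hk => by rw [hm₀, hm₁]; exact hzz k hk) fun i ε ha hg => ?_
    have hall : ∀ κ ∈ f.support, ¬ T.gen i ∨ 0 ≤ (ε : ℤ) * κ.2.2 i := by
      intro κ hκ
      by_cases h : T.gen i
      · right
        rw [← hsc κ₀ h₀ κ hκ i h, ← hm₀, P.wt_gen_s h]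
        tauto
      · exact Or.inl h
    rw [hm₀, hm₁]
    exact min_sep hsep J hf hmin (P.barL T zv wv φ₁ i ε) (P.barL T zv wv φ₂ i ε)
      (jL φ₁ hL₁ i ε) (jL φ₂ hL₂ i ε) (P.shL T i ε) (fun κ => κ.2.1 i ε) (cvx T wv i ε)
      (H.cvx_ne ha) (fun κ hκ => P.barL_single φ₁ (hall κ hκ))
      (fun κ hκ => P.barL_single φ₂ (hall κ hκ)) h₀ h₁
  -- hence a monomial lies in `J`
  obtain ⟨κ, hκ⟩ := Finsupp.support_nonempty_iff.2 hf0
  obtain ⟨m, hm, rfl⟩ := hsupp κ hκ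
  have hfm : Finsupp.single (P.wt T m) (1 : ℂ) ∈ J := by
    have : f = f (P.wt T m) • Finsupp.single (P.wt T m) (1 : ℂ) := by
      rw [Finsupp.smul_single, smul_eq_mul, mul_one]
      exact (Finsupp.support_subset_singleton.1
        (fun κ' h => Finset.mem_singleton.2 (hone κ' h _ hκ)))
    rw [this] at hf
    exact (J.smul_mem_iff (Finsupp.mem_support_iff.1 hκ)).1 hf
  -- the generic letters are removed by lowering
  have hlow : ∀ (N : ℕ) (m : Mon n), evx zv (cvx T wv) m ≠ 0 →
      Finsupp.single (P.wt T m) (1 : ℂ) ∈ J → ∑ i, (if T.gen i then (m.2 i).natAbs else 0) = N →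
      ∃ m, evx zv (cvx T wv) m ≠ 0 ∧ Finsupp.single (P.wt T m) (1 : ℂ) ∈ J ∧
        ∀ i, T.gen i → m.2 i = 0 := by
    intro N
    induction N using Nat.strong_induction_on with
    | _ N ih =>
    intro m hm hmJ hN
    by_cases hall : ∀ i, T.gen i → m.2 i = 0
    · exact ⟨m, hm, hmJ, hall⟩
    push Not at hall
    obtain ⟨i, hg, hi⟩ := hall
    obtain ⟨ε, hε⟩ : ∃ ε : ℤˣ, (ε : ℤ) * m.2 i < 0 := by
      rcases lt_or_gt_of_ne hi with h | h
      · exact ⟨1, by simpa using h⟩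
      · exact ⟨-1, by simpa using h⟩
    have hε' : (ε : ℤ) * (P.wt T m).2.2 i < 0 := by rwa [P.wt_gen_s hg]
    set γ := (P.wt T m).2.1 i ε
    have h1 := jL φ₁ hL₁ i ε _ hmJ
    have h2 := jL φ₂ hL₂ i ε _ hmJ
    rw [P.barL_single_down _ hg hε'] at h1 h2
    have h3 := sub_mem (J.smul_mem (φ₁ γ) h2) (J.smul_mem (φ₂ γ) h1)
    rw [P.wt_gen_s hg] at h3
    have h4 : φ₁ γ • (Finsupp.single (P.wt T m + P.shL T i ε + P.shX T i)
          (zv (i + 1) * φ₂ (γ + m.2 i • P.sq i))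
          - Finsupp.single (P.wt T m + P.shL T i ε) (zv i * φ₂ γ))
        - φ₂ γ • (Finsupp.single (P.wt T m + P.shL T i ε + P.shX T i)
          (zv (i + 1) * φ₁ (γ + m.2 i • P.sq i))
          - Finsupp.single (P.wt T m + P.shL T i ε) (zv i * φ₁ γ))
        = (zv (i + 1) * (φ₁ γ * φ₂ (γ + m.2 i • P.sq i) - φ₂ γ * φ₁ (γ + m.2 i • P.sq i))) •
          Finsupp.single (P.wt T (m + lM i ε + zM n (i + 1))) (1 : ℂ) := by
      rw [(P.wt_gen_down hg hε).1]
      simp only [smul_sub, Finsupp.smul_single, smul_eq_mul, mul_one]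
      have e1 : φ₂ γ * (zv i * φ₁ γ) = φ₁ γ * (zv i * φ₂ γ) := by ring
      rw [e1, sub_sub_sub_cancel_right, ← Finsupp.single_sub]
      congr 1; ring
    rw [h4] at h3
    have hz1 : zv (i.val + 1) ≠ 0 := (H.z_iff _ (by omega)).1 hg.2
    have h5 : zv (i + 1) * (φ₁ γ * φ₂ (γ + m.2 i • P.sq i) - φ₂ γ * φ₁ (γ + m.2 i • P.sq i)) ≠ 0 := by
      refine mul_ne_zero hz1 (sub_ne_zero.2 (hsep _ _ ?_))
      intro h; exact hsq i _ hi (left_eq_add.1 h)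
    refine ih _ ?_ _ ?_ ((J.smul_mem_iff h5).1 h3) rfl
    · rw [← hN]
      refine Finset.sum_lt_sum (fun j _ => ?_) ⟨i, Finset.mem_univ i, ?_⟩
      · by_cases hj : j = i
        · subst hj
          simp only [Prod.snd_add, Pi.add_apply, lM_snd_self, zM_snd, if_pos hg]
          rcases Int.units_eq_one_or ε with rfl | rfl <;> simp at hε ⊢ <;> omega
        · simp [lM_snd_ne hj, zM_snd]
      · simp only [Prod.snd_add, Pi.add_apply, lM_snd_self, zM_snd, if_pos hg]
        rcases Int.units_eq_one_or ε with rfl | rfl <;> simp at hε ⊢ <;> omega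
    · rw [(ev_gen_down H hg hε).1]; exact mul_ne_zero hz1 hm
  obtain ⟨m, hm, hmJ, hg⟩ := hlow _ m hm hfm rfl
  refine ⟨m, hgood m hm, hg, ?_⟩
  obtain ⟨v, hv, hv'⟩ := hmJ
  have : Finsupp.single m 1 = evx zv (cvx T wv) m • v
      + (Finsupp.single m 1 - evx zv (cvx T wv) m • v) := by abel
  rw [this]
  refine Submodule.add_mem_sup (I.smul_mem _ hv) ?_
  rw [LinearMap.mem_ker, map_sub, map_smul, hv', Ev_single]
  simp

end WPar

end

/-! ### Points of affine space and Poisson cores -/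

section Points

variable {n : ℕ} (p : Fin n ⊕ Fin n → ℂ)

/-- The value of `z_k` at a point. -/
noncomputable def ptz (k : ℕ) : ℂ := MvPolynomial.aeval p (zP n k)

/-- The value of the letter `(i, ε)` at a point. -/
noncomputable def ptw (i : Fin n) (ε : ℤˣ) : ℂ :=
  MvPolynomial.aeval p (agen i ε : MvPolynomial (Fin n ⊕ Fin n) ℂ)

lemma ptz_zero : ptz p 0 = 1 := by simp [ptz, zP]

lemma pt_rel (i : Fin n) (ε : ℤˣ) :
    ptw p i ε * ptw p i (-ε) = ptz p (i.val + 1) - ptz p i.val := by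
  have h : ptw p i 1 * ptw p i (-1) = ptz p (i.val + 1) - ptz p i.val := by
    unfold ptw ptz
    rw [zP_succ, map_add, agen_one, agen_neg, map_mul]; ring
  rcases Int.units_eq_one_or ε with rfl | rfl
  · exact h
  · rw [neg_neg, mul_comm, h]

/-- The vanishing pattern of a point. -/
noncomputable def ptPat : Pat n where
  zN k := k ≤ n ∧ ptz p k ≠ 0
  act i ε := (i.val ≤ n ∧ ptz p i.val ≠ 0) ∨ (i.val + 1 ≤ n ∧ ptz p (i.val + 1) ≠ 0) ∨ ptw p i ε ≠ 0
  zN_zero := ⟨Nat.zero_le _, by rw [ptz_zero]; exact one_ne_zero⟩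
  zN_le k h := h.1
  act_left i ε h := Or.inl h
  act_right i ε h := Or.inr (Or.inl h)
  not_both i ε h1 h2 h3 h4 := by
    have e1 : ptw p i ε ≠ 0 := by tauto
    have e2 : ptw p i (-ε) ≠ 0 := by tauto
    have := pt_rel p i ε
    have z1 : ptz p i.val = 0 := by by_contra h; exact h1 ⟨by omega, h⟩
    have z2 : ptz p (i.val + 1) = 0 := by by_contra h; exact h2 ⟨by omega, h⟩
    rw [z1, z2, sub_zero] at this
    exact mul_ne_zero e1 e2 this

lemma ptVal : Val (ptPat p) (ptz p) (ptw p) where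
  zero := ptz_zero p
  z_iff k hk := ⟨fun h => h.2, fun h => ⟨hk, h⟩⟩
  rel := pt_rel p
  act_iff i ε h1 h2 := ⟨fun h => by
    rcases h with h | h | h
    exacts [absurd h h1, absurd h h2, h], fun h => Or.inr (Or.inr h)⟩

variable {E : Type} [AddCommGroup E] (P : WPar n E)

/-- The subspace of the space of normalized monomials which gives rise to the ideals attached to the
point `p`, both in the quantized and in the Poisson algebra. -/
noncomputable def PP : Submodule ℂ (VV n) :=
  LinearMap.ker (P.Ev (ptPat p) (ptz p) (ptw p))

lemma PP_opL (φ : E → ℂ) (i : Fin n) (ε : ℤˣ) : ∀ v ∈ PP p P, P.opL φ i ε v ∈ PP p P := by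
  intro v hv
  unfold PP at *
  rw [LinearMap.mem_ker] at *
  rw [P.Ev_opL (ptVal p), hv, map_zero]

/-- Normalized monomials are evaluated letter by letter. -/
lemma aeval_psi (m : Mon n) :
    MvPolynomial.aeval p ((AAlg P).psi (Finsupp.single m 1)) = evx (ptz p) (ptw p) m := by
  generalize hN : msize m = N
  induction N using Nat.strong_induction_on generalizing m with
  | _ N ih =>
  by_cases hm : m = 0
  · subst hm; rw [(AAlg P).psi_zero, evx_zero, map_one]
  · obtain ⟨a, m', h1, h2, h3⟩ := exists_letter m hm
    rw [h2, (AAlg P).psi_step h1, map_smul, map_mul, ih _ (by omega) m' rfl]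
    rcases a with ⟨i, ε⟩ | j
    · rw [show lv (Sum.inl (i, ε) : Lett n) = lM i ε from rfl, evx_up h1]
      simp only [inv_one, one_smul]; rfl
    · rw [show lv (Sum.inr j : Lett n) = zM n (j + 1) from rfl, evx_zM (ptz_zero p) (by omega)]
      simp only [inv_one, one_smul]; rfl

open scoped Classical in
lemma evx_cvx (m : Mon n) (T : Pat n) (zv : ℕ → ℂ) (wv : Fin n → ℤˣ → ℂ) :
    evx zv wv m = evx zv (cvx T wv) m * ∏ i, pw (wv i) (if T.gen i then m.2 i else 0) := by
  have key : ∏ i, pw (wv i) (m.2 i) = (∏ i, pw (cvx T wv i) (m.2 i)) *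
      ∏ i, pw (wv i) (if T.gen i then m.2 i else 0) := by
    rw [← Finset.prod_mul_distrib]
    refine Finset.prod_congr rfl fun i _ => ?_
    by_cases h : T.gen i
    · have : cvx T wv i = fun _ => 1 := by funext ε; simp [cvx, h]
      rw [if_pos h, this]; simp [pw]
    · have : cvx T wv i = wv i := by funext ε; simp [cvx, h]
      rw [if_neg h, this, pw_zero, mul_one]
  unfold evx
  rw [key]; ring

lemma PP_le {v : VV n} (hv : v ∈ PP p P) : MvPolynomial.aeval p ((AAlg P).psi v) = 0 := by
  let F : (KK n E →₀ ℂ) →ₗ[ℂ] ℂ := Finsupp.linearCombination ℂ (fun κ => ∏ i, pw (ptw p i) (κ.2.2 i))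
  have h : ((MvPolynomial.aeval p).toLinearMap ∘ₗ (AAlg P).psi)
      = F ∘ₗ P.Ev (ptPat p) (ptz p) (ptw p) := by
    refine WPar.vext fun m => ?_
    simp only [LinearMap.comp_apply, AlgHom.toLinearMap_apply, P.Ev_single, F,
      Finsupp.linearCombination_single, one_mul, smul_eq_mul]
    rw [aeval_psi, evx_cvx m (ptPat p)]
    rfl
  have := LinearMap.congr_fun h v
  simp only [LinearMap.comp_apply, AlgHom.toLinearMap_apply] at this
  rw [this, LinearMap.mem_ker.1 hv, map_zero]

/-- The ideal of the polynomial ring attached to the point `p`. -/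
noncomputable def PA : Ideal (MvPolynomial (Fin n ⊕ Fin n) ℂ) where
  carrier := {a | (AAlg P).Psi.symm a ∈ PP p P}
  add_mem' := by
    intro a b ha hb
    simp only [Set.mem_setOf_eq, map_add] at *
    exact add_mem ha hb
  zero_mem' := by simp
  smul_mem' := by
    intro x a ha
    exact (AAlg P).map_stable _ (PP_opL p P _) x a ha

lemma mem_PA {a : MvPolynomial (Fin n ⊕ Fin n) ℂ} : a ∈ PA p P ↔ (AAlg P).Psi.symm a ∈ PP p P :=
  Iff.rfl

lemma evx_of_gen (T : Pat n) (zv : ℕ → ℂ) (wv : Fin n → ℤˣ → ℂ) {m : Mon n}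
    (hm : ∀ i, T.gen i → m.2 i = 0) : evx zv wv m = evx zv (cvx T wv) m := by
  rw [evx_cvx m T, Finset.prod_eq_one, mul_one]
  intro i _
  split_ifs with h
  · rw [hm i h, pw_zero]
  · rw [pw_zero]

/-- The ideal attached to `p` is the Poisson core of the maximal ideal of `p`. -/
theorem PA_core {B : PoissonBr (MvPolynomial (Fin n ⊕ Fin n) ℂ)} {ψ : E → ℂ} (hB : IsWBr P B ψ)
    (hinj : Function.Injective ψ) (hsq : ∀ i (s : ℤ), s ≠ 0 → s • P.sq i ≠ 0) :
    IsPoissonCore B.br (PA p P) (ptIdeal n p) := by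
  have hPA : PA p P ≤ ptIdeal n p := by
    intro a ha
    have := PP_le p P ha
    rw [← (AAlg P).Psi_apply, LinearEquiv.apply_symm_apply] at this
    exact this
  refine ⟨?_, hPA, ?_⟩
  · rw [hB.isPoissonIdeal_iff]
    intro i ε a ha
    have := hB.br_psi i ε ((AAlg P).Psi.symm a)
    rw [← (AAlg P).Psi_apply, ← (AAlg P).Psi_apply, LinearEquiv.apply_symm_apply] at this
    rw [this, mem_PA, LinearEquiv.symm_apply_apply]
    exact PP_opL p P ψ i ε _ ha
  · intro J hJ hJp
    rw [hB.isPoissonIdeal_iff] at hJ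
    let I : Submodule ℂ (VV n) := (J.restrictScalars ℂ).comap (AAlg P).psi
    have hL₁ : ∀ i ε, ∀ v ∈ I, P.opL (fun _ => 1) i ε v ∈ I := by
      intro i ε v hv
      show (AAlg P).psi _ ∈ J
      rw [(AAlg P).psi_opL]
      exact J.mul_mem_left _ hv
    have hL₂ : ∀ i ε, ∀ v ∈ I, P.opL ψ i ε v ∈ I := by
      intro i ε v hv
      show (AAlg P).psi _ ∈ J
      rw [← hB.br_psi]
      exact hJ i ε _ hv
    have hsep : SepPair (fun _ : E => 1) ψ := by
      intro C C' h h'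
      simp only [one_mul, mul_one] at h'
      exact h (hinj h'.symm)
    have key : I ≤ PP p P := by
      by_contra hI
      obtain ⟨m, hm, hg, hmI⟩ := P.exists_single hsep hsq (ptVal p) I hL₁ hL₂
        (P.stable_opZ WPar.isChar_one I hL₁) (P.stable_opZ_add hB.hψ I hL₁ hL₂) hI
      obtain ⟨u, hu, v, hv, huv⟩ := Submodule.mem_sup.1 hmI
      have h1 : MvPolynomial.aeval p ((AAlg P).psi u) = 0 := hJp hu
      have h2 := PP_le p P hv
      have h3 := aeval_psi p P m
      rw [← huv, map_add, map_add, h1, h2, add_zero, evx_of_gen (ptPat p) _ _ hg] at h3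
      exact (ptVal p).ev_good hm h3.symm
    intro a ha
    rw [mem_PA]
    apply key
    show (AAlg P).psi _ ∈ J
    rwa [← (AAlg P).Psi_apply, LinearEquiv.apply_symm_apply]

end Points

/-! ### Simple modules over the quantized algebra -/

section Induct

variable {n : ℕ}

/-- The normalized monomials not vanishing on a stratum and not involving generic letters are
products of invertible normal letters. -/
lemma Pat.good_induct (T : Pat n) {C : Mon n → Prop} (h0 : C 0)
    (hz : ∀ (j : Fin n) m, T.zN (j.val + 1) → C m → C (m + zM n (j + 1)))
    (hl : ∀ i (ε : ℤˣ) m, 0 ≤ (ε : ℤ) * m.2 i → T.act i ε → ¬ T.gen i → C m → C (m + lM i ε))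
    (m : Mon n) (hm : ¬ T.bad m) (hg : ∀ i, T.gen i → m.2 i = 0) : C m := by
  generalize hN : msize m = N
  induction N using Nat.strong_induction_on generalizing m with
  | _ N ih =>
  by_cases hm0 : m = 0
  · subst hm0; exact h0
  obtain ⟨a, m', h1, h2, h3⟩ := exists_letter m hm0
  rcases a with ⟨i, ε⟩ | j
  · replace h2 : m = m' + lM i ε := h2
    replace h1 : 0 ≤ (ε : ℤ) * m'.2 i := h1
    have e1 : m.2 i = m'.2 i + ε := by rw [h2, Prod.snd_add, Pi.add_apply, WPar.lM_snd_self]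
    have e2 : (ε : ℤ) * m.2 i = ε * m'.2 i + 1 := by rw [e1, mul_add, WPar.coe_mul_self]
    have e3 : ∀ j, j ≠ i → m.2 j = m'.2 j := fun j hj => by
      rw [h2, Prod.snd_add, Pi.add_apply, WPar.lM_snd_ne hj, add_zero]
    have hgi : ¬ T.gen i := fun h => by have := hg i h; rw [this] at e2; omega
    have hact : T.act i ε := by
      by_contra h; exact hm (Or.inr ⟨i, ε, by omega, h⟩)
    have hgood : ¬ T.bad m' := by
      rintro (⟨j, h, h'⟩ | ⟨j, δ, h, h'⟩)
      · refine hm (Or.inl ⟨j, ?_, h'⟩); rw [h2]; simpa [lM] using h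
      · refine hm (Or.inr ⟨j, δ, ?_, h'⟩)
        by_cases hj : j = i
        · subst hj
          by_cases hδ : δ = ε
          · subst hδ; omega
          · rw [WPar.units_ne hδ] at h; push_cast at h; linarith
        · rw [e3 j hj]; exact h
    rw [h2]
    refine hl i ε m' h1 hact hgi (ih _ (by omega) m' hgood ?_ rfl)
    intro j hj
    have : j ≠ i := by rintro rfl; exact hgi hj
    rw [← e3 j this]; exact hg j hj
  · replace h2 : m = m' + zM n (j + 1) := h2
    have e1 : m.1 j = m'.1 j + 1 := by rw [h2]; simp [zM]
    have hzN : T.zN (j.val + 1) := by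
      by_contra h; exact hm (Or.inl ⟨j, by omega, h⟩)
    rw [h2]
    refine hz j m' hzN (ih _ (by omega) m' ?_ ?_ rfl)
    · intro h; exact hm (by rw [h2]; exact T.bad_add_zM h _)
    · intro i hi; have := hg i hi; rw [h2] at this; simpa [zM] using this

end Induct

namespace WAlg

variable {n : ℕ} {E : Type} [AddCommGroup E] {P : WPar n E} {φ : E → ℂ} {A : Type} [Ring A]
  [Algebra ℂ A] (W : WAlg P φ A)

lemma psi_up {i : Fin n} {ε : ℤˣ} {m : Mon n} (h : 0 ≤ (ε : ℤ) * m.2 i) :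
    W.psi (Finsupp.single (m + lM i ε) 1)
      = (φ (P.bet i ε m))⁻¹ • (W.l i ε * W.psi (Finsupp.single m 1)) := by
  rw [← W.psi_opL, P.opL_up φ h, one_mul, ← map_smul, Finsupp.smul_single, smul_eq_mul,
    inv_mul_cancel₀ (W.hφ.ne_zero _)]

lemma psi_zM {k : ℕ} (hk : k ≤ n) (m : Mon n) :
    W.psi (Finsupp.single (m + zM n k) 1)
      = (φ (P.zet k m))⁻¹ • (W.z k * W.psi (Finsupp.single m 1)) := by
  rw [← W.psi_opZ k hk, P.opZ_single, one_mul, ← map_smul, Finsupp.smul_single, smul_eq_mul,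
    inv_mul_cancel₀ (W.hφ.ne_zero _)]

lemma psi_factor_z {m : Mon n} {j : Fin n} (h : m.1 j ≠ 0) :
    ∃ r, W.psi (Finsupp.single m 1) = W.z (j + 1) * r := by
  obtain ⟨m', rfl⟩ : ∃ m', m = m' + zM n (j + 1) := by
    refine ⟨(fun l => if l = j then m.1 l - 1 else m.1 l, m.2), Prod.ext ?_ ?_⟩
    · funext l
      by_cases hl : l = j
      · subst hl; simp [zM]; omega
      · have : l.val ≠ j.val := fun h => hl (Fin.ext h)
        simp [zM, hl, this]
    · simp [zM]
  refine ⟨(φ (P.zet (j + 1) m'))⁻¹ • W.psi (Finsupp.single m' 1), ?_⟩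
  rw [W.psi_zM (by omega), mul_smul_comm]

lemma psi_factor_l {m : Mon n} {i : Fin n} {ε : ℤˣ} (h : 0 < (ε : ℤ) * m.2 i) :
    ∃ r, W.psi (Finsupp.single m 1) = W.l i ε * r := by
  obtain ⟨m', rfl⟩ : ∃ m', m = m' + lM i ε := by
    refine ⟨m - lM i ε, Prod.ext ?_ ?_⟩
    · simp [lM]
    · simp [lM]
  have h2 : 0 ≤ (ε : ℤ) * m'.2 i := by
    rw [Prod.snd_add, Pi.add_apply, WPar.lM_snd_self, mul_add, WPar.coe_mul_self] at h; omega
  exact ⟨(φ (P.bet i ε m'))⁻¹ • W.psi (Finsupp.single m' 1), by rw [W.psi_up h2, mul_smul_comm]⟩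

variable (M : Type) [AddCommGroup M] [Module A M]

/-- The annihilator of a module, in terms of normalized monomials. -/
noncomputable def annV : Submodule ℂ (VV n) where
  carrier := {v | ∀ m : M, W.psi v • m = 0}
  add_mem' := by
    intro a b ha hb m
    rw [map_add, add_smul, ha m, hb m, add_zero]
  zero_mem' := by intro m; rw [map_zero, zero_smul]
  smul_mem' := by
    intro c v hv m
    rw [map_smul, Algebra.smul_def, mul_smul, hv m, smul_zero]

lemma mem_annV {v : VV n} : v ∈ W.annV M ↔ ∀ m : M, W.psi v • m = 0 := Iff.rfl

lemma annV_opL (i : Fin n) (ε : ℤˣ) : ∀ v ∈ W.annV M, P.opL φ i ε v ∈ W.annV M := by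
  intro v hv m
  rw [W.psi_opL, mul_smul, hv m, smul_zero]

lemma annV_opL_right (i : Fin n) (ε : ℤˣ) :
    ∀ v ∈ W.annV M, P.opL (fun x => φ (-x)) i ε v ∈ W.annV M := by
  intro v hv m
  rw [W.psi_opL_right, mul_smul, hv]

lemma annV_opZ {k : ℕ} (hk : k ≤ n) : ∀ v ∈ W.annV M, P.opZ φ k v ∈ W.annV M := by
  intro v hv m
  rw [W.psi_opZ k hk, mul_smul, hv m, smul_zero]

lemma annV_opZ_right {k : ℕ} (hk : k ≤ n) :
    ∀ v ∈ W.annV M, P.opZ (fun x => φ (-x)) k v ∈ W.annV M := by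
  intro v hv m
  rw [W.psi_opZ_right k hk, mul_smul, hv]

variable {M}

/-- A set of vectors stable under scalars and letters is a submodule. -/
lemma smul_closed {K : AddSubgroup M} (hc : ∀ c : ℂ, ∀ m ∈ K, algebraMap ℂ A c • m ∈ K)
    (hl : ∀ i ε, ∀ m ∈ K, W.l i ε • m ∈ K) (r : A) : ∀ m ∈ K, r • m ∈ K := by
  have hr : r ∈ Algebra.adjoin ℂ (Set.range fun x : Fin n × ℤˣ => W.l x.1 x.2) := by
    rw [W.gen]; trivial
  induction hr using Algebra.adjoin_induction with
  | mem x hx => obtain ⟨⟨i, ε⟩, rfl⟩ := hx; exact hl i ε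
  | algebraMap c => exact hc c
  | add x y _ _ h1 h2 => intro m hm; rw [add_smul]; exact add_mem (h1 m hm) (h2 m hm)
  | mul x y _ _ h1 h2 => intro m hm; rw [mul_smul]; exact h1 _ (h2 m hm)

variable [IsSimpleModule A M]

/-- An element of `A` that is normal modulo the annihilator of a simple module acts on this module
by zero or bijectively. -/
lemma normal_dichotomy (x : A)
    (h1 : ∀ i ε, ∃ c : ℂ, ∀ m : M, x • W.l i ε • m = algebraMap ℂ A c • W.l i ε • x • m)
    (h2 : ∀ i ε, ∃ c : ℂ, ∀ m : M, W.l i ε • x • m = x • algebraMap ℂ A c • W.l i ε • m) :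
    (∀ m : M, x • m = 0) ∨ Function.Bijective (fun m : M => x • m) := by
  have hcomm : ∀ (c : ℂ) (m : M), x • algebraMap ℂ A c • m = algebraMap ℂ A c • x • m := by
    intro c m; rw [← mul_smul, ← mul_smul, Algebra.commutes]
  let f : M →+ M := DistribSMul.toAddMonoidHom M x
  let K : Submodule A M :=
    { f.ker with
      smul_mem' := fun r m hm => by
        refine W.smul_closed (K := f.ker) ?_ ?_ r m hm
        · intro c m hm
          show x • algebraMap ℂ A c • m = (0 : M)
          rw [hcomm, show x • m = 0 from hm, smul_zero]
        · intro i ε m hm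
          obtain ⟨c, hc⟩ := h1 i ε
          show x • W.l i ε • m = (0 : M)
          rw [hc, show x • m = 0 from hm, smul_zero, smul_zero] }
  let L : Submodule A M :=
    { f.range with
      smul_mem' := fun r m hm => by
        refine W.smul_closed (K := f.range) ?_ ?_ r m hm
        · rintro c _ ⟨m, rfl⟩
          exact ⟨algebraMap ℂ A c • m, hcomm c m⟩
        · rintro i ε _ ⟨m, rfl⟩
          obtain ⟨c, hc⟩ := h2 i ε
          exact ⟨algebraMap ℂ A c • W.l i ε • m, (hc m).symm⟩ }
  rcases eq_bot_or_eq_top K with hK | hK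
  · rcases eq_bot_or_eq_top L with hL | hL
    · left
      intro m
      have : x • m ∈ L := ⟨m, rfl⟩
      rw [hL] at this; simpa using this
    · right
      constructor
      · intro a b hab
        have : a - b ∈ K := by
          show x • (a - b) = 0
          rw [smul_sub, sub_eq_zero]; exact hab
        rw [hK] at this
        exact sub_eq_zero.1 (by simpa using this)
      · intro m
        have : m ∈ L := by rw [hL]; trivial
        exact this
  · left
    intro m
    have : m ∈ K := by rw [hK]; trivial
    exact this

lemma z_dichotomy {k : ℕ} (hk : k ≤ n) :
    (∀ m : M, W.z k • m = 0) ∨ Function.Bijective (fun m : M => W.z k • m) := by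
  have hne : ∀ x, φ x ≠ 0 := W.hφ.ne_zero
  refine W.normal_dichotomy _ (fun i ε => ?_) (fun i ε => ?_)
  · refine ⟨φ (2 • P.kz k i ε), fun m => ?_⟩
    rw [← mul_smul, W.z_l k hk, Algebra.smul_def, mul_smul, mul_smul]
  · refine ⟨(φ (2 • P.kz k i ε))⁻¹, fun m => ?_⟩
    rw [← mul_smul, ← mul_smul, ← mul_smul, mul_assoc, ← Algebra.smul_def, mul_smul_comm, W.z_l k hk, smul_smul,
      inv_mul_cancel₀ (hne _), one_smul]

lemma l_dichotomy (i : Fin n) (ε : ℤˣ) (h1 : ∀ m : M, W.z i • m = 0)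
    (h2 : ∀ m : M, W.z (i + 1) • m = 0) :
    (∀ m : M, W.l i ε • m = 0) ∨ Function.Bijective (fun m : M => W.l i ε • m) := by
  have hne : ∀ x, φ x ≠ 0 := W.hφ.ne_zero
  have key : ∀ δ (m : M), W.l i δ • W.l i (-δ) • m = 0 := by
    intro δ m
    rw [← mul_smul, W.opp, sub_smul, h1, Algebra.smul_def, mul_smul, h2, smul_zero, sub_zero]
  refine W.normal_dichotomy _ (fun j δ => ?_) (fun j δ => ?_)
  · by_cases hj : i = j
    · subst hj
      by_cases hδ : δ = ε
      · subst hδ; exact ⟨1, fun m => by simp⟩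
      · obtain rfl := WPar.units_ne hδ
        refine ⟨0, fun m => ?_⟩
        rw [key, map_zero, zero_smul]
    · refine ⟨φ (2 • P.kap i ε j δ), fun m => ?_⟩
      rw [← mul_smul, W.comm hj, Algebra.smul_def, mul_smul, mul_smul]
  · by_cases hj : j = i
    · subst hj
      by_cases hδ : δ = ε
      · subst hδ; exact ⟨1, fun m => by simp⟩
      · obtain rfl := WPar.units_ne hδ
        refine ⟨0, fun m => ?_⟩
        have := key (-ε) m
        rw [neg_neg] at this
        rw [this, map_zero, zero_smul, smul_zero]
    · refine ⟨φ (2 • P.kap j δ i ε), fun m => ?_⟩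
      rw [← mul_smul, W.comm hj, ← mul_smul, ← mul_smul, mul_assoc, ← Algebra.smul_def, mul_smul_comm]

/-- The pattern `T` describes the action of the letters on `M`. -/
structure MPat (M : Type) [AddCommGroup M] [Module A M] (T : Pat n) : Prop where
  bad : ∀ m, T.bad m → ∀ v : M, W.psi (Finsupp.single m 1) • v = 0
  z : ∀ k, T.zN k → Function.Bijective (fun v : M => W.z k • v)
  l : ∀ i ε, ¬ T.zN i.val → ¬ T.zN (i.val + 1) → T.act i ε →
    Function.Bijective (fun v : M => W.l i ε • v)

namespace MPat

variable {W} {T : Pat n}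

omit [IsSimpleModule A M] in
lemma z_zero (H : W.MPat M T) {k : ℕ} (hk : k ≤ n) (h : ¬ T.zN k) (v : M) : W.z k • v = 0 := by
  have := H.bad _ (T.bad_zM hk h 0) v
  rw [W.psi_zM hk, W.psi_zero, mul_one, Algebra.smul_def, mul_smul] at this
  have h2 : algebraMap ℂ A (φ (P.zet k 0)) * algebraMap ℂ A (φ (P.zet k 0))⁻¹ = 1 := by
    rw [← map_mul, mul_inv_cancel₀ (W.hφ.ne_zero _), map_one]
  rw [← one_smul A (W.z k • v), ← h2, mul_smul, this, smul_zero]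

lemma scalar_bij {c : ℂ} (hc : c ≠ 0) : Function.Bijective (fun v : M => algebraMap ℂ A c • v) := by
  refine Function.bijective_iff_has_inverse.2 ⟨fun v => algebraMap ℂ A c⁻¹ • v, fun v => ?_, fun v => ?_⟩
  · simp only [← mul_smul, ← map_mul, inv_mul_cancel₀ hc, map_one, one_smul]
  · simp only [← mul_smul, ← map_mul, mul_inv_cancel₀ hc, map_one, one_smul]

lemma l_bij (H : W.MPat M T) {i : Fin n} {ε : ℤˣ} (ha : T.act i ε) (hg : ¬ T.gen i) :
    Function.Bijective (fun v : M => W.l i ε • v) := by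
  have hb : ¬ T.zN i.val → ¬ T.zN (i.val + 1) → Function.Bijective (fun v : M => W.l i ε • v) :=
    fun h1 h2 => H.l i ε h1 h2 ha
  have fin : (∀ δ, Function.Bijective (fun v : M => W.l i δ • W.l i (-δ) • v)) →
      Function.Bijective (fun v : M => W.l i ε • v) := by
    intro h
    have a := (h ε).2
    have b := (h (-ε)).1
    rw [neg_neg] at b
    refine ⟨fun x y hxy => b ?_, fun x => ?_⟩
    · simp only at hxy ⊢; rw [hxy]
    · obtain ⟨y, hy⟩ := a x; exact ⟨_, hy⟩
  by_cases h1 : T.zN i.val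
  · have h2 : ¬ T.zN (i.val + 1) := fun h2 => hg ⟨h1, h2⟩
    refine fin fun δ => ?_
    have : (fun v : M => W.l i δ • W.l i (-δ) • v) = (fun v => algebraMap ℂ A (-1) • v) ∘ fun v => W.z i • v := by
      funext v
      rw [← mul_smul, W.opp, sub_smul, Algebra.smul_def, mul_smul, H.z_zero (by omega) h2]
      simp
    rw [this]
    exact (scalar_bij (by norm_num)).comp (H.z _ h1)
  · by_cases h2 : T.zN (i.val + 1)
    · refine fin fun δ => ?_
      have : (fun v : M => W.l i δ • W.l i (-δ) • v) =
          (fun v => algebraMap ℂ A (φ (-((δ : ℤ) • P.sq i))) • v) ∘ fun v => W.z (i + 1) • v := by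
        funext v
        rw [← mul_smul, W.opp, sub_smul, Algebra.smul_def, mul_smul, H.z_zero (k := i) (by omega) h1]
        simp
      rw [this]
      exact (scalar_bij (W.hφ.ne_zero _)).comp (H.z _ h2)
    · exact hb h1 h2

lemma psi_bij (H : W.MPat M T) {m : Mon n} (hm : ¬ T.bad m) (hg : ∀ i, T.gen i → m.2 i = 0) :
    Function.Bijective (fun v : M => W.psi (Finsupp.single m 1) • v) := by
  refine T.good_induct (C := fun m => Function.Bijective (fun v : M => W.psi (Finsupp.single m 1) • v))
    ?_ ?_ ?_ m hm hg
  · simp only [W.psi_zero, one_smul]; exact Function.bijective_id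
  · intro j m hz hC
    have : (fun v : M => W.psi (Finsupp.single (m + zM n (j + 1)) 1) • v) =
        (fun v => algebraMap ℂ A (φ (P.zet (j + 1) m))⁻¹ • v) ∘ (fun v => W.z (j + 1) • v) ∘
          fun v => W.psi (Finsupp.single m 1) • v := by
      funext v
      rw [W.psi_zM (by omega), Algebra.smul_def, mul_smul, mul_smul]; rfl
    rw [this]
    exact (scalar_bij (inv_ne_zero (W.hφ.ne_zero _))).comp ((H.z _ hz).comp hC)
  · intro i ε m hs ha hgi hC
    have : (fun v : M => W.psi (Finsupp.single (m + lM i ε) 1) • v) =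
        (fun v => algebraMap ℂ A (φ (P.bet i ε m))⁻¹ • v) ∘ (fun v => W.l i ε • v) ∘
          fun v => W.psi (Finsupp.single m 1) • v := by
      funext v
      rw [W.psi_up hs, Algebra.smul_def, mul_smul, mul_smul]; rfl
    rw [this]
    exact (scalar_bij (inv_ne_zero (W.hφ.ne_zero _))).comp ((H.l_bij ha hgi).comp hC)

lemma not_mem [Nontrivial M] (H : W.MPat M T) {m : Mon n} (hm : ¬ T.bad m)
    (hg : ∀ i, T.gen i → m.2 i = 0) : Finsupp.single m 1 ∉ W.annV M := by
  intro h
  obtain ⟨v, hv⟩ := exists_ne (0 : M)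
  refine hv ((H.psi_bij hm hg).1 ?_)
  simp only [smul_zero]
  exact h v

/-- The annihilator of `M` is contained in the ideal attached to a system of values, as soon as it
contains the latter. -/
lemma ann_le [Nontrivial M] (H : W.MPat M T) {zv : ℕ → ℂ} {wv : Fin n → ℤˣ → ℂ} (V : Val T zv wv)
    (hsep : SepPair φ (fun x => φ (-x))) (hsq : ∀ i (s : ℤ), s ≠ 0 → s • P.sq i ≠ 0)
    (hle : LinearMap.ker (P.Ev T zv wv) ≤ W.annV M) : W.annV M ≤ LinearMap.ker (P.Ev T zv wv) := by
  by_contra hI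
  obtain ⟨m, hm, hg, hmI⟩ := P.exists_single hsep hsq V (W.annV M) (W.annV_opL M)
    (W.annV_opL_right M) (fun k hk => W.annV_opZ M hk) (fun k hk => W.annV_opZ_right M hk) hI
  rw [sup_eq_left.2 hle] at hmI
  exact H.not_mem hm hg hmI

end MPat

end WAlg

/-! ### The ideals attached to points are primitive -/

section

open scoped Classical

/-- The exponent of the product of the normal letters which are units on the stratum. -/
noncomputable def Pat.mc {n : ℕ} (T : Pat n) : Mon n :=
  (fun j => if T.zN (j.val + 1) then 1 else 0,
   fun i => if T.zN i.val ∨ T.zN (i.val + 1) then 0 else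
    if T.act i 1 then 1 else if T.act i (-1) then -1 else 0)

namespace Pat

variable {n : ℕ} (T : Pat n)

lemma mc_good (k : ℕ) : ¬ T.bad (k • T.mc) := by
  rintro (⟨j, h, h'⟩ | ⟨i, ε, h, h'⟩)
  · simp [mc, h'] at h
  · have h1 : ¬ T.zN i.val := fun h1 => h' (T.act_left i ε h1)
    have h2 : ¬ T.zN (i.val + 1) := fun h1 => h' (T.act_right i ε h1)
    rcases Int.units_eq_one_or ε with rfl | rfl
    · simp only [Prod.smul_snd, Pi.smul_apply, mc, h1, h2, h'] at h
      simp at h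
      split_ifs at h
      · have : (0 : ℤ) ≤ k := by positivity
        simp at h; omega
      · simp at h
    · simp only [Prod.smul_snd, Pi.smul_apply, mc, h1, h2, h'] at h
      simp at h
      split_ifs at h
      · have : (0 : ℤ) ≤ k := by positivity
        simp at h; omega
      · simp at h

lemma mc_gen (k : ℕ) (i : Fin n) (h : T.gen i) : (k • T.mc).2 i = 0 := by
  simp [mc, h.1]

lemma mc_z {k : ℕ} (h : T.zN k) : k = 0 ∨ ∃ j : Fin n, k = j.val + 1 ∧ T.mc.1 j ≠ 0 := by
  rcases Nat.eq_zero_or_pos k with h0 | h0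
  · exact Or.inl h0
  · right
    have := T.zN_le k h
    refine ⟨⟨k - 1, by omega⟩, by simp; omega, ?_⟩
    simp only [mc]
    rw [if_pos (by rwa [show k - 1 + 1 = k by omega])]
    exact one_ne_zero

lemma mc_l {i : Fin n} {ε : ℤˣ} (h1 : ¬ T.zN i.val) (h2 : ¬ T.zN (i.val + 1)) (h : T.act i ε) :
    0 < (ε : ℤ) * T.mc.2 i := by
  rcases Int.units_eq_one_or ε with rfl | rfl
  · simp [mc, h1, h2, h]
  · have := T.not_both i _ h1 h2 h
    rw [neg_neg] at this
    simp [mc, h1, h2, h, this]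

end Pat

end

/-- Weighted shifts of the space of finitely supported functions. -/
noncomputable def shop {K : Type} [AddCommGroup K] (σ : K) (χ : K → ℂ) : (K →₀ ℂ) →ₗ[ℂ] (K →₀ ℂ) :=
  Finsupp.linearCombination ℂ (fun κ => Finsupp.single (κ + σ) (χ κ))

section shop

variable {K : Type} [AddCommGroup K]

lemma shop_single (σ : K) (χ : K → ℂ) (κ : K) (c : ℂ) :
    shop σ χ (Finsupp.single κ c) = Finsupp.single (κ + σ) (c * χ κ) := by
  simp [shop]

lemma shop_apply (σ : K) (χ : K → ℂ) (f : K →₀ ℂ) (κ : K) :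
    shop σ χ f κ = χ (κ - σ) * f (κ - σ) := by
  classical
  induction f using Finsupp.induction_linear with
  | zero => simp
  | add f g hf hg => rw [map_add, Finsupp.add_apply, hf, hg, Finsupp.add_apply]; ring
  | single a b =>
    rw [shop_single, Finsupp.single_apply, Finsupp.single_apply]
    by_cases h : a + σ = κ
    · rw [if_pos h, if_pos (by rw [← h]; simp), ← h]; simp [mul_comm]
    · rw [if_neg h, if_neg (fun h' => h (by rw [h']; simp)), mul_zero]

lemma shop_ext {f : (K →₀ ℂ) →ₗ[ℂ] (K →₀ ℂ)} {σ : K} {χ : K → ℂ}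
    (h : ∀ κ, f (Finsupp.single κ 1) = Finsupp.single (κ + σ) (χ κ)) : f = shop σ χ := by
  apply Finsupp.lhom_ext'
  intro κ
  ext
  simp [h, shop_single]

/-- A weighted shift minus its value at the origin does not reach the delta function of the
origin. -/
lemma shop_ne [IsAddTorsionFree K] {σ : K} {χ : K → ℂ} (hχ : ∀ κ, χ κ ≠ 0) (f : K →₀ ℂ) :
    shop σ χ f - χ 0 • f ≠ Finsupp.single 0 1 := by
  classical
  intro h
  have hκ : ∀ κ, χ (κ - σ) * f (κ - σ) - χ 0 * f κ = if κ = 0 then 1 else 0 := by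
    intro κ
    have := DFunLike.congr_fun h κ
    rw [Finsupp.sub_apply, shop_apply, Finsupp.smul_apply, smul_eq_mul, Finsupp.single_apply] at this
    rw [this]; simp only [eq_comm]
  by_cases hσ : σ = 0
  · have := hκ 0
    simp [hσ] at this
  have hinj : Function.Injective (fun k : ℤ => k • σ) :=
    injective_zsmul_iff_not_isOfFinAddOrder.2 (not_isOfFinAddOrder_of_isAddTorsionFree hσ)
  have hne : ∀ k : ℤ, k ≠ 0 → k • σ ≠ 0 := by
    intro k hk h0
    exact hk (hinj (by simpa using h0))
  have fin : ∀ g : ℕ → ℤ, Function.Injective g → ¬ ∀ k, f (g k • σ) ≠ 0 := by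
    intro g hg hf
    have := Set.infinite_of_injective_forall_mem (s := (f.support : Set K))
      (f := fun k => g k • σ) (fun a b hab => hg (hinj hab)) (fun k => by simpa using hf k)
    exact this f.support.finite_toSet
  by_cases h0 : f 0 = 0
  · have h1 : f ((-1 : ℤ) • σ) ≠ 0 := by
      have := hκ 0
      rw [h0] at this
      intro h2
      rw [show (-1 : ℤ) • σ = 0 - σ by simp] at h2
      rw [h2] at this; simp at this
    refine fin (fun k => -1 - k) (fun a b hab => by simp at hab; omega) fun k => ?_
    induction k with
    | zero => simpa using h1
    | succ k ih =>
      have := hκ ((-1 - k : ℤ) • σ)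
      rw [if_neg (hne _ (by omega))] at this
      rw [show (-1 - ((k + 1 : ℕ) : ℤ)) • σ = (-1 - k : ℤ) • σ - σ by
        push_cast; simp only [sub_smul, add_smul, one_smul]; abel]
      intro h2
      rw [h2] at this
      simp [hχ 0] at this
      exact ih this
  · refine fin (fun k => k) (fun a b hab => by simpa using hab) fun k => ?_
    induction k with
    | zero => simpa using h0
    | succ k ih =>
      have := hκ (((k + 1 : ℕ) : ℤ) • σ)
      rw [if_neg (hne _ (by omega)), show ((k + 1 : ℕ) : ℤ) • σ - σ = (k : ℤ) • σ by
        push_cast; simp only [add_smul, one_smul]; abel] at this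
      intro h2
      rw [h2] at this
      simp [hχ] at this
      exact ih (by simpa using this)

end shop

namespace WAlg

variable {n : ℕ} {E : Type} [AddCommGroup E] {P : WPar n E} {φ : E → ℂ} {A : Type} [Ring A]
  [Algebra ℂ A] (W : WAlg P φ A) {T : Pat n} {zv : ℕ → ℂ} {wv : Fin n → ℤˣ → ℂ}

/-- Right multiplication by `x` becomes an invertible weighted shift on the weight-graded
quotient. -/
def HomR (T : Pat n) (zv : ℕ → ℂ) (wv : Fin n → ℤˣ → ℂ) (x : A) : Prop :=
  ∃ σ χ, (∀ κ, χ κ ≠ 0) ∧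
    ∀ a, P.Ev T zv wv (W.Psi.symm (a * x)) = shop σ χ (P.Ev T zv wv (W.Psi.symm a))

variable {W}

lemma HomR.mul {x y : A} (hx : W.HomR T zv wv x) (hy : W.HomR T zv wv y) :
    W.HomR T zv wv (x * y) := by
  obtain ⟨σ, χ, h1, h2⟩ := hx
  obtain ⟨σ', χ', h1', h2'⟩ := hy
  refine ⟨σ + σ', fun κ => χ κ * χ' (κ + σ), fun κ => mul_ne_zero (h1 _) (h1' _), fun a => ?_⟩
  rw [← mul_assoc, h2', h2]
  have : shop σ' χ' ∘ₗ shop σ χ = shop (σ + σ') fun κ => χ κ * χ' (κ + σ) := by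
    apply shop_ext
    intro κ
    rw [LinearMap.comp_apply, shop_single, shop_single, one_mul, add_assoc]
  rw [← this]; rfl

lemma HomR.smul {x : A} (hx : W.HomR T zv wv x) {c : ℂ} (hc : c ≠ 0) : W.HomR T zv wv (c • x) := by
  obtain ⟨σ, χ, h1, h2⟩ := hx
  refine ⟨σ, fun κ => c * χ κ, fun κ => mul_ne_zero hc (h1 _), fun a => ?_⟩
  rw [mul_smul_comm, map_smul, map_smul, h2, ← LinearMap.smul_apply]
  congr 1
  apply shop_ext
  intro κ
  rw [LinearMap.smul_apply, shop_single, Finsupp.smul_single, one_mul, smul_eq_mul]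

lemma HomR.one : W.HomR T zv wv 1 := by
  refine ⟨0, fun _ => 1, fun _ => one_ne_zero, fun a => ?_⟩
  rw [mul_one]
  have : LinearMap.id = shop (0 : KK n E) fun _ => 1 := shop_ext fun κ => by simp
  rw [← this]; rfl

lemma HomR.z (V : Val T zv wv) {k : ℕ} (hz : T.zN k) : W.HomR T zv wv (W.z k) := by
  have hk := T.zN_le k hz
  refine ⟨P.shZ T k, fun κ => zv k * φ (-(κ.1 k)),
    fun κ => mul_ne_zero ((V.z_iff k hk).1 hz) (W.hφ.ne_zero _), fun a => ?_⟩
  have h1 := W.psi_opZ_right k hk (W.Psi.symm a)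
  rw [← W.Psi_apply, ← W.Psi_apply, W.Psi.apply_symm_apply] at h1
  rw [← h1, W.Psi.symm_apply_apply, P.Ev_opZ V _ hk]
  rfl

lemma HomR.l (V : Val T zv wv) {i : Fin n} {ε : ℤˣ} (ha : T.act i ε) (hg : ¬ T.gen i) :
    W.HomR T zv wv (W.l i ε) := by
  refine ⟨P.shL T i ε, fun κ => cvx T wv i ε * φ (-(κ.2.1 i ε)),
    fun κ => mul_ne_zero (V.cvx_ne ha) (W.hφ.ne_zero _), fun a => ?_⟩
  have h1 := W.psi_opL_right i ε (W.Psi.symm a)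
  rw [← W.Psi_apply, ← W.Psi_apply, W.Psi.apply_symm_apply] at h1
  rw [← h1, W.Psi.symm_apply_apply, P.Ev_opL V]
  congr 1
  exact shop_ext fun κ => P.barL_single _ (Or.inl hg)

lemma HomR.psi (V : Val T zv wv) {m : Mon n} (hm : ¬ T.bad m) (hg : ∀ i, T.gen i → m.2 i = 0) :
    W.HomR T zv wv (W.psi (Finsupp.single m 1)) := by
  refine T.good_induct (C := fun m => W.HomR T zv wv (W.psi (Finsupp.single m 1))) ?_ ?_ ?_ m hm hg
  · rw [W.psi_zero]; exact HomR.one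
  · intro j m hz hC
    rw [W.psi_zM (by omega)]
    exact ((HomR.z V hz).mul hC).smul (inv_ne_zero (W.hφ.ne_zero _))
  · intro i ε m hs ha hgi hC
    rw [W.psi_up hs]
    exact ((HomR.l V ha hgi).mul hC).smul (inv_ne_zero (W.hφ.ne_zero _))

variable (W)

/-- The ideal attached to a system of values is the annihilator of a simple module: a quotient of the
algebra by a maximal left ideal containing the ideal and `c - θ`, where `c` is the product of all the
normal letters which are units on the stratum and `θ` is a suitable nonzero scalar. -/
theorem exists_simple [IsAddTorsionFree E] (V : Val T zv wv)
    (hsep : SepPair φ (fun x => φ (-x))) (hsq : ∀ i (s : ℤ), s ≠ 0 → s • P.sq i ≠ 0) :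
    ∃ (M : Type) (_ : AddCommGroup M) (_ : Module A M), IsSimpleModule A M ∧
      W.annV M = LinearMap.ker (P.Ev T zv wv) := by
  set K := LinearMap.ker (P.Ev T zv wv) with hK
  have hstab : ∀ (f : E → ℂ) i ε, ∀ v ∈ K, P.opL f i ε v ∈ K := by
    intro f i ε v hv
    rw [hK, LinearMap.mem_ker] at *
    rw [P.Ev_opL V, hv, map_zero]
  have hg1 : ¬ T.bad T.mc := by simpa using T.mc_good 1
  have hg2 : ∀ i, T.gen i → T.mc.2 i = 0 := by simpa using T.mc_gen 1
  set c := W.psi (Finsupp.single T.mc 1) with hc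
  obtain ⟨σ, χ, hχ, hcr⟩ : W.HomR T zv wv c := HomR.psi V hg1 hg2
  let L₀ : Ideal A :=
    { carrier := {a | ∃ r, W.Psi.symm (a - r * (c - algebraMap ℂ A (χ 0))) ∈ K}
      add_mem' := by
        rintro a b ⟨r, hr⟩ ⟨s, hs⟩
        refine ⟨r + s, ?_⟩
        rw [add_mul, add_sub_add_comm, map_add]
        exact add_mem hr hs
      zero_mem' := ⟨0, by simp⟩
      smul_mem' := by
        rintro x a ⟨r, hr⟩
        refine ⟨x * r, ?_⟩
        rw [smul_eq_mul, mul_assoc, ← mul_sub]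
        exact W.map_stable K (hstab _) x _ hr }
  have hL₀ : L₀ ≠ ⊤ := by
    intro h
    obtain ⟨r, hr⟩ : (1 : A) ∈ L₀ := by rw [h]; trivial
    rw [hK, LinearMap.mem_ker, map_sub, map_sub, mul_sub, map_sub, map_sub, hcr,
      ← Algebra.commutes, ← Algebra.smul_def, map_smul, map_smul, ← W.psi_zero, ← W.Psi_apply,
      W.Psi.symm_apply_apply, P.Ev_single, P.wt_zero, evx_zero, one_mul, sub_eq_zero] at hr
    exact shop_ne hχ _ hr.symm
  obtain ⟨L, hL, hLL⟩ := Ideal.exists_le_maximal L₀ hL₀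
  have hsimple : IsSimpleModule A (A ⧸ L) := isSimpleModule_iff_isCoatom.2 (Ideal.isMaximal_def.1 hL)
  have hnt : Nontrivial (A ⧸ L) := IsSimpleModule.nontrivial A _
  refine ⟨A ⧸ L, inferInstance, inferInstance, hsimple, ?_⟩
  have hmem : ∀ a, W.Psi.symm a ∈ K → a ∈ L := fun a ha => hLL ⟨0, by simpa using ha⟩
  have hle : K ≤ W.annV (A ⧸ L) := by
    intro v hv x
    obtain ⟨x, rfl⟩ := Submodule.Quotient.mk_surjective _ x
    rw [← Submodule.Quotient.mk_smul, Submodule.Quotient.mk_eq_zero]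
    apply hmem
    rw [smul_eq_mul]
    apply W.map_stable_right K (hstab _)
    rwa [← W.Psi_apply, W.Psi.symm_apply_apply]
  have hcv : c • (Submodule.Quotient.mk 1 : A ⧸ L) ≠ 0 := by
    intro h
    rw [← Submodule.Quotient.mk_smul, Submodule.Quotient.mk_eq_zero, smul_eq_mul, mul_one] at h
    have h2 : c - algebraMap ℂ A (χ 0) ∈ L := hLL ⟨1, by simp⟩
    have h3 : algebraMap ℂ A (χ 0) ∈ L := by simpa using sub_mem h h2
    have h4 := L.mul_mem_left (algebraMap ℂ A (χ 0)⁻¹) h3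
    rw [← map_mul, inv_mul_cancel₀ (hχ 0), map_one] at h4
    exact hL.ne_top ((Ideal.eq_top_iff_one L).2 h4)
  have H : W.MPat (A ⧸ L) T := by
    have hbad : ∀ m, T.bad m → ∀ v : A ⧸ L, W.psi (Finsupp.single m 1) • v = 0 := by
      intro m hm
      exact hle (P.Ev_NN V (T.single_mem_NN hm 1))
    have hz : ∀ k ≤ n, ¬ T.zN k → ∀ v : A ⧸ L, W.z k • v = 0 := by
      intro k hk h v
      have : P.opZ φ k (Finsupp.single 0 1) ∈ W.annV (A ⧸ L) := by
        apply hle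
        rw [hK, LinearMap.mem_ker, P.opZ_single]
        exact P.Ev_NN V (T.single_mem_NN (T.bad_zM hk h 0) _)
      have := this v
      rwa [W.psi_opZ k hk, W.psi_zero, mul_one] at this
    refine ⟨hbad, fun k hk => ?_, fun i ε h1 h2 ha => ?_⟩
    · rcases W.z_dichotomy (M := A ⧸ L) (T.zN_le k hk) with h | h
      · exfalso
        rcases T.mc_z hk with rfl | ⟨j, rfl, hj⟩
        · rw [W.z_zero] at h
          obtain ⟨v, hv⟩ := exists_ne (0 : A ⧸ L)
          exact hv (by simpa using h v)
        · obtain ⟨r, hr⟩ := W.psi_factor_z hj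
          apply hcv
          rw [hc, hr, mul_smul, h]
      · exact h
    · rcases W.l_dichotomy (M := A ⧸ L) i ε (hz _ (by omega) h1) (hz _ (by omega) h2) with h | h
      · exfalso
        obtain ⟨r, hr⟩ := W.psi_factor_l (T.mc_l h1 h2 ha)
        apply hcv
        rw [hc, hr, mul_smul, h]
      · exact h
  exact le_antisymm (H.ann_le V hsep hsq hle) hle

end WAlg

/-! ### Endomorphisms of simple modules -/

open Polynomial in
/-- An endomorphism of a nonzero complex vector space of countable dimension has nonempty spectrum:
otherwise the vectors `(D - a)⁻¹ v` would be linearly independent. -/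
lemma spectrum_nonempty_of_countable {M : Type} [AddCommGroup M] [Module ℂ M] [Nontrivial M]
    (hM : Module.rank ℂ M ≤ Cardinal.aleph0) (D : Module.End ℂ M) : (spectrum ℂ D).Nonempty := by
  classical
  by_contra hD
  rw [Set.not_nonempty_iff_eq_empty] at hD
  obtain ⟨v, hv⟩ := exists_ne (0 : M)
  have hun : ∀ q : ℂ[X], q ≠ 0 → IsUnit (aeval D q) := by
    intro q hq
    by_cases hdeg : 0 < q.degree
    · have := spectrum.map_polynomial_aeval_of_degree_pos D q hdeg
      rw [hD, Set.image_empty] at this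
      exact spectrum.zero_notMem_iff ℂ |>.1 (by rw [this]; simp)
    · rw [Polynomial.eq_C_of_degree_le_zero (not_lt.1 hdeg)] at hq ⊢
      rw [aeval_C]
      exact (IsUnit.mk0 _ (by simpa using hq)).map _
  have hinj : ∀ q : ℂ[X], q ≠ 0 → aeval D q v ≠ 0 := by
    intro q hq h
    exact hv (((Module.End.isUnit_iff _).1 (hun q hq)).1 (by rw [h, map_zero]))
  have hsurj : ∀ a : ℂ, ∃ w, aeval D (X - C a) w = v :=
    fun a => ((Module.End.isUnit_iff _).1 (hun _ (X_sub_C_ne_zero a))).2 v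
  choose w hw using hsurj
  have hli : LinearIndependent ℂ w := by
    rw [linearIndependent_iff']
    intro s g hg i hi
    let q : ℂ[X] := ∑ j ∈ s, C (g j) * ∏ k ∈ s.erase j, (X - C k)
    have hq : aeval D q v = 0 := by
      have h1 : aeval D (∏ k ∈ s, (X - C k)) (∑ j ∈ s, g j • w j) = 0 := by rw [hg, map_zero]
      rw [← h1, map_sum, map_sum, LinearMap.sum_apply]
      refine Finset.sum_congr rfl fun j hj => ?_
      rw [← Finset.prod_erase_mul _ _ hj, map_mul, map_mul, map_smul, Module.End.mul_apply,
        Module.End.mul_apply, hw, aeval_C]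
      rfl
    have hq0 : q = 0 := by by_contra h; exact hinj q h hq
    have h2 : q.eval i = g i * ∏ k ∈ s.erase i, (i - k) := by
      simp only [q, eval_finset_sum, eval_mul, eval_C, eval_prod, eval_sub, eval_X]
      rw [Finset.sum_eq_single i]
      · intro j hj hji
        rw [Finset.prod_eq_zero (i := i), mul_zero]
        · exact Finset.mem_erase.2 ⟨hji.symm, hi⟩
        · simp
      · exact fun h => absurd hi h
    rw [hq0, eval_zero] at h2
    rcases mul_eq_zero.1 h2.symm with h | h
    · exact h
    · obtain ⟨k, hk, hk'⟩ := Finset.prod_eq_zero_iff.1 h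
      exact absurd (sub_eq_zero.1 hk').symm (Finset.mem_erase.1 hk).1
  have := hli.cardinal_le_rank.trans hM
  rw [Cardinal.mk_complex] at this
  exact absurd this (not_le.2 Cardinal.aleph0_lt_continuum)

namespace WAlg

variable {n : ℕ} {E : Type} [AddCommGroup E] {P : WPar n E} {φ : E → ℂ} {A : Type} [Ring A]
  [Algebra ℂ A] (W : WAlg P φ A) {M : Type} [AddCommGroup M] [Module A M] [IsSimpleModule A M]

include W in
lemma schur (f : M →ₗ[A] M) : ∃ c : ℂ, ∀ m, f m = algebraMap ℂ A c • m := by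
  letI : Module ℂ M := Module.compHom M (algebraMap ℂ A)
  have hsm : ∀ (c : ℂ) (m : M), c • m = algebraMap ℂ A c • m := fun _ _ => rfl
  have hnt : Nontrivial M := IsSimpleModule.nontrivial A M
  obtain ⟨v, hv⟩ := exists_ne (0 : M)
  let g : VV n →ₗ[ℂ] M :=
    { toFun := fun x => W.psi x • v
      map_add' := fun x y => by rw [map_add, add_smul]
      map_smul' := fun c x => by
        rw [map_smul, Algebra.smul_def, mul_smul]; rfl }
  have hg : Function.Surjective g := by
    intro m
    obtain ⟨a, rfl⟩ := IsSimpleModule.toSpanSingleton_surjective A hv m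
    exact ⟨W.Psi.symm a, by
      show W.psi _ • v = _
      rw [← W.Psi_apply, W.Psi.apply_symm_apply]; rfl⟩
  have hrank : Module.rank ℂ M ≤ Cardinal.aleph0 := by
    refine (LinearMap.rank_le_of_surjective g hg).trans ?_
    rw [rank_finsupp_self']
    exact Cardinal.mk_le_aleph0
  let D : Module.End ℂ M :=
    { toFun := f
      map_add' := map_add f
      map_smul' := fun c m => by rw [hsm, map_smul]; rfl }
  obtain ⟨c, hc⟩ := spectrum_nonempty_of_countable hrank D
  refine ⟨c, fun m => ?_⟩
  let f' : M →ₗ[A] M :=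
    { toFun := fun m => algebraMap ℂ A c • m - f m
      map_add' := fun x y => by rw [smul_add, map_add]; abel
      map_smul' := fun a x => by
        rw [map_smul, ← mul_smul, Algebra.commutes, mul_smul, RingHom.id_apply, smul_sub] }
  rcases f'.bijective_or_eq_zero with h | h
  · exfalso
    rw [spectrum.mem_iff] at hc
    apply hc
    rw [Module.End.isUnit_iff]
    exact h
  · have := LinearMap.congr_fun h m
    exact (sub_eq_zero.1 this).symm

end WAlg

/-! ### The vanishing pattern of a simple module -/

namespace WAlg

variable {n : ℕ} {E : Type} [AddCommGroup E] {P : WPar n E} {φ : E → ℂ} {A : Type} [Ring A]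
  [Algebra ℂ A] (W : WAlg P φ A) (M : Type) [AddCommGroup M] [Module A M] [IsSimpleModule A M]

include W in
/-- The pattern formed by the `z_k` and the letters acting by a nonzero map on a simple module. -/
lemma exists_MPat : ∃ T : Pat n, W.MPat M T := by
  have hnt : Nontrivial M := IsSimpleModule.nontrivial A M
  let zN : ℕ → Prop := fun k => k ≤ n ∧ ¬ ∀ m : M, W.z k • m = 0
  let act : Fin n → ℤˣ → Prop := fun i ε => zN i.val ∨ zN (i.val + 1) ∨ ¬ ∀ m : M, W.l i ε • m = 0
  have hz : ∀ k, k ≤ n → ¬ zN k → ∀ m : M, W.z k • m = 0 := fun k hk h => by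
    by_contra h'; exact h ⟨hk, h'⟩
  have hb : ∀ i ε, ¬ zN i.val → ¬ zN (i.val + 1) → act i ε →
      Function.Bijective (fun v : M => W.l i ε • v) := by
    intro i ε h1 h2 ha
    rcases W.l_dichotomy (M := M) i ε (hz _ (by omega) h1) (hz _ (by omega) h2) with h | h
    · exfalso; rcases ha with h' | h' | h'
      exacts [h1 h', h2 h', h' h]
    · exact h
  refine ⟨⟨zN, act, ⟨Nat.zero_le _, ?_⟩, fun k h => h.1, fun i ε h => Or.inl h,
    fun i ε h => Or.inr (Or.inl h), ?_⟩, ⟨?_, ?_, hb⟩⟩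
  · intro h
    obtain ⟨v, hv⟩ := exists_ne (0 : M)
    apply hv
    have := h v
    rwa [W.z_zero, one_smul] at this
  · intro i ε h1 h2 ha hb'
    have := (hb i ε h1 h2 ha).comp (hb i (-ε) h1 h2 hb')
    obtain ⟨v, hv⟩ := exists_ne (0 : M)
    apply hv
    apply this.1
    show W.l i ε • W.l i (-ε) • v = W.l i ε • W.l i (-ε) • (0 : M)
    rw [smul_zero, smul_zero, ← mul_smul, W.opp, sub_smul, hz _ (by omega) h1, Algebra.smul_def,
      mul_smul, hz _ (by omega) h2, smul_zero, sub_zero]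
  · rintro m (⟨j, h, h'⟩ | ⟨i, ε, h, h'⟩) v
    · obtain ⟨r, hr⟩ := W.psi_factor_z h
      rw [hr, mul_smul]; exact hz _ (by omega) h' _
    · obtain ⟨r, hr⟩ := W.psi_factor_l h
      rw [hr, mul_smul]
      by_contra h2
      exact h' (Or.inr (Or.inr fun h3 => h2 (h3 _)))
  · intro k hk
    rcases W.z_dichotomy (M := M) hk.1 with h | h
    · exact absurd h hk.2
    · exact h

end WAlg

/-! ### The weight-homogeneous part of the annihilator -/

section

open scoped Classical

namespace WPar

variable {n : ℕ} {E : Type} [AddCommGroup E] (P : WPar n E) (T : Pat n)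

/-- The span of the normalized monomials of weight `κ`. -/
def homog (κ : KK n E) : Submodule ℂ (VV n) := Finsupp.supported ℂ ℂ {m | P.wt T m = κ}

/-- The largest weight-graded subspace of `Q`. -/
noncomputable def grd (Q : Submodule ℂ (VV n)) : Submodule ℂ (VV n) :=
  ⨆ κ, Q ⊓ P.homog T κ

variable {T}

lemma homog_le_iff {κ : KK n E} {Q : Submodule ℂ (VV n)} :
    P.homog T κ ≤ Q ↔ ∀ m, P.wt T m = κ → Finsupp.single m 1 ∈ Q := by
  rw [homog, Finsupp.supported_eq_span_single, Submodule.span_le]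
  constructor
  · intro h m hm; exact h ⟨m, hm, rfl⟩
  · rintro h _ ⟨m, hm, rfl⟩; exact h m hm

lemma single_mem_homog (m : Mon n) (c : ℂ) : Finsupp.single m c ∈ P.homog T (P.wt T m) :=
  Finsupp.single_mem_supported ℂ c rfl

lemma grd_le (Q : Submodule ℂ (VV n)) : P.grd T Q ≤ Q := iSup_le fun _ => inf_le_left

lemma mem_grd {Q : Submodule ℂ (VV n)} {κ : KK n E} {v : VV n} (h : v ∈ Q) (hv : v ∈ P.homog T κ) :
    v ∈ P.grd T Q := Submodule.mem_iSup_of_mem κ ⟨h, hv⟩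

lemma NN_le_grd {Q : Submodule ℂ (VV n)} (hN : T.NN ≤ Q) : T.NN ≤ P.grd T Q := by
  rw [Pat.NN, Finsupp.supported_eq_span_single, Submodule.span_le]
  rintro _ ⟨m, hm, rfl⟩
  exact P.mem_grd (hN (T.single_mem_NN hm 1)) (P.single_mem_homog m 1)

/-- A subspace stable under left and right multiplication by letters has a graded part stable
under the letters of the commutative algebra. -/
lemma grd_opL {φ : E → ℂ} (hφ : IsChar φ) (hsep : SepPair φ (fun x => φ (-x)))
    (hsq : ∀ i (s : ℤ), s ≠ 0 → s • P.sq i ≠ 0) {Q : Submodule ℂ (VV n)} (hN : T.NN ≤ Q)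
    (h1 : ∀ i ε, ∀ v ∈ Q, P.opL φ i ε v ∈ Q)
    (h2 : ∀ i ε, ∀ v ∈ Q, P.opL (fun x => φ (-x)) i ε v ∈ Q) (i : Fin n) (ε : ℤˣ) :
    ∀ v ∈ P.grd T Q, P.opL (fun _ => 1) i ε v ∈ P.grd T Q := by
  suffices h : P.grd T Q ≤ (P.grd T Q).comap (P.opL (fun _ => 1) i ε) from h
  refine iSup_le fun κ => ?_
  rintro v ⟨hvQ, hv⟩
  show P.opL (fun _ => 1) i ε v ∈ P.grd T Q
  by_cases hg : ¬ T.gen i ∨ 0 ≤ (ε : ℤ) * κ.2.2 i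
  · have hex : ∀ m, ∃ (t : ℂ) (m' : Mon n), P.wt T m = κ →
        (∀ φ : E → ℂ, P.opL φ i ε (Finsupp.single m 1)
          - φ (κ.2.1 i ε) • Finsupp.single m' t ∈ T.NN) ∧ (t = 0 ∨ P.wt T m' = κ + P.shL T i ε) := by
      intro m
      by_cases hm : P.wt T m = κ
      · have hg' : ¬ T.gen i ∨ 0 ≤ (ε : ℤ) * m.2 i := by
          by_cases hh : T.gen i
          · right; rw [← P.wt_gen_s hh m, hm]; exact hg.resolve_left (not_not.2 hh)
          · exact Or.inl hh
        obtain ⟨t, m', a, b, -⟩ := P.opL_mono i ε m hg'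
        rw [hm] at a b
        exact ⟨t, m', fun _ => ⟨a, b.imp id And.right⟩⟩
      · exact ⟨0, 0, fun h => absurd h hm⟩
    choose t m' hh using hex
    let F : VV n →ₗ[ℂ] VV n := Finsupp.linearCombination ℂ (fun m => Finsupp.single (m' m) (t m))
    have hF : ∀ ψ : E → ℂ, P.opL ψ i ε v - ψ (κ.2.1 i ε) • F v ∈ T.NN := by
      intro ψ
      suffices h : P.homog T κ ≤ T.NN.comap (P.opL ψ i ε - ψ (κ.2.1 i ε) • F) from h hv
      rw [homog_le_iff]
      intro m hm
      simpa [F] using (hh m hm).1 ψ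
    have hFh : F v ∈ P.homog T (κ + P.shL T i ε) := by
      suffices h : P.homog T κ ≤ (P.homog T (κ + P.shL T i ε)).comap F from h hv
      rw [homog_le_iff]
      intro m hm
      rw [Submodule.mem_comap]
      simp only [F, Finsupp.linearCombination_single, one_smul]
      rcases (hh m hm).2 with h | h
      · rw [h, Finsupp.single_zero]; exact zero_mem _
      · rw [← h]; exact P.single_mem_homog _ _
    have hFQ : F v ∈ Q := by
      have := sub_mem (h1 i ε v hvQ) (hN (hF φ))
      rw [sub_sub_cancel] at this
      exact (Submodule.smul_mem_iff _ (hφ.ne_zero _)).1 this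
    have := add_mem (P.NN_le_grd hN (hF fun _ => 1)) (P.mem_grd hFQ hFh)
    simpa using this
  · push Not at hg
    obtain ⟨hgen, hd⟩ := hg
    let F : VV n →ₗ[ℂ] VV n :=
      Finsupp.linearCombination ℂ (fun m => Finsupp.single (m + lM i ε + zM n (i + 1)) 1)
    let G : VV n →ₗ[ℂ] VV n :=
      Finsupp.linearCombination ℂ (fun m => Finsupp.single (m + lM i ε + zM n i) 1)
    set a := κ.2.1 i ε + κ.2.2 i • P.sq i with ha
    set b := κ.2.1 i ε with hb
    have hneg : ∀ m, P.wt T m = κ → (ε : ℤ) * m.2 i < 0 := fun m hm => by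
      rw [← P.wt_gen_s hgen m, hm]; exact hd
    have hFG : ∀ ψ : E → ℂ, P.opL ψ i ε v = ψ a • F v - ψ b • G v := by
      intro ψ
      rw [← sub_eq_zero]
      suffices h : P.homog T κ ≤ LinearMap.ker (P.opL ψ i ε - (ψ a • F - ψ b • G)) from h hv
      rw [homog_le_iff]
      intro m hm
      rw [LinearMap.mem_ker]
      simp only [LinearMap.sub_apply, LinearMap.smul_apply, F, G, Finsupp.linearCombination_single,
        one_smul, P.opL_down ψ (hneg m hm), ha, hb, ← hm, P.wt_gen hgen, P.wt_gen_s hgen]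
      simp
    have hFh : F v ∈ P.homog T (κ + P.shL T i ε + P.shX T i) := by
      suffices h : P.homog T κ ≤ (P.homog T (κ + P.shL T i ε + P.shX T i)).comap F from h hv
      rw [homog_le_iff]
      intro m hm
      rw [Submodule.mem_comap]
      simp only [F, Finsupp.linearCombination_single, one_smul]
      rw [← hm, ← (P.wt_gen_down hgen (hneg m hm)).1]; exact P.single_mem_homog _ _
    have hGh : G v ∈ P.homog T (κ + P.shL T i ε) := by
      suffices h : P.homog T κ ≤ (P.homog T (κ + P.shL T i ε)).comap G from h hv
      rw [homog_le_iff]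
      intro m hm
      rw [Submodule.mem_comap]
      simp only [G, Finsupp.linearCombination_single, one_smul]
      rw [← hm, ← (P.wt_gen_down hgen (hneg m hm)).2]; exact P.single_mem_homog _ _
    have hab : a ≠ b := by
      intro h
      refine hsq i (κ.2.2 i) ?_ ?_
      · intro h0; rw [h0] at hd; simp at hd
      · simpa [ha] using h
    have e1 := h1 i ε v hvQ
    have e2 := h2 i ε v hvQ
    rw [hFG] at e1 e2
    have hdet : φ a * φ (-b) - φ (-a) * φ b ≠ 0 := sub_ne_zero.2 (hsep a b hab)
    have hFQ : F v ∈ Q := by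
      have := sub_mem (Q.smul_mem (φ (-b)) e1) (Q.smul_mem (φ b) e2)
      refine (Submodule.smul_mem_iff _ hdet).1 ?_
      convert this using 1
      module
    have hGQ : G v ∈ Q := by
      have := sub_mem (Q.smul_mem (φ (-a)) e1) (Q.smul_mem (φ a) e2)
      refine (Submodule.smul_mem_iff _ hdet).1 ?_
      convert this using 1
      module
    rw [hFG, one_smul, one_smul]
    exact sub_mem (P.mem_grd hFQ hFh) (P.mem_grd hGQ hGh)

end WPar

end

/-! ### The point attached to a simple module -/

lemma Val.unique {n : ℕ} {T T' : Pat n} {zv : ℕ → ℂ} {wv : Fin n → ℤˣ → ℂ} (H : Val T zv wv)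
    (H' : Val T' zv wv) : T = T' := by
  have hz : ∀ k, T.zN k ↔ T'.zN k := by
    intro k
    by_cases hk : k ≤ n
    · rw [H.z_iff k hk, H'.z_iff k hk]
    · exact ⟨fun h => absurd (T.zN_le k h) hk, fun h => absurd (T'.zN_le k h) hk⟩
  have ha : ∀ i ε, T.act i ε ↔ T'.act i ε := by
    intro i ε
    by_cases h1 : T.zN i.val
    · exact ⟨fun _ => T'.act_left i ε ((hz _).1 h1), fun _ => T.act_left i ε h1⟩
    by_cases h2 : T.zN (i.val + 1)
    · exact ⟨fun _ => T'.act_right i ε ((hz _).1 h2), fun _ => T.act_right i ε h2⟩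
    rw [H.act_iff i ε h1 h2, H'.act_iff i ε (by rwa [← hz]) (by rwa [← hz])]
  cases T; cases T'
  simp only [Pat.mk.injEq]
  exact ⟨funext fun k => propext (hz k), funext fun i => funext fun ε => propext (ha i ε)⟩

lemma pw_nsmul (w : ℤˣ → ℂ) (k : ℕ) (s : ℤ) : pw w (k • s) = pw w s ^ k := by
  have h : ∀ t : ℤ, (k • t).toNat = t.toNat * k := by
    intro t
    rw [nsmul_eq_mul]
    rcases le_total 0 t with ht | ht
    · obtain ⟨a, rfl⟩ := Int.eq_ofNat_of_zero_le ht
      rw [← Nat.cast_mul, Int.toNat_natCast, Int.toNat_natCast, mul_comm]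
    · rw [Int.toNat_of_nonpos ht, zero_mul, Int.toNat_of_nonpos]
      exact mul_nonpos_of_nonneg_of_nonpos (by positivity) ht
  unfold pw
  rw [← smul_neg, h, h, pow_mul, pow_mul, mul_pow]

lemma evx_nsmul {n : ℕ} (zv : ℕ → ℂ) (w : Fin n → ℤˣ → ℂ) (k : ℕ) (m : Mon n) :
    evx zv w (k • m) = evx zv w m ^ k := by
  unfold evx
  simp only [Prod.smul_fst, Prod.smul_snd, Pi.smul_apply, pw_nsmul, mul_pow, Finset.prod_pow,
    smul_eq_mul, ← Finset.prod_pow]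
  congr 1
  refine Finset.prod_congr rfl fun j _ => ?_
  rw [mul_comm, pow_mul]

/-- The `k`-th power of a normalized monomial of the commutative algebra. -/
lemma psi_nsmul {n : ℕ} {E : Type} [AddCommGroup E] (P : WPar n E) (k : ℕ) (m : Mon n) :
    (AAlg P).psi (Finsupp.single (k • m) 1) = (AAlg P).psi (Finsupp.single m 1) ^ k := by
  refine MvPolynomial.funext fun p => ?_
  have h := aeval_psi p P
  simp only [MvPolynomial.aeval_eq_eval] at h
  rw [map_pow, h, h, evx_nsmul]

/-- An ideal of the commutative algebra which contains the monomials vanishing on the stratum `T`,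
and no power of the product of the normal units of the stratum, vanishes at a point of the
stratum. -/
lemma exists_pt {n : ℕ} {E : Type} [AddCommGroup E] (P : WPar n E) {T : Pat n}
    {I : Submodule ℂ (VV n)} (hI : ∀ i ε, ∀ v ∈ I, P.opL (fun _ => 1) i ε v ∈ I) (hN : T.NN ≤ I)
    (hmc : ∀ k : ℕ, Finsupp.single (k • T.mc) 1 ∉ I) :
    ∃ p : Fin n ⊕ Fin n → ℂ, Val T (ptz p) (ptw p) ∧
      ∀ v ∈ I, MvPolynomial.aeval p ((AAlg P).psi v) = 0 := by
  let J : Ideal (MvPolynomial (Fin n ⊕ Fin n) ℂ) :=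
    { carrier := {a | (AAlg P).Psi.symm a ∈ I}
      add_mem' := by
        intro a b ha hb
        simp only [Set.mem_setOf_eq, map_add] at *
        exact add_mem ha hb
      zero_mem' := by simp
      smul_mem' := fun x a ha => (AAlg P).map_stable _ hI x a ha }
  have hJ : ∀ v, (AAlg P).psi v ∈ J ↔ v ∈ I := by
    intro v
    show (AAlg P).Psi.symm _ ∈ I ↔ _
    rw [← (AAlg P).Psi_apply, LinearEquiv.symm_apply_apply]
  have hrad : (AAlg P).psi (Finsupp.single T.mc 1) ∉ J.radical := by
    rintro ⟨k, hk⟩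
    rw [← psi_nsmul, hJ] at hk
    exact hmc k hk
  rw [← MvPolynomial.vanishingIdeal_zeroLocus_eq_radical (K := ℂ),
    MvPolynomial.mem_vanishingIdeal_iff] at hrad
  push Not at hrad
  obtain ⟨p, hp, hne⟩ := hrad
  rw [MvPolynomial.mem_zeroLocus_iff] at hp
  rw [aeval_psi] at hne
  have hv : ∀ v ∈ I, MvPolynomial.aeval p ((AAlg P).psi v) = 0 := fun v hv => hp _ ((hJ v).2 hv)
  have hbad : ∀ m, T.bad m → evx (ptz p) (ptw p) m = 0 := fun m hm => by
    rw [← aeval_psi p P]; exact hv _ (hN (T.single_mem_NN hm 1))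
  refine ⟨p, ⟨ptz_zero p, fun k hk => ⟨fun h => ?_, fun h => ?_⟩, pt_rel p,
    fun i ε h1 h2 => ⟨fun h => ?_, fun h => ?_⟩⟩, hv⟩
  · rcases T.mc_z h with rfl | ⟨j, rfl, hj⟩
    · rw [ptz_zero]; exact one_ne_zero
    · exact fun h0 => hne (evx_eq_zero_z hj h0)
  · by_contra h'
    have := hbad _ (T.bad_zM hk h' 0)
    rw [evx_zM (ptz_zero p) hk, evx_zero, mul_one] at this
    exact h this
  · exact fun h0 => hne (evx_eq_zero_l (T.mc_l h1 h2 h) h0)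
  · by_contra h'
    have := hbad (0 + lM i ε) (Or.inr ⟨i, ε, by simp [WPar.lM_snd_self, WPar.coe_mul_self], h'⟩)
    rw [evx_up (by simp), evx_zero, mul_one] at this
    exact h this

namespace WAlg

variable {n : ℕ} {E : Type} [AddCommGroup E] {P : WPar n E} {φ : E → ℂ} {A : Type} [Ring A]
  [Algebra ℂ A] (W : WAlg P φ A) (M : Type) [AddCommGroup M] [Module A M] [IsSimpleModule A M]

variable {M} in
/-- On a simple module, two monomials of the same weight in normal units are proportional. -/
lemma exists_theta {T : Pat n} (H : W.MPat M T) {m m' : Mon n} (hm : ¬ T.bad m)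
    (hm' : ¬ T.bad m') (hg : ∀ i, T.gen i → m.2 i = 0) (hg' : ∀ i, T.gen i → m'.2 i = 0)
    (hwt : P.wt T m = P.wt T m') :
    ∃ θ : ℂ, Finsupp.single m 1 - θ • Finsupp.single m' 1 ∈ W.annV M := by
  have hNN : ∀ v ∈ T.NN, ∀ w : M, W.psi v • w = 0 := by
    intro v hv
    suffices h : T.NN ≤ W.annV M from h hv
    rw [Pat.NN, Finsupp.supported_eq_span_single, Submodule.span_le]
    rintro _ ⟨m, hm, rfl⟩
    exact H.bad m hm
  have hX := H.psi_bij hm hg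
  have hX' := H.psi_bij hm' hg'
  -- monomials in normal units commute with each letter up to a scalar depending on the weight
  have comm : ∀ m, (∀ i, T.gen i → m.2 i = 0) → ∀ i ε (v : M),
      W.psi (Finsupp.single m 1) • W.l i ε • v = algebraMap ℂ A (φ (-((P.wt T m).2.1 i ε)) *
        φ (-((P.wt T m).2.1 i ε))) • W.l i ε • W.psi (Finsupp.single m 1) • v := by
    intro m hg i ε v
    have hgi : ¬ T.gen i ∨ 0 ≤ (ε : ℤ) * m.2 i := by
      by_cases h : T.gen i
      · right; rw [hg i h, mul_zero]
      · exact Or.inl h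
    obtain ⟨t, m1, h1, -, -⟩ := P.opL_mono i ε m hgi
    have e1 := hNN _ (h1 φ) v
    have e2 := hNN _ (h1 fun x => φ (-x)) v
    rw [map_sub, W.psi_opL, map_smul, sub_smul, sub_eq_zero, mul_smul, Algebra.smul_def, mul_smul]
      at e1
    rw [map_sub, W.psi_opL_right, map_smul, sub_smul, sub_eq_zero, mul_smul, Algebra.smul_def,
      mul_smul] at e2
    have e3 : ∀ (c d : ℂ) (w : M), algebraMap ℂ A c • algebraMap ℂ A d • w
        = algebraMap ℂ A (c * d) • w := fun c d w => by rw [map_mul, mul_smul]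
    rw [e1, e2, e3, mul_assoc, W.hφ.neg_mul, mul_one]
  choose D hD using fun v => hX'.2 (W.psi (Finsupp.single m 1) • v)
  simp only at hD
  have hcomm : ∀ (x : A) (c : ℂ) (v : M), x • algebraMap ℂ A c • v = algebraMap ℂ A c • x • v := by
    intro x c m; rw [← mul_smul, ← mul_smul, Algebra.commutes]
  have hlin : ∀ (a : A) (v : M), D (a • v) = a • D v := by
    intro r
    have hr : r ∈ Algebra.adjoin ℂ (Set.range fun x : Fin n × ℤˣ => W.l x.1 x.2) := by
      rw [W.gen]; trivial
    induction hr using Algebra.adjoin_induction with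
    | mem x hx =>
      obtain ⟨⟨i, ε⟩, rfl⟩ := hx
      intro v
      apply hX'.1
      simp only
      rw [hD, comm m hg, comm m' hg', hD, hwt]
    | algebraMap c =>
      intro v
      apply hX'.1
      simp only
      rw [hD, hcomm, hcomm, hD]
    | add x y _ _ h1 h2 =>
      intro v
      apply hX'.1
      simp only
      rw [add_smul, add_smul, hD, smul_add, smul_add, ← h1, ← h2, hD, hD]
    | mul x y _ _ h1 h2 => intro v; rw [mul_smul, h1, h2, mul_smul]
  obtain ⟨θ, hθ⟩ := W.schur
    ({ toFun := D
       map_add' := fun x y => hX'.1 (by simp only; rw [hD, smul_add, smul_add, hD, hD])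
       map_smul' := hlin } : M →ₗ[A] M)
  refine ⟨θ, fun v => ?_⟩
  have h1 : D v = algebraMap ℂ A θ • v := hθ v
  rw [map_sub, map_smul, sub_smul, sub_eq_zero, ← hD, h1, hcomm, Algebra.smul_def, mul_smul]

open scoped Classical in
/-- The annihilator of a simple module is the ideal attached to a point. -/
theorem exists_ann_eq (hsep : SepPair φ (fun x => φ (-x)))
    (hsq : ∀ i (s : ℤ), s ≠ 0 → s • P.sq i ≠ 0) :
    ∃ p : Fin n ⊕ Fin n → ℂ, W.annV M = PP p P := by
  have hnt : Nontrivial M := IsSimpleModule.nontrivial A M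
  obtain ⟨T, H⟩ := W.exists_MPat M
  have hNN : T.NN ≤ W.annV M := by
    rw [Pat.NN, Finsupp.supported_eq_span_single, Submodule.span_le]
    rintro _ ⟨m, hm, rfl⟩
    exact H.bad m hm
  obtain ⟨p, V, hp⟩ := exists_pt P (T := T) (I := P.grd T (W.annV M))
    (P.grd_opL W.hφ hsep hsq hNN (W.annV_opL M) (W.annV_opL_right M)) (P.NN_le_grd hNN)
    (fun k hk => H.not_mem (T.mc_good k) (T.mc_gen k) (P.grd_le _ hk))
  refine ⟨p, ?_⟩
  have hT := V.unique (ptVal p)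
  unfold PP
  rw [← hT]
  set ev := evx (ptz p) (cvx T (ptw p)) with hev
  -- two monomials of the same weight are proportional on `M`, with the ratio given by `p`
  have key : ∀ m m', P.wt T m = P.wt T m' →
      ev m' • Finsupp.single m 1 - ev m • Finsupp.single m' 1 ∈ W.annV M := by
    intro m
    generalize hN : msize m = N
    induction N using Nat.strong_induction_on generalizing m with
    | _ N ih =>
    intro m' hwt
    by_cases hm : T.bad m
    · rw [hev, V.ev_bad hm, zero_smul, sub_zero]
      exact Submodule.smul_mem _ _ (H.bad m hm)
    by_cases hm' : T.bad m'
    · rw [hev, V.ev_bad hm', zero_smul, zero_sub]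
      exact neg_mem (Submodule.smul_mem _ _ (H.bad m' hm'))
    have hss : ∀ i, T.gen i → m'.2 i = m.2 i := fun i hi => by
      rw [← P.wt_gen_s hi m, ← P.wt_gen_s hi m', hwt]
    by_cases hg : ∀ i, T.gen i → m.2 i = 0
    · have hg' : ∀ i, T.gen i → m'.2 i = 0 := fun i hi => (hss i hi).trans (hg i hi)
      obtain ⟨θ, hθ⟩ := W.exists_theta H hm hm' hg hg' hwt
      have h1 := hp _ (P.mem_grd (κ := P.wt T m) hθ (sub_mem (P.single_mem_homog m 1)
        (Submodule.smul_mem _ _ (by rw [hwt]; exact P.single_mem_homog m' 1))))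
      rw [map_sub, map_sub, map_smul, map_smul, aeval_psi, aeval_psi, evx_of_gen T _ _ hg,
        evx_of_gen T _ _ hg', sub_eq_zero, smul_eq_mul] at h1
      have := (W.annV M).smul_mem (ev m') hθ
      convert this using 1
      rw [hev, h1, smul_sub, smul_smul, mul_comm]
    · push Not at hg
      obtain ⟨i, hi, hne⟩ := hg
      obtain ⟨ε, hε⟩ : ∃ ε : ℤˣ, 0 < (ε : ℤ) * m.2 i := by
        rcases lt_or_gt_of_ne hne with h | h
        · exact ⟨-1, by simpa using h⟩
        · exact ⟨1, by simpa using h⟩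
      have hstrip : ∀ m : Mon n, 0 < (ε : ℤ) * m.2 i → ∃ m1, m = m1 + lM i ε ∧
          0 ≤ (ε : ℤ) * m1.2 i ∧ msize m1 < msize m := by
        intro m h
        have hsnd : (m - lM i ε).2 i = m.2 i - ε := by
          rw [Prod.snd_sub, Pi.sub_apply, WPar.lM_snd_self]
        have hge : 0 ≤ (ε : ℤ) * (m - lM i ε).2 i := by
          rw [hsnd, mul_sub, WPar.coe_mul_self]; omega
        refine ⟨m - lM i ε, Prod.ext (by simp [lM]) (by simp [lM]), hge, ?_⟩
        have e1 : (m - lM i ε).1 = m.1 := by simp [lM]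
        unfold msize
        rw [e1]
        refine Nat.add_lt_add_left (Finset.sum_lt_sum (fun j _ => ?_) ⟨i, Finset.mem_univ i, ?_⟩) _
        · by_cases hj : j = i
          · subst hj
            rw [hsnd]; rw [hsnd] at hge
            rcases Int.units_eq_one_or ε with rfl | rfl <;> simp at h hge ⊢ <;> omega
          · rw [Prod.snd_sub, Pi.sub_apply, WPar.lM_snd_ne hj, sub_zero]
        · rw [hsnd]; rw [hsnd] at hge
          rcases Int.units_eq_one_or ε with rfl | rfl <;> simp at h hge ⊢ <;> omega
      obtain ⟨m1, rfl, h1, h1s⟩ := hstrip m hε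
      obtain ⟨m1', rfl, h1', -⟩ := hstrip m' (by rwa [hss i hi])
      rw [P.wt_up h1, P.wt_up h1'] at hwt
      replace hwt := add_right_cancel hwt
      have hev1 : ∀ m, 0 ≤ (ε : ℤ) * m.2 i → ev (m + lM i ε) = ev m := by
        intro m h; rw [hev, evx_up h]; simp [cvx, hi]
      have hb : P.bet i ε m1 = P.bet i ε m1' := by
        rw [← P.wt_gen hi, ← P.wt_gen hi, hwt]
      have := W.annV_opL M i ε _ (ih _ (by omega) m1 rfl m1' hwt)
      rw [map_sub, map_smul, map_smul, P.opL_up φ h1, P.opL_up φ h1', ← hb] at this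
      rw [hev1 _ h1, hev1 _ h1']
      refine (Submodule.smul_mem_iff _ (W.hφ.ne_zero (P.bet i ε m1))).1 ?_
      convert this using 1
      simp only [smul_sub, Finsupp.smul_single, smul_eq_mul]
      congr 2 <;> ring
  have hle : LinearMap.ker (P.Ev T (ptz p) (ptw p)) ≤ W.annV M := by
    let G : (KK n E →₀ ℂ) →ₗ[ℂ] (VV n ⧸ W.annV M) := Finsupp.linearCombination ℂ (fun κ =>
      if h : ∃ m, P.wt T m = κ ∧ ¬ T.bad m then
        (ev h.choose)⁻¹ • (W.annV M).mkQ (Finsupp.single h.choose 1) else 0)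
    have hG : G ∘ₗ P.Ev T (ptz p) (ptw p) = (W.annV M).mkQ := by
      refine WPar.vext fun m => ?_
      simp only [LinearMap.comp_apply, P.Ev_single, G, Finsupp.linearCombination_single, one_mul]
      by_cases hm : T.bad m
      · rw [V.ev_bad hm, zero_smul]
        symm
        rw [Submodule.mkQ_apply, Submodule.Quotient.mk_eq_zero]
        exact H.bad m hm
      · have h : ∃ m0, P.wt T m0 = P.wt T m ∧ ¬ T.bad m0 := ⟨m, rfl, hm⟩
        rw [dif_pos h]
        have hk := key _ _ h.choose_spec.1
        have hne : ev h.choose ≠ 0 := V.ev_good h.choose_spec.2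
        rw [← Submodule.Quotient.mk_eq_zero, ← Submodule.mkQ_apply, map_sub, map_smul, map_smul,
          sub_eq_zero] at hk
        rw [smul_smul, mul_comm, ← smul_smul]
        show (ev h.choose)⁻¹ • ev m • _ = _
        rw [hk, smul_smul, inv_mul_cancel₀ hne, one_smul]
    intro v hv
    rw [← Submodule.Quotient.mk_eq_zero, ← Submodule.mkQ_apply, ← hG, LinearMap.comp_apply,
      LinearMap.mem_ker.1 hv, map_zero]
  exact le_antisymm (H.ann_le V hsep hsq hle) hle

end WAlg

/-! ### The homeomorphism -/

/-- A primitive ideal is prime. -/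
lemma IsPrimitiveTS.isPrimeTS {R : Type} [Ring R] {Q : TwoSidedIdeal R} (h : IsPrimitiveTS Q) :
    IsPrimeTS Q := by
  obtain ⟨M, _, _, hM, hQ⟩ := h
  have hnt : Nontrivial M := IsSimpleModule.nontrivial R M
  refine ⟨?_, fun I J hIJ => ?_⟩
  · rintro rfl
    obtain ⟨v, hv⟩ := exists_ne (0 : M)
    apply hv
    have := (hQ 1).1 trivial v
    rwa [one_smul] at this
  · by_contra hc
    push Not at hc
    obtain ⟨hI, hJ⟩ := hc
    apply hI
    intro a ha
    rw [hQ]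
    by_contra hne
    push Not at hne
    apply hJ
    intro b hb
    rw [hQ]
    by_contra hbne
    push Not at hbne
    obtain ⟨m, hm⟩ := hne
    obtain ⟨v, hv⟩ := hbne
    obtain ⟨r, hr⟩ := IsSimpleModule.toSpanSingleton_surjective R hv m
    apply hm
    rw [← hr, LinearMap.toSpanSingleton_apply, ← mul_smul, ← mul_smul, mul_assoc]
    exact (hQ _).1 (hIJ a ha (r * b) (J.mul_mem_left r b hb)) v

section

variable {n : ℕ} {E : Type} [AddCommGroup E] {P : WPar n E} {φ : E → ℂ} {A : Type} [Ring A]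
  [Algebra ℂ A] (W : WAlg P φ A)

lemma WAlg.exists_pt_of_prim (hsep : SepPair φ (fun x => φ (-x)))
    (hsq : ∀ i (s : ℤ), s ≠ 0 → s • P.sq i ≠ 0) (Q : PrimTS A) :
    ∃ p : Fin n ⊕ Fin n → ℂ, ∀ a, a ∈ Q.1 ↔ W.Psi.symm a ∈ PP p P := by
  obtain ⟨M, _, _, hM, hQ⟩ := Q.2.2
  obtain ⟨p, hp⟩ := W.exists_ann_eq M hsep hsq
  refine ⟨p, fun a => ?_⟩
  rw [hQ, ← hp, W.mem_annV, ← W.Psi_apply, W.Psi.apply_symm_apply]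

lemma WAlg.exists_prim_of_pt [IsAddTorsionFree E] (hsep : SepPair φ (fun x => φ (-x)))
    (hsq : ∀ i (s : ℤ), s ≠ 0 → s • P.sq i ≠ 0) (p : Fin n ⊕ Fin n → ℂ) :
    ∃ Q : PrimTS A, ∀ a, a ∈ Q.1 ↔ W.Psi.symm a ∈ PP p P := by
  obtain ⟨M, _, _, hM, hann⟩ := W.exists_simple (ptVal p) hsep hsq
  let Q : TwoSidedIdeal A := TwoSidedIdeal.mk' {a | W.Psi.symm a ∈ PP p P} (by simp)
    (fun {x y} hx hy => by
      simp only [Set.mem_setOf_eq, map_add] at *; exact add_mem hx hy)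
    (fun {x} hx => by simp only [Set.mem_setOf_eq, map_neg] at *; exact neg_mem hx)
    (fun {x y} hy => W.map_stable _ (PP_opL p P _) x y hy)
    (fun {x y} hx => W.map_stable_right _ (PP_opL p P _) y x hx)
  have hQ : ∀ a, a ∈ Q ↔ W.Psi.symm a ∈ PP p P := fun a => by
    rw [TwoSidedIdeal.mem_mk']; rfl
  have hprim : IsPrimitiveTS Q := by
    refine ⟨M, _, _, hM, fun a => ?_⟩
    rw [hQ, PP, ← hann, W.mem_annV, ← W.Psi_apply, W.Psi.apply_symm_apply]
  exact ⟨⟨Q, hprim.isPrimeTS, hprim⟩, hQ⟩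

lemma IsPoissonCore.unique {R : Type} [CommRing R] {br : R → R → R} {P P' M : Ideal R}
    (h : IsPoissonCore br P M) (h' : IsPoissonCore br P' M) : P = P' :=
  le_antisymm (h'.2.2 P h.1 h.2.1) (h.2.2 P' h'.1 h'.2.1)

lemma corePt_inj {n : ℕ} {br : MvPolynomial (Fin n ⊕ Fin n) ℂ → MvPolynomial (Fin n ⊕ Fin n) ℂ →
      MvPolynomial (Fin n ⊕ Fin n) ℂ} {Q Q' : Ideal (MvPolynomial (Fin n ⊕ Fin n) ℂ)}
    (hQ : PoissonPrimitivePt n br Q) (h : corePt n br Q = corePt n br Q') : Q = Q' := by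
  obtain ⟨p, hp⟩ := hQ
  have h2 : p ∈ corePt n br Q' := h ▸ hp
  exact hp.unique h2

include W in
/-- Matching primitive ideals and symplectic cores attached to the same point is a
homeomorphism. -/
theorem WAlg.exists_homeo [IsAddTorsionFree E] (hsep : SepPair φ (fun x => φ (-x)))
    (hsq : ∀ i (s : ℤ), s ≠ 0 → s • P.sq i ≠ 0)
    {B : PoissonBr (MvPolynomial (Fin n ⊕ Fin n) ℂ)} {ψ : E → ℂ} (hB : IsWBr P B ψ)
    (hinj : Function.Injective ψ) :
    ∃ f : PrimTS A → CoreSpace n B.br, @IsHomeomorph _ _ (primTop A) (coreTop n B.br) f := by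
  have hcore : ∀ p, IsPoissonCore B.br (PA p P) (ptIdeal n p) := fun p => PA_core p P hB hinj hsq
  have hprim : ∀ p, PoissonPrimitivePt n B.br (PA p P) := fun p => ⟨p, hcore p⟩
  choose pt hpt using W.exists_pt_of_prim hsep hsq
  have hPA : ∀ p p', PA p P = PA p' P ↔ PP p P = PP p' P := by
    intro p p'
    constructor
    · intro h
      ext v
      have : (AAlg P).Psi v ∈ PA p P ↔ (AAlg P).Psi v ∈ PA p' P := by rw [h]
      simpa only [mem_PA, LinearEquiv.symm_apply_apply] using this
    · intro h
      ext a
      rw [mem_PA, mem_PA, h]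
  let f : PrimTS A → CoreSpace n B.br := fun Q => ⟨corePt n B.br (PA (pt Q) P), _, hprim _, rfl⟩
  have hbij : Function.Bijective f := by
    constructor
    · intro Q Q' h
      have h1 : PA (pt Q) P = PA (pt Q') P := corePt_inj (hprim _) (congrArg Subtype.val h)
      rw [hPA] at h1
      apply Subtype.ext
      ext a
      rw [hpt, hpt, h1]
    · rintro ⟨S, Q, ⟨p, hp⟩, rfl⟩
      obtain ⟨x, hx⟩ := W.exists_prim_of_pt hsep hsq p
      refine ⟨x, Subtype.ext ?_⟩
      have h1 : PP (pt x) P = PP p P := by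
        ext v
        have := (hpt x (W.Psi v)).symm.trans (hx (W.Psi v))
        simpa only [LinearEquiv.symm_apply_apply] using this
      show corePt n B.br (PA (pt x) P) = corePt n B.br Q
      rw [(hPA _ _).2 h1, (hcore p).unique hp]
  -- the closed set of cores attached to an ideal of the polynomial ring
  have hpre : ∀ I : Ideal (MvPolynomial (Fin n ⊕ Fin n) ℂ),
      f ⁻¹' {s : CoreSpace n B.br | ¬ ∃ Q : Ideal (MvPolynomial (Fin n ⊕ Fin n) ℂ),
          I ≤ Q ∧ PoissonPrimitivePt n B.br Q ∧ s.1 = corePt n B.br Q}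
        = {x | ¬ I ≤ PA (pt x) P} := by
    intro I
    ext x
    simp only [Set.mem_preimage, Set.mem_setOf_eq, not_iff_not]
    constructor
    · rintro ⟨Q, h1, h2, h3⟩
      rw [corePt_inj (hprim (pt x)) h3]; exact h1
    · intro h
      exact ⟨_, h, hprim _, rfl⟩
  have htop : primTop A = TopologicalSpace.induced f (coreTop n B.br) := by
    unfold primTop coreTop
    rw [induced_generateFrom_eq]
    congr 1
    ext U
    simp only [Set.mem_setOf_eq, Set.mem_image]
    constructor
    · rintro ⟨I, rfl⟩
      refine ⟨_, ⟨sInf {J | ∃ y : PrimTS A, I ≤ y.1 ∧ J = PA (pt y) P}, rfl⟩, ?_⟩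
      rw [hpre]
      ext x
      simp only [Set.mem_setOf_eq, not_iff_not]
      constructor
      · intro h a ha
        rw [hpt]
        have : (AAlg P).Psi (W.Psi.symm a) ∈ PA (pt x) P := by
          apply h
          rw [Submodule.mem_sInf]
          rintro J ⟨y, hy, rfl⟩
          rw [mem_PA, LinearEquiv.symm_apply_apply, ← hpt]
          exact hy ha
        rwa [mem_PA, LinearEquiv.symm_apply_apply] at this
      · intro h
        exact sInf_le ⟨x, h, rfl⟩
    · rintro ⟨_, ⟨I, rfl⟩, rfl⟩
      rw [hpre]
      refine ⟨sInf {J | ∃ y : PrimTS A, I ≤ PA (pt y) P ∧ J = y.1}, ?_⟩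
      ext x
      simp only [Set.mem_setOf_eq, not_iff_not]
      constructor
      · intro h
        exact sInf_le ⟨x, h, rfl⟩
      · intro h a ha
        rw [mem_PA]
        have : W.Psi ((AAlg P).Psi.symm a) ∈ x.1 := by
          apply h
          rw [TwoSidedIdeal.mem_sInf]
          rintro J ⟨y, hy, rfl⟩
          rw [hpt, LinearEquiv.symm_apply_apply, ← mem_PA]
          exact hy ha
        rwa [hpt, LinearEquiv.symm_apply_apply] at this
  refine ⟨f, ?_⟩
  letI := primTop A
  letI := coreTop n B.br
  rw [isHomeomorph_iff_isEmbedding_surjective]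
  exact ⟨⟨⟨htop⟩, hbij.1⟩, hbij.2⟩

end

/-- `prim R_n^{Q,Λ}` is homeomorphic to the space of symplectic cores
in `ℂ^{2n}` with the Poisson structure of the multi-parameter Poisson Weyl algebra. -/
theorem stmt_19 (n r : ℕ)
    -- Q and Λ with G(Q,Λ) torsion free, a basis η of G(Q,Λ), and ℚ-linearly
    -- independent complex numbers μ; `c̃'(1) = ∑ s_k μ_k` for `c = ∏ η_k ^ s_k`
    (q : Fin n → ℂ) (hq0 : ∀ i, q i ≠ 0) (hq1 : ∀ i, q i ≠ 1)
    (lam : Fin n → Fin n → ℂ) (hlam : ∀ i j, lam i j * lam j i = 1)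
    (hlamii : ∀ i, lam i i = 1)
    (η : Fin r → ℂ) (hη0 : ∀ k, η k ≠ 0)
    (hfree : ∀ a : Fin r → ℤ, ∏ k, η k ^ a k = 1 → a = 0)
    (μ : Fin r → ℂ) (hμ : LinearIndependent ℚ μ)
    (sq : Fin n → Fin r → ℤ) (hsq : ∀ i, q i = ∏ k, η k ^ sq i k)
    (slam : Fin n → Fin n → Fin r → ℤ) (hslam : ∀ i j, lam i j = ∏ k, η k ^ slam i j k)
    (dq : Fin n → ℂ) (hdq : ∀ i, dq i = ∑ k, (sq i k : ℂ) * μ k)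
    (dlam : Fin n → Fin n → ℂ) (hdlam : ∀ i j, dlam i j = ∑ k, (slam i j k : ℂ) * μ k)
    -- the Poisson bracket of the multi-parameter Poisson Weyl algebra `A₁`
    (B : PoissonBr (MvPolynomial (Fin n ⊕ Fin n) ℂ))
    (hBsmul : ∀ (c : ℂ) (a b : MvPolynomial (Fin n ⊕ Fin n) ℂ), B.br (c • a) b = c • B.br a b)
    (hByy : ∀ i j : Fin n, i < j → B.br (yP n j) (yP n i) = dlam j i • (yP n i * yP n j))
    (hByx : ∀ i j : Fin n, i < j → B.br (yP n j) (xP n i) = dlam i j • (xP n i * yP n j))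
    (hBxy : ∀ i j : Fin n, i < j →
      B.br (xP n j) (yP n i) = (dq i + dlam i j) • (yP n i * xP n j))
    (hBxx : ∀ i j : Fin n, i < j →
      B.br (xP n j) (xP n i) = (-(dq i + dlam i j)) • (xP n i * xP n j))
    (hBxyi : ∀ i : Fin n, B.br (xP n i) (yP n i) = dq i • zP n ((i : ℕ) + 1))
    :
    ∃ φ : PrimTS (RingQuot (RRel n q lam)) → CoreSpace n B.br,
      @IsHomeomorph _ _ (primTop (RingQuot (RRel n q lam))) (coreTop n B.br) φ := by
  -- characters of the exponent group `ℤ^r`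
  have hηz : ∀ k (a : ℤ), η k ^ a ≠ 0 := fun k a => zpow_ne_zero _ (hη0 k)
  have hinjη : ∀ a b : Fin r → ℤ, ∏ k, η k ^ a k = ∏ k, η k ^ b k → a = b := by
    intro a b hab
    have hb : ∏ k, η k ^ b k ≠ 0 := Finset.prod_ne_zero_iff.2 fun k _ => hηz k _
    have := hfree (a - b) (by
      simp only [Pi.sub_apply, zpow_sub₀ (hη0 _), Finset.prod_div_distrib]
      rw [hab, div_self hb])
    exact sub_eq_zero.1 this
  let P : WPar n (Fin r → ℤ) :=
    { sq := sq
      slam := slam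
      anti := fun i j => by
        rw [eq_neg_iff_add_eq_zero]
        apply hfree
        simp only [Pi.add_apply, zpow_add₀ (hη0 _), Finset.prod_mul_distrib]
        rw [← hslam, ← hslam, mul_comm, hlam]
      diag := fun i => hfree _ (by rw [← hslam, hlamii]) }
  have hsq0 : ∀ i (s : ℤ), s ≠ 0 → s • P.sq i ≠ 0 := by
    intro i s hs h0
    have h1 : sq i = 0 := (smul_eq_zero.1 h0).resolve_left hs
    apply hq1 i
    rw [hsq, h1]; simp
  choose h hh using fun k => IsAlgClosed.exists_pow_nat_eq (η k) (n := 2) (by norm_num)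
  have hh0 : ∀ k, h k ≠ 0 := fun k h0 => hη0 k (by rw [← hh, h0]; simp)
  let χ : (Fin r → ℤ) → ℂ := fun x => ∏ k, h k ^ x k
  have hχ : WPar.IsChar χ :=
    ⟨by simp [χ], fun x y => by
      simp only [χ, Pi.add_apply, zpow_add₀ (hh0 _), Finset.prod_mul_distrib]⟩
  have hχ2 : ∀ x, χ (2 • x) = ∏ k, η k ^ x k := by
    intro x
    refine Finset.prod_congr rfl fun k _ => ?_
    rw [← hh, Pi.smul_apply, ← zpow_natCast, ← zpow_mul]; simp
  have hsep : SepPair χ (fun x => χ (-x)) := by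
    intro C C' hne he
    apply hne
    apply hinjη
    simp only at he
    rw [← hχ2, ← hχ2, two_nsmul, two_nsmul, hχ.add, hχ.add]
    rw [hχ.neg, hχ.neg] at he
    have h1 := hχ.ne_zero C
    have h2 := hχ.ne_zero C'
    field_simp at he
    linear_combination he
  let ψ : (Fin r → ℤ) → ℂ := fun x => ∑ k, (x k : ℂ) * μ k
  have hψadd : ∀ x y, ψ (x + y) = ψ x + ψ y := fun x y => by
    simp only [ψ, Pi.add_apply, Int.cast_add, add_mul, Finset.sum_add_distrib]
  have hψneg : ∀ x, ψ (-x) = - ψ x := fun x => by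
    simp [ψ]
  have hψ : Function.Injective ψ := by
    intro x y hxy
    have h0 : ∑ k, ((x k - y k : ℤ) : ℚ) • μ k = 0 := by
      rw [← sub_eq_zero] at hxy
      rw [← hxy]
      simp only [ψ, ← Finset.sum_sub_distrib, ← sub_mul, Rat.smul_def]
      push_cast
      rfl
    funext k
    have := Fintype.linearIndependent_iff.1 hμ _ h0 k
    exact sub_eq_zero.1 (by exact_mod_cast this)
  have hψq : ∀ i, ψ (sq i) = dq i := fun i => (hdq i).symm
  have hψl : ∀ i j, ψ (slam i j) = dlam i j := fun i j => (hdlam i j).symm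
  have hself : ∀ a, B.br a a = 0 := fun a => self_eq_neg.1 (B.skew a a)
  have h11 : (1 : ℤˣ) ≠ -1 := by decide
  -- brackets of letters in decreasing order of the indices
  have hlt : ∀ {i j : Fin n} (_ : i < j) (ε δ : ℤˣ), B.br (agen j ε) (agen i δ) =
      ψ (P.kap j ε i δ) • (agen j ε * agen i δ) := by
    intro i j hij ε δ
    have hji : slam j i = - slam i j := P.anti i j
    have hPl : P.slam j i = slam j i := rfl
    have hPq : P.sq i = sq i := rfl
    rw [mul_comm (agen j ε)]
    rcases Int.units_eq_one_or ε with rfl | rfl <;> rcases Int.units_eq_one_or δ with rfl | rfl <;>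
      simp only [agen_one, agen_neg]
    · rw [hByy i j hij, ← hψl]
      simp [WPar.kap, h11, hPl]
    · rw [hByx i j hij, ← hψl]
      simp [WPar.kap, h11, hPl, hji, hij.not_gt]
    · rw [hBxy i j hij, ← hψl, ← hψq, add_comm (ψ _), ← hψadd]
      simp [WPar.kap, h11, hPl, hPq, hji, hij]
    · rw [hBxx i j hij, ← hψl, ← hψq, add_comm (ψ _), ← hψadd, ← hψneg]
      simp [WPar.kap, hPl, hPq, hji, hij, hij.not_gt]
      rw [add_comm (-sq i)]
  have hB : IsWBr P B ψ :=
    { hψ := hψadd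
      smul := hBsmul
      ne := fun {i j} hij ε δ => by
        rcases lt_or_gt_of_ne hij with hlt' | hlt'
        · rw [B.skew, hlt hlt', P.kap_anti, hψneg, neg_smul, neg_neg, mul_comm]
        · exact hlt hlt' ε δ
      same := fun i ε => hself _
      opp := fun i ε => by
        have hPq : P.sq i = sq i := rfl
        rcases Int.units_eq_one_or ε with rfl | rfl
        · rw [B.skew, agen_one, agen_neg, hBxyi, ← hψq, ← neg_smul, ← hψneg]
          simp [hPq]
        · rw [neg_neg, agen_one, agen_neg, hBxyi, ← hψq]
          simp [hPq] }
  exact (RAlg P hχ q lam (fun i => by rw [hχ2]; exact hsq i)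
    (fun i j => by rw [hχ2]; exact hslam i j) hq1).exists_homeo hsep hsq0 hB hψ
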